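/- arXiv:2507.16730 — 3 statements merged into one kernel-verified Lean document; each statement's English description precedes it below -/
import Mathlib

section
/- Fix m ≥ 2 and a hierarchy S of size m, and let H^{(m)}_n denote the number of isomorphism classes of hierarchies of size n containing no subhierarchy isomorphic to S. Let ρ_m be the radius of convergence of the real power series Σ_{n≥1} H^{(m)}_n xⁿ and let ρ₀ be the radius of convergence of Σ_{n≥1} H_n xⁿ, where H_n is the number of isomorphism classes of hierarchies of size n. Then ρ_m > ρ₀. -/
/-- Finite rooted unordered trees, presented with an ordered list of children
(unorderedness is taken care of by the isomorphism relation `RTree.Iso`). -/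
inductive RTree : Type
  | node : List RTree → RTree

/-- The number of leaves (external vertices) of a rooted tree: the *size* of a hierarchy. -/
def RTree.leaves : RTree → ℕ
  | .node [] => 1
  | .node (a :: l) => ((a :: l).attach.map (fun x => RTree.leaves x.1)).sum
decreasing_by
  have := List.sizeOf_lt_of_mem x.2
  simp only [RTree.node.sizeOf_spec]
  omega

/-- A hierarchy: a rooted tree in which no vertex has exactly one child. -/
inductive RTree.IsHierarchy : RTree → Prop
  | node {l : List RTree} : l.length ≠ 1 → (∀ t ∈ l, RTree.IsHierarchy t) →
      RTree.IsHierarchy (.node l)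

/-- `s.SubtreeOf t` : `s` is the subtree of `t` rooted at some vertex of `t`
(that vertex together with all of its descendants). -/
inductive RTree.SubtreeOf : RTree → RTree → Prop
  | refl (t : RTree) : RTree.SubtreeOf t t
  | child {s c : RTree} {l : List RTree} : c ∈ l → RTree.SubtreeOf s c →
      RTree.SubtreeOf s (.node l)

/-- Isomorphism of rooted unordered trees: the children of the two roots can be
matched up bijectively by isomorphisms. -/
inductive RTree.Iso : RTree → RTree → Prop
  | node {l₁ l l₂ : List RTree} (h₁ : List.Forall₂ RTree.Iso l₁ l) (h₂ : l.Perm l₂) :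
      RTree.Iso (.node l₁) (.node l₂)

/-- The number of isomorphism classes of hierarchies of size `n` (OEIS A000669). -/
noncomputable def hierarchyCount (n : ℕ) : ℕ :=
  Nat.card (Quot fun a b : {t : RTree // t.IsHierarchy ∧ t.leaves = n} => RTree.Iso a.1 b.1)

/-- `t` contains no subhierarchy isomorphic to `S`. -/
def RTree.Avoids (t S : RTree) : Prop :=
  ∀ s : RTree, s.SubtreeOf t → ¬ RTree.Iso s S

/-- The number of isomorphism classes of hierarchies of size `n` containing
no subhierarchy isomorphic to `S`. -/
noncomputable def avoidCount (S : RTree) (n : ℕ) : ℕ :=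
  Nat.card (Quot fun a b : {t : RTree // t.IsHierarchy ∧ t.leaves = n ∧ t.Avoids S} =>
    RTree.Iso a.1 b.1)

/-- The radius of convergence of the real power series `∑ₙ aₙ xⁿ`. -/
noncomputable def radiusOf (a : ℕ → ℝ) : ENNReal :=
  (FormalMultilinearSeries.ofScalars ℝ a).radius


namespace HierProof

open RTree

lemma forall₂_imp_mem {α β : Type*} {R Q : α → β → Prop} {l : List α} {l' : List β}
    (h : List.Forall₂ R l l') (hi : ∀ a ∈ l, ∀ b, R a b → Q a b) : List.Forall₂ Q l l' := by
  induction h with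
  | nil => exact .nil
  | cons h1 h2 ih =>
    refine .cons (hi _ (by simp) _ h1) (ih fun a ha => hi a (by simp [ha]))

lemma tree_ind {P : RTree → Prop} (h : ∀ l, (∀ t ∈ l, P t) → P (.node l)) (t : RTree) : P t := by
  have key : ∀ n, ∀ t : RTree, sizeOf t < n → P t := by
    intro n
    induction n with
    | zero => intro t ht; omega
    | succ n ih =>
      rintro ⟨l⟩ ht
      refine h l fun t hm => ih t ?_
      have := List.sizeOf_lt_of_mem hm
      simp only [RTree.node.sizeOf_spec] at ht
      omega
  exact key _ t (Nat.lt_succ_self _)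

lemma iso_refl (t : RTree) : Iso t t := by
  induction t using tree_ind with
  | h l ih =>
    refine .node (l := l) ?_ (List.Perm.refl _)
    rw [List.forall₂_same]
    exact ih

lemma iso_symm {t s : RTree} (h : Iso t s) : Iso s t := by
  induction t using tree_ind generalizing s with
  | h l₁ ih =>
    cases h with
    | @node _ l l₂ h₁ h₂ =>
      have h3 : List.Forall₂ Iso l l₁ := by
        apply List.Forall₂.flip
        exact forall₂_imp_mem h₁ fun a ha b hb => ih a ha hb
      obtain ⟨u, hu1, hu2⟩ := List.perm_comp_forall₂ h₂.symm h3
      exact .node hu1 hu2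

lemma iso_trans {t s r : RTree} (h : Iso t s) (h' : Iso s r) : Iso t r := by
  induction t using tree_ind generalizing s r with
  | h l₁ ih =>
    cases h with
    | @node _ l l₂ h₁ h₂ =>
      cases h' with
      | @node _ l' l₃ h₃ h₄ =>
        obtain ⟨u, hu1, hu2⟩ := List.perm_comp_forall₂ h₂ h₃
        refine .node (l := u) ?_ (hu2.trans h₄)
        clear h₂ h₃ h₄ hu2
        induction h₁ generalizing u with
        | nil => cases hu1; exact .nil
        | cons ha _ ih2 =>
          cases hu1 with
          | cons hb hc =>
            exact .cons (ih _ (by simp) ha hb) (ih2 (fun a ha => ih a (by simp [ha])) _ hc)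

instance isoSetoid : Setoid RTree := ⟨Iso, iso_refl, iso_symm, iso_trans⟩

/-- Isomorphism classes of rooted trees. -/
def U : Type := Quotient isoSetoid

def mk (t : RTree) : U := Quotient.mk _ t

noncomputable instance : DecidableEq U := Classical.decEq U

noncomputable def outU (u : U) : RTree := Quotient.out (s := isoSetoid) u

lemma mk_outU : mk ∘ outU = id := by
  funext u; exact Quotient.out_eq (s := isoSetoid) u

lemma mk_eq {s t : RTree} : mk s = mk t ↔ Iso s t := Quotient.eq (r := isoSetoid)

lemma mk_surj (u : U) : ∃ t, mk t = u := Quotient.exists_rep u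

lemma iso_node_iff {l l' : List RTree} :
    Iso (.node l) (.node l') ↔ (l.map mk).Perm (l'.map mk) := by
  constructor
  · intro h
    cases h with
    | @node _ k _ h₁ h₂ =>
      have : l.map mk = k.map mk := by
        clear h₂
        induction h₁ with
        | nil => rfl
        | cons ha _ ih => simp [ih, mk_eq.2 ha]
      rw [this]
      exact h₂.map _
  · intro h
    have h2 : (l.map mk).Perm (l'.map mk) := h
    have h3 : List.Forall₂ (fun (u : U) (t : RTree) => u = mk t) (l'.map mk) l' := by
      rw [List.forall₂_map_left_iff, List.forall₂_same]; simp
    obtain ⟨k, hk1, hk2⟩ := List.perm_comp_forall₂ h h3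
    refine .node (l := k) ?_ hk2
    rw [List.forall₂_map_left_iff] at hk1
    exact hk1.imp fun a b h => mk_eq.1 h

noncomputable def nodeU (M : Multiset U) : U := mk (.node (M.toList.map outU))

lemma nodeU_map (l : List RTree) : nodeU ((l.map mk : List U) : Multiset U) = mk (.node l) := by
  unfold nodeU
  rw [mk_eq, iso_node_iff, List.map_map]
  rw [mk_outU, List.map_id, ← Multiset.coe_eq_coe, Multiset.coe_toList]

lemma exists_list (M : Multiset U) : ∃ l : List RTree, M = ((l.map mk : List U) : Multiset U) := by
  refine ⟨M.toList.map outU, ?_⟩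
  rw [List.map_map]
  rw [mk_outU, List.map_id, Multiset.coe_toList]

lemma nodeU_inj : Function.Injective nodeU := by
  intro M M' h
  obtain ⟨l, rfl⟩ := exists_list M
  obtain ⟨l', rfl⟩ := exists_list M'
  rw [nodeU_map, nodeU_map, mk_eq, iso_node_iff] at h
  exact Multiset.coe_eq_coe.2 h

lemma nodeU_surj (u : U) : ∃ M, nodeU M = u := by
  obtain ⟨⟨l⟩, rfl⟩ := mk_surj u
  exact ⟨_, nodeU_map l⟩

lemma leaves_node (l : List RTree) :
    (RTree.node l).leaves = if l = [] then 1 else (l.map leaves).sum := by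
  cases l with
  | nil => simp [leaves]
  | cons a l =>
    rw [leaves]
    rw [if_neg (by simp), List.attach_map_val (l := a :: l) (f := leaves)]

lemma leaves_iso {t s : RTree} (h : Iso t s) : t.leaves = s.leaves := by
  induction t using tree_ind generalizing s with
  | h l₁ ih =>
    cases h with
    | @node _ l l₂ h₁ h₂ =>
      have e : l₁.map leaves = l.map leaves := by
        clear h₂
        induction h₁ with
        | nil => rfl
        | cons ha _ ih2 =>
          simp only [List.map_cons]
          rw [ih _ (by simp) ha, ih2 fun a ha => ih a (by simp [ha])]
      have e1 : l₁ = [] ↔ l = [] := by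
        rw [← List.length_eq_zero_iff, ← List.length_eq_zero_iff, h₁.length_eq]
      have e2 : l = [] ↔ l₂ = [] := by
        rw [← List.length_eq_zero_iff, ← List.length_eq_zero_iff, h₂.length_eq]
      rw [leaves_node, leaves_node, e, (h₂.map leaves).sum_eq]
      simp only [e1, e2]

def sz : U → ℕ := Quotient.lift leaves fun _ _ h => leaves_iso h

lemma sz_mk (t : RTree) : sz (mk t) = t.leaves := rfl

lemma sz_nodeU (M : Multiset U) : sz (nodeU M) = if M = 0 then 1 else (M.map sz).sum := by
  obtain ⟨l, rfl⟩ := exists_list M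
  rw [nodeU_map, sz_mk, leaves_node]
  simp only [Multiset.coe_eq_zero, List.map_eq_nil_iff, Multiset.map_coe, Multiset.sum_coe,
    List.map_map]
  rfl

lemma leaves_pos (t : RTree) : 1 ≤ t.leaves := by
  induction t using tree_ind with
  | h l ih =>
    rw [leaves_node]
    cases l with
    | nil => simp
    | cons a l => have := ih a (by simp); simp; omega

lemma sz_pos (u : U) : 1 ≤ sz u := by
  obtain ⟨t, rfl⟩ := mk_surj u
  exact leaves_pos t

/-- Hierarchies all of whose subtree classes satisfy `E`. -/
inductive G (E : U → Prop) : RTree → Prop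
  | node {l : List RTree} : E (mk (.node l)) → l.length ≠ 1 → (∀ t ∈ l, G E t) → G E (.node l)

lemma G_iso {E : U → Prop} {t s : RTree} (h : Iso t s) (ht : G E t) : G E s := by
  induction ht generalizing s with
  | @node l₁ h1 h2 h3 ih =>
    have hh := mk_eq.2 h
    cases h with
    | @node _ l l₂ h₁ h₂ =>
      refine .node (hh ▸ h1) ?_ ?_
      · rw [← h₂.length_eq, ← h₁.length_eq]; exact h2
      · intro t ht
        have ht' : t ∈ l := h₂.mem_iff.2 ht
        clear h1 h2 h₂ hh ht
        induction h₁ with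
        | nil => simp at ht'
        | cons ha _ ih2 =>
          rcases List.mem_cons.1 ht' with rfl | hm
          · exact ih _ (by simp) ha
          · exact ih2 (fun a ha => h3 a (by simp [ha])) (fun a ha => ih a (by simp [ha])) hm

def GU (E : U → Prop) : U → Prop := Quotient.lift (G E) fun _ _ h =>
  propext ⟨G_iso h, G_iso (iso_symm h)⟩

lemma GU_mk {E : U → Prop} (t : RTree) : GU E (mk t) ↔ G E t := Iff.rfl

lemma GU_nodeU {E : U → Prop} (M : Multiset U) :
    GU E (nodeU M) ↔ E (nodeU M) ∧ M.card ≠ 1 ∧ ∀ u ∈ M, GU E u := by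
  obtain ⟨l, rfl⟩ := exists_list M
  rw [nodeU_map, GU_mk]
  simp only [Multiset.coe_card, List.length_map, Multiset.mem_coe, List.mem_map,
    forall_exists_index, and_imp, forall_apply_eq_imp_iff₂, GU_mk]
  constructor
  · intro h
    cases h with
    | node h1 h2 h3 => exact ⟨h1, h2, h3⟩
  · rintro ⟨h1, h2, h3⟩
    exact .node h1 h2 h3

lemma G_true (t : RTree) : G (fun _ => True) t ↔ t.IsHierarchy := by
  constructor
  · intro h
    induction h with
    | node h1 h2 h3 ih => exact .node h2 ih
  · intro h
    induction h with
    | node h2 h3 ih => exact .node trivial h2 ih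

lemma G_avoid (S t : RTree) : G (fun u => u ≠ mk S) t ↔ t.IsHierarchy ∧ t.Avoids S := by
  constructor
  · intro h
    induction h with
    | node h1 h2 h3 ih =>
      refine ⟨.node h2 fun t ht => (ih t ht).1, ?_⟩
      intro s hs
      cases hs with
      | refl => intro hi; exact h1 (mk_eq.2 hi)
      | child hc hs => exact (ih _ hc).2 s hs
  · rintro ⟨h, h'⟩
    induction h with
    | node h2 h3 ih =>
      refine .node (fun he => h' _ (.refl _) (mk_eq.1 he)) h2 fun t ht => ih t ht ?_
      intro s hs
      exact h' s (.child ht hs)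

lemma finite_le (n : ℕ) : {u : U | GU (fun _ => True) u ∧ sz u ≤ n}.Finite := by
  induction n with
  | zero =>
    refine Set.Finite.subset Set.finite_empty ?_
    rintro u ⟨_, hu⟩
    have := sz_pos u
    omega
  | succ n ih =>
    classical
    refine Set.Finite.subset ((Set.finite_Iic ((n + 1) • ih.toFinset.val)).image nodeU) ?_
    rintro u ⟨hu, hs⟩
    obtain ⟨M, rfl⟩ := nodeU_surj u
    refine ⟨M, ?_, rfl⟩
    rw [GU_nodeU] at hu
    obtain ⟨-, hc, hm⟩ := hu
    rw [sz_nodeU] at hs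
    rw [Set.mem_Iic, Multiset.le_iff_count]
    intro a
    by_cases ha : a ∈ M
    · have hM : M ≠ 0 := by rintro rfl; simp at ha
      rw [if_neg hM] at hs
      obtain ⟨M', rfl⟩ := Multiset.exists_cons_of_mem ha
      have hcard : ∀ K : Multiset U, K.card ≤ (K.map sz).sum := by
        intro K
        have := Multiset.card_nsmul_le_sum (s := K.map sz) (a := 1)
          (by intro x hx; obtain ⟨u, _, rfl⟩ := Multiset.mem_map.1 hx; exact sz_pos u)
        simpa using this
      have h1 := hcard M'
      simp only [Multiset.card_cons, Multiset.map_cons, Multiset.sum_cons] at hc hs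
      have h2 := sz_pos a
      have h3 : a ∈ ih.toFinset := by
        simp only [Set.Finite.mem_toFinset, Set.mem_ofPred_eq]
        exact ⟨hm a ha, by omega⟩
      rw [Multiset.count_nsmul, Multiset.count_eq_one_of_mem ih.toFinset.nodup h3]
      refine (Multiset.count_le_card _ _).trans ?_
      simp only [Multiset.card_cons]
      omega
    · rw [Multiset.count_eq_zero_of_notMem ha]; exact Nat.zero_le _

lemma GU_mono {E : U → Prop} {u : U} (h : GU E u) : GU (fun _ => True) u := by
  obtain ⟨t, rfl⟩ := mk_surj u
  rw [GU_mk] at *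
  induction h with
  | node h1 h2 h3 ih => exact .node trivial h2 ih

/-- number of classes of size n -/
noncomputable def cnt (E : U → Prop) (n : ℕ) : ℕ := Nat.card {T : {u : U // GU E u} // sz T.1 = n}

instance (E : U → Prop) (n : ℕ) : Finite {T : {u : U // GU E u} // sz T.1 = n} := by
  have := (finite_le n).to_subtype
  refine Finite.of_injective (β := {u : U | GU (fun _ => True) u ∧ sz u ≤ n})
    (fun T => ⟨T.1.1, GU_mono T.1.2, T.2.le⟩) ?_
  intro a b h
  simp only [Subtype.mk.injEq] at h
  exact Subtype.ext (Subtype.ext h)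

lemma card_quot (E : U → Prop) (n : ℕ) (p : RTree → Prop) (hp : ∀ t, p t ↔ (G E t ∧ t.leaves = n)) :
    Nat.card (Quot fun a b : {t : RTree // p t} => RTree.Iso a.1 b.1) = cnt E n := by
  unfold cnt
  refine Nat.card_congr (Equiv.ofBijective (Quot.lift (fun a => ⟨⟨mk a.1, ((hp _).1 a.2).1⟩,
    ((hp _).1 a.2).2⟩) ?_) ⟨?_, ?_⟩)
  · intro a b h
    exact Subtype.ext (Subtype.ext (mk_eq.2 h))
  · rintro ⟨a⟩ ⟨b⟩ h
    apply Quot.sound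
    have h2 := congrArg (fun x => x.1.1) h
    exact mk_eq.1 h2
  · rintro ⟨⟨u, hu⟩, hn⟩
    obtain ⟨t, rfl⟩ := mk_surj u
    exact ⟨Quot.mk _ ⟨t, (hp t).2 ⟨hu, hn⟩⟩, rfl⟩

lemma hierarchyCount_eq (n : ℕ) : hierarchyCount n = cnt (fun _ => True) n :=
  card_quot _ n _ fun t => by rw [G_true]

lemma avoidCount_eq (S : RTree) (n : ℕ) : avoidCount S n = cnt (fun u => u ≠ mk S) n :=
  card_quot _ n _ fun t => by rw [G_avoid]; tauto

lemma cnt_zero (E : U → Prop) : cnt E 0 = 0 := by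
  unfold cnt
  have : IsEmpty {T : {u : U // GU E u} // sz T.1 = 0} :=
    ⟨fun T => by have := sz_pos T.1.1; have := T.2; omega⟩
  exact Nat.card_of_isEmpty

lemma cnt_le (E : U → Prop) (n : ℕ) : cnt E n ≤ cnt (fun _ => True) n := by
  refine Nat.card_le_card_of_injective (fun T => ⟨⟨T.1.1, GU_mono T.1.2⟩, T.2⟩) ?_
  intro a b h
  simp only [Subtype.mk.injEq] at h
  exact Subtype.ext (Subtype.ext h)

lemma cnt_lt (S : RTree) (hS : S.IsHierarchy) :
    cnt (fun u => u ≠ mk S) S.leaves < cnt (fun _ => True) S.leaves := by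
  classical
  let f : {T : {u : U // GU (fun u => u ≠ mk S) u} // sz T.1 = S.leaves} →
    {T : {u : U // GU (fun _ => True) u} // sz T.1 = S.leaves} :=
    fun T => ⟨⟨T.1.1, GU_mono T.1.2⟩, T.2⟩
  have := Fintype.ofFinite {T : {u : U // GU (fun u => u ≠ mk S) u} // sz T.1 = S.leaves}
  have := Fintype.ofFinite {T : {u : U // GU (fun _ => True) u} // sz T.1 = S.leaves}
  unfold cnt
  rw [Nat.card_eq_fintype_card, Nat.card_eq_fintype_card]
  refine Fintype.card_lt_of_injective_of_notMem f ?_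
    (b := ⟨⟨mk S, (G_true S).2 hS⟩, rfl⟩) ?_
  · intro a b h
    simp only [f, Subtype.mk.injEq] at h
    exact Subtype.ext (Subtype.ext h)
  · rintro ⟨T, hT⟩
    have h2 : T.1.1 = mk S := congrArg (fun x => x.1.1) hT
    have h3 := T.1.2
    rw [h2, GU_mk, G_avoid] at h3
    exact h3.2 S (.refl S) (iso_refl S)

lemma cnt_pos {n : ℕ} (hn : 1 ≤ n) : 1 ≤ cnt (fun _ => True) n := by
  have hl : GU (fun _ => True) (nodeU 0) := by rw [GU_nodeU]; simp
  have hl1 : sz (nodeU 0) = 1 := by rw [sz_nodeU]; simp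
  have : ∃ u, GU (fun _ => True) u ∧ sz u = n := by
    rcases hn.eq_or_lt with rfl | h
    · exact ⟨_, hl, hl1⟩
    · refine ⟨nodeU (Multiset.replicate n (nodeU 0)), ?_, ?_⟩
      · rw [GU_nodeU]
        refine ⟨trivial, by simp; omega, ?_⟩
        intro u hu
        rw [Multiset.eq_of_mem_replicate hu]; exact hl
      · rw [sz_nodeU, if_neg]
        · simp [hl1]
        · intro h0
          have := congrArg Multiset.card h0
          simp at this; omega
  obtain ⟨u, hu, hs⟩ := this
  exact Nat.card_pos_iff.2 ⟨⟨⟨⟨u, hu⟩, hs⟩⟩, inferInstance⟩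


open scoped ENNReal

def msz {C : Type} (s : C → ℕ) (M : Multiset C) : ℕ := (M.map s).sum

lemma tsum_lt_one (c : ℕ) : (∑' k : ℕ, if k < c then (1 : ℝ≥0∞) else 0) = c := by
  rw [tsum_eq_sum (s := Finset.range c)]
  · rw [Finset.sum_congr rfl (g := fun _ => (1 : ℝ≥0∞))]
    · simp
    · intro k hk; rw [if_pos (Finset.mem_range.1 hk)]
  · intro k hk; rw [if_neg (by simpa using hk)]

open Classical in
lemma msz_eq {C : Type} (s : C → ℕ) (M : Multiset C) :
    (msz s M : ℝ≥0∞) = ∑' T : C, ∑' k : ℕ, if k < M.count T then (s T : ℝ≥0∞) else 0 := by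
  have : ∀ T : C, (∑' k : ℕ, if k < M.count T then (s T : ℝ≥0∞) else 0)
      = (M.count T : ℝ≥0∞) * s T := by
    intro T
    rw [← tsum_lt_one (M.count T), ← ENNReal.tsum_mul_right]
    congr 1; funext k; split_ifs <;> simp
  simp_rw [this]
  rw [tsum_eq_sum (s := M.toFinset)]
  · unfold msz
    rw [Finset.sum_multiset_map_count]
    push_cast
    simp
  · intro T hT
    rw [Multiset.mem_toFinset] at hT
    simp [hT]

lemma double_count {C : Type} (s : C → ℕ) (φ : ℕ → ℝ≥0∞) :
    ∑' M : Multiset C, (msz s M : ℝ≥0∞) * φ (msz s M) =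
      ∑' T : C, ∑' k : ℕ, ∑' M : Multiset C, (s T : ℝ≥0∞) * φ (msz s M + (k + 1) * s T) := by
  classical
  simp_rw [msz_eq s, ← ENNReal.tsum_mul_right]
  rw [ENNReal.tsum_comm]
  congr 1; funext T
  rw [ENNReal.tsum_comm]
  congr 1; funext k
  have hinj : Function.Injective fun M : Multiset C => M + Multiset.replicate (k + 1) T :=
    fun a b h => by simpa using h
  rw [← hinj.tsum_eq]
  · congr 1; funext M
    rw [if_pos (by simp)]
    congr 2
    simp [msz]
    ring
  · intro M hM
    have hk : k < M.count T := by
      by_contra h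
      simp [h] at hM
    refine ⟨M - Multiset.replicate (k + 1) T, ?_⟩
    simp only
    rw [Multiset.sub_add_cancel]
    rwa [Multiset.le_count_iff_replicate_le.symm]

abbrev Cl (E : U → Prop) : Type := {u : U // GU E u}

abbrev csz (E : U → Prop) : Cl E → ℕ := fun T => sz T.1

lemma tsum_cnt (E : U → Prop) (φ : ℕ → ℝ≥0∞) :
    ∑' T : Cl E, φ (sz T.1) = ∑' n, (cnt E n : ℝ≥0∞) * φ n := by
  rw [← (Equiv.sigmaFiberEquiv (csz E)).tsum_eq, ENNReal.tsum_sigma']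
  congr 1; funext n
  have : ∀ T : {T : Cl E // csz E T = n},
      φ (sz ((Equiv.sigmaFiberEquiv (csz E)) ⟨n, T⟩).1) = φ n := by
    intro T
    have := T.2
    simp only [csz] at this
    simp [Equiv.sigmaFiberEquiv, this]
  simp_rw [this]
  rw [ENNReal.tsum_const]
  congr 1
  have : Finite {T : Cl E // csz E T = n} :=
    inferInstanceAs (Finite {T : {u : U // GU E u} // sz T.1 = n})
  rw [ENat.card_eq_coe_natCard]
  rfl

open Classical in
lemma stepA (E : U → Prop) (φ : ℕ → ℝ≥0∞) :
    ∑' M : Multiset (Cl E), φ (msz (csz E) M) = φ 0 + ∑' T : Cl E, φ (sz T.1) +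
      ∑' M : Multiset (Cl E), if 2 ≤ M.card then φ (msz (csz E) M) else 0 := by
  have h0 : ∑' M : Multiset (Cl E), (if M = 0 then φ (msz (csz E) M) else 0) = φ 0 := by
    rw [tsum_eq_single 0]
    · simp [msz]
    · intro M hM; simp [hM]
  have h1 : ∑' M : Multiset (Cl E), (if M.card = 1 then φ (msz (csz E) M) else 0)
      = ∑' T : Cl E, φ (sz T.1) := by
    have hinj : Function.Injective fun T : Cl E => ({T} : Multiset (Cl E)) :=
      fun a b h => by simpa using h
    rw [← hinj.tsum_eq]
    · congr 1
    · intro M hM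
      have hk : M.card = 1 := by
        by_contra h
        simp [h] at hM
      obtain ⟨a, rfl⟩ := Multiset.card_eq_one.1 hk
      exact ⟨a, rfl⟩
  rw [← h0, ← h1, ← ENNReal.tsum_add, ← ENNReal.tsum_add]
  congr 1; funext M
  by_cases hM : M = 0
  · simp [hM]
  · have : 0 < M.card := Multiset.card_pos.2 hM
    rcases (show M.card = 1 ∨ 2 ≤ M.card by omega) with h | h
    · simp [hM, h]
    · have : M.card ≠ 1 := by omega
      simp [hM, h, this]

def Bset (E : U → Prop) (u : U) : Prop :=
  ∃ M : Multiset U, 2 ≤ M.card ∧ (∀ v ∈ M, GU E v) ∧ nodeU M = u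

open Classical in
lemma stepB (E : U → Prop) (φ : ℕ → ℝ≥0∞) :
    (∑' M : Multiset (Cl E), if 2 ≤ M.card then φ (msz (csz E) M) else 0) =
      ∑' u : U, if Bset E u then φ (sz u) else 0 := by
  have hinj : Function.Injective fun M : Multiset (Cl E) => M.map Subtype.val :=
    Multiset.map_injective Subtype.val_injective
  have hinj2 : Function.Injective fun M : Multiset (Cl E) => nodeU (M.map Subtype.val) :=
    nodeU_inj.comp hinj
  have hB : ∀ M : Multiset (Cl E), Bset E (nodeU (M.map Subtype.val)) ↔ 2 ≤ M.card := by
    intro M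
    constructor
    · rintro ⟨K, hK, -, he⟩
      rw [nodeU_inj he] at hK
      simpa using hK
    · intro h
      refine ⟨_, by simpa using h, ?_, rfl⟩
      intro v hv
      obtain ⟨w, _, rfl⟩ := Multiset.mem_map.1 hv
      exact w.2
  rw [← hinj2.tsum_eq (f := fun u => if Bset E u then φ (sz u) else 0)]
  · congr 1; funext M
    simp only [hB]
    split_ifs with h
    · have hM : M.map Subtype.val ≠ 0 := by
        intro h0
        have := congrArg Multiset.card h0
        simp at this
        simp [this] at h
      rw [sz_nodeU, if_neg hM]
      simp [msz, csz]
    · rfl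
  · intro u hu
    have hb : Bset E u := by
      by_contra h; simp [h] at hu
    obtain ⟨K, -, hK, rfl⟩ := hb
    refine ⟨K.attach.map fun v => ⟨v.1, hK v.1 v.2⟩, ?_⟩
    simp [Multiset.map_map]

lemma sz_leaf : sz (nodeU 0) = 1 := by rw [sz_nodeU]; simp

open Classical in
lemma tsum_cl (E : U → Prop) (φ : ℕ → ℝ≥0∞) :
    ∑' T : Cl E, φ (sz T.1) = ∑' u : U, if GU E u then φ (sz u) else 0 := by
  rw [← Subtype.val_injective.tsum_eq (f := fun u => if GU E u then φ (sz u) else 0)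
    (g := (Subtype.val : Cl E → U))]
  · congr 1; funext T; rw [if_pos T.2]
  · intro u hu
    have hb : GU E u := by
      by_contra h; simp [h] at hu
    exact ⟨⟨u, hb⟩, rfl⟩

lemma Bset_true (u : U) : Bset (fun _ => True) u ↔ GU (fun _ => True) u ∧ u ≠ nodeU 0 := by
  obtain ⟨M, rfl⟩ := nodeU_surj u
  rw [GU_nodeU, nodeU_inj.ne_iff]
  constructor
  · rintro ⟨K, h1, h2, h3⟩
    rw [nodeU_inj h3] at h1 h2
    refine ⟨⟨trivial, by omega, h2⟩, ?_⟩
    rintro rfl; simp at h1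
  · rintro ⟨⟨-, h1, h2⟩, h3⟩
    have : 0 < M.card := Multiset.card_pos.2 h3
    exact ⟨M, by omega, h2, rfl⟩

lemma GU_small {S : RTree} {v : U} (h : GU (fun _ => True) v) (hv : sz v < S.leaves) :
    GU (fun u => u ≠ mk S) v := by
  obtain ⟨t, rfl⟩ := mk_surj v
  rw [GU_mk] at *
  rw [sz_mk] at hv
  induction h with
  | @node l h1 h2 h3 ih =>
    refine .node ?_ h2 ?_
    · intro he
      have := congrArg sz he
      rw [sz_mk, sz_mk] at this
      omega
    · intro t ht
      refine ih t ht (lt_of_le_of_lt ?_ hv)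
      rw [leaves_node, if_neg (by rintro rfl; simp at ht)]
      exact List.single_le_sum (by simp) _ (List.mem_map_of_mem ht)

lemma Bset_avoid {S : RTree} (hS : S.IsHierarchy) (hm : 2 ≤ S.leaves) (u : U) :
    Bset (fun u => u ≠ mk S) u ↔ (GU (fun u => u ≠ mk S) u ∧ u ≠ nodeU 0) ∨ u = mk S := by
  by_cases hu : u = mk S
  · simp only [hu, or_true, iff_true]
    have h1 : GU (fun _ => True) (mk S) := (G_true S).2 hS
    have h2 : mk S ≠ nodeU 0 := by
      intro h
      have := congrArg sz h
      rw [sz_leaf, sz_mk] at this; omega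
    obtain ⟨M, hM, hM2, hM3⟩ := (Bset_true _).2 ⟨h1, h2⟩
    refine ⟨M, hM, fun v hv => GU_small (hM2 v hv) ?_, hM3⟩
    have h3 := congrArg sz hM3
    rw [sz_nodeU, if_neg (by rintro rfl; simp at hM), sz_mk] at h3
    obtain ⟨M', rfl⟩ := Multiset.exists_cons_of_mem hv
    rw [Multiset.card_cons] at hM
    have : 0 < M'.card := by omega
    obtain ⟨w, hw⟩ := Multiset.card_pos_iff_exists_mem.1 this
    obtain ⟨M'', rfl⟩ := Multiset.exists_cons_of_mem hw
    simp only [Multiset.map_cons, Multiset.sum_cons] at h3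
    have := sz_pos w
    omega
  · simp only [hu, or_false]
    obtain ⟨M, rfl⟩ := nodeU_surj u
    rw [GU_nodeU, nodeU_inj.ne_iff]
    constructor
    · rintro ⟨K, h1, h2, h3⟩
      rw [nodeU_inj h3] at h1 h2
      refine ⟨⟨hu, by omega, h2⟩, ?_⟩
      rintro rfl; simp at h1
    · rintro ⟨⟨-, h1, h2⟩, h3⟩
      have : 0 < M.card := Multiset.card_pos.2 h3
      exact ⟨M, by omega, h2, rfl⟩

open Classical in
lemma enum_true (φ : ℕ → ℝ≥0∞) :
    ∑' M : Multiset (Cl fun _ => True), φ (msz (csz _) M) + φ 1 =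
      φ 0 + 2 * ∑' n, (cnt (fun _ => True) n : ℝ≥0∞) * φ n := by
  have key : (∑' u : U, if Bset (fun _ => True) u then φ (sz u) else 0) + φ 1 =
      ∑' T : Cl fun _ => True, φ (sz T.1) := by
    rw [tsum_cl]
    have h1 : φ 1 = ∑' u : U, if u = nodeU 0 then φ (sz u) else 0 := by
      rw [tsum_eq_single (nodeU 0)]
      · rw [if_pos rfl, sz_leaf]
      · intro u hu; rw [if_neg hu]
    rw [h1, ← ENNReal.tsum_add]
    congr 1; funext u
    have hl : GU (fun _ => True) (nodeU 0) := by rw [GU_nodeU]; simp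
    simp only [Bset_true]
    by_cases h : u = nodeU 0
    · subst h; simp [hl]
    · simp [h]
  rw [stepA, stepB, add_assoc, key, tsum_cnt, two_mul, add_assoc]

open Classical in
lemma enum_avoid {S : RTree} (hS : S.IsHierarchy) (hm : 2 ≤ S.leaves) (φ : ℕ → ℝ≥0∞) :
    ∑' M : Multiset (Cl fun u => u ≠ mk S), φ (msz (csz _) M) + φ 1 =
      φ 0 + 2 * ∑' n, (cnt (fun u => u ≠ mk S) n : ℝ≥0∞) * φ n + φ S.leaves := by
  have hSl : mk S ≠ nodeU 0 := by
    intro h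
    have := congrArg sz h
    rw [sz_leaf, sz_mk] at this; omega
  have key : (∑' u : U, if Bset (fun u => u ≠ mk S) u then φ (sz u) else 0) + φ 1 =
      ∑' T : Cl fun u => u ≠ mk S, φ (sz T.1) + φ S.leaves := by
    rw [tsum_cl]
    have h1 : φ 1 = ∑' u : U, if u = nodeU 0 then φ (sz u) else 0 := by
      rw [tsum_eq_single (nodeU 0)]
      · rw [if_pos rfl, sz_leaf]
      · intro u hu; rw [if_neg hu]
    have h2 : φ S.leaves = ∑' u : U, if u = mk S then φ (sz u) else 0 := by
      rw [tsum_eq_single (mk S)]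
      · rw [if_pos rfl, sz_mk]
      · intro u hu; rw [if_neg hu]
    rw [h1, h2, ← ENNReal.tsum_add, ← ENNReal.tsum_add]
    congr 1; funext u
    have hl : GU (fun u => u ≠ mk S) (nodeU 0) := by rw [GU_nodeU]; simp [hSl.symm]
    have hnS : ¬ GU (fun u => u ≠ mk S) (mk S) := by
      rw [GU_mk, G_avoid]
      rintro ⟨-, h⟩
      exact h S (.refl S) (iso_refl S)
    simp only [Bset_avoid hS hm]
    by_cases h : u = nodeU 0
    · subst h; simp [hl, hSl.symm]
    · by_cases h' : u = mk S
      · subst h'; simp [hnS, h]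
      · simp [h, h']
  rw [stepA, stepB, add_assoc, key, tsum_cnt]
  ring


lemma H_bound (x : ℝ≥0∞) (hx : x ≠ 0)
    (hD : ∑' n, (cnt (fun _ => True) n : ℝ≥0∞) * (n * x ^ n) ≠ ∞) :
    1 + 2 * ∑' n, (cnt (fun _ => True) n : ℝ≥0∞) * x ^ n ≤ 2 + x := by
  set D := ∑' n, (cnt (fun _ => True) n : ℝ≥0∞) * (n * x ^ n) with hDdef
  set Z := ∑' M : Multiset (Cl fun _ => True), x ^ (msz (csz _) M) with hZ
  have h1 := enum_true (fun n => x ^ n)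
  have h2 := enum_true (fun n => n * x ^ n)
  have h3 := double_count (csz fun _ => True) (fun n => x ^ n)
  simp only [pow_zero, pow_one, Nat.cast_zero, zero_mul, zero_add, Nat.cast_one, one_mul] at h1 h2
  rw [← hZ] at h1
  rw [← hDdef, h3] at h2
  have h4 : D * Z ≤ ∑' T : Cl fun _ => True, ∑' k : ℕ, ∑' M : Multiset (Cl fun _ => True),
      (csz (fun _ => True) T : ℝ≥0∞) * x ^ (msz (csz _) M + (k + 1) * csz _ T) := by
    rw [hDdef, ← tsum_cnt _ (fun n => n * x ^ n), ← ENNReal.tsum_mul_right]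
    refine ENNReal.tsum_le_tsum fun T => ?_
    refine le_trans ?_ (ENNReal.le_tsum 0)
    rw [hZ, ← ENNReal.tsum_mul_left]
    refine ENNReal.tsum_le_tsum fun M => ?_
    apply le_of_eq
    rw [zero_add, one_mul, pow_add]
    ring
  have h5 : D * Z ≤ D * 2 := by
    calc D * Z ≤ _ := h4
      _ ≤ _ := le_self_add
      _ = _ := h2
      _ = _ := mul_comm _ _
  have hD0 : D ≠ 0 := by
    intro h
    rw [hDdef, ENNReal.tsum_eq_zero] at h
    have := h 1
    have h1 := cnt_pos (le_refl 1)
    simp [hx] at this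
    omega
  have hZ2 : Z ≤ 2 := (ENNReal.mul_le_mul_iff_right hD0 hD).1 h5
  rw [← h1]
  gcongr

lemma A_bound {S : RTree} (hS : S.IsHierarchy) (hm : 2 ≤ S.leaves) (x : ℝ≥0∞) (hx : x ≤ 1)
    (φ : ℕ → ℝ≥0∞) (N : ℕ) (hφ : ∀ n, φ n = if n ≤ N then x ^ n else 0) :
    ∃ Z, Z + φ 1 = φ 0 + 2 * ∑' n, (cnt (fun u => u ≠ mk S) n : ℝ≥0∞) * φ n + φ S.leaves ∧
      2 * ∑' n, (cnt (fun u => u ≠ mk S) n : ℝ≥0∞) * (n * φ n) ≤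
        Z * (∑' n, (cnt (fun u => u ≠ mk S) n : ℝ≥0∞) * (n * φ n) +
          (∑' n, (cnt (fun u => u ≠ mk S) n : ℝ≥0∞) * (n * φ n * x ^ n)) * (1 - x)⁻¹) + φ 1 := by
  set D := ∑' n, (cnt (fun u => u ≠ mk S) n : ℝ≥0∞) * (n * φ n) with hDdef
  set Z := ∑' M : Multiset (Cl fun u => u ≠ mk S), φ (msz (csz _) M) with hZ
  refine ⟨Z, enum_avoid hS hm φ, ?_⟩
  clear_value Z D
  have h2 := enum_avoid hS hm (fun n => n * φ n)
  rw [double_count (csz _) φ] at h2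
  simp only [Nat.cast_zero, zero_mul, zero_add, Nat.cast_one, one_mul] at h2
  rw [← hDdef] at h2
  calc 2 * D ≤ _ := le_self_add
    _ = _ := h2.symm
    _ ≤ _ := ?_
  gcongr
  have hφ2 : ∀ a b k : ℕ, 1 ≤ b → φ (a + (k + 1) * b) ≤ φ b * x ^ (k * b) * φ a := by
    intro a b k hb
    rw [hφ, hφ, hφ]
    by_cases h : a + (k + 1) * b ≤ N
    · have h1 : a ≤ N := by omega
      have h2 : b ≤ N := by nlinarith
      rw [if_pos h, if_pos h1, if_pos h2]
      apply le_of_eq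
      rw [pow_add, add_mul, pow_add, one_mul]; ring
    · rw [if_neg h]; exact zero_le
  have hgeo : ∀ b : ℕ, 1 ≤ b → ∑' k : ℕ, x ^ (k * b) ≤ 1 + x ^ b * (1 - x)⁻¹ := by
    intro b hb
    rw [tsum_eq_zero_add' ENNReal.summable, zero_mul, pow_zero, ← ENNReal.tsum_geometric,
      ← ENNReal.tsum_mul_left]
    gcongr with k
    rw [add_mul, one_mul, pow_add, mul_comm]
    refine mul_le_mul_right (pow_le_pow_right_of_le_one' hx ?_) _
    nlinarith
  have hR : Z * (D + (∑' n, (cnt (fun u => u ≠ mk S) n : ℝ≥0∞) * (n * φ n * x ^ n)) * (1 - x)⁻¹)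
      = ∑' T : Cl fun u => u ≠ mk S, (sz T.1 * φ (sz T.1) * (1 + x ^ (sz T.1) * (1 - x)⁻¹)) * Z := by
    rw [hDdef, ← tsum_cnt _ (fun n => n * φ n), ← tsum_cnt _ (fun n => n * φ n * x ^ n),
      ← ENNReal.tsum_mul_right, ← ENNReal.tsum_add, mul_comm, ← ENNReal.tsum_mul_right]
    congr 1; funext T; ring
  rw [hR]
  refine ENNReal.tsum_le_tsum fun T => ?_
  have hT := sz_pos T.1
  calc ∑' k : ℕ, ∑' M : Multiset (Cl fun u => u ≠ mk S),
        (sz T.1 : ℝ≥0∞) * φ (msz (csz _) M + (k + 1) * sz T.1)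
      ≤ ∑' k : ℕ, ∑' M : Multiset (Cl fun u => u ≠ mk S),
        (sz T.1 : ℝ≥0∞) * (φ (sz T.1) * x ^ (k * sz T.1) * φ (msz (csz _) M)) := by
        gcongr with k M
        exact hφ2 _ _ _ hT
    _ = (sz T.1 : ℝ≥0∞) * φ (sz T.1) * (∑' k : ℕ, x ^ (k * sz T.1)) * Z := by
        rw [← ENNReal.tsum_mul_left, ← ENNReal.tsum_mul_right]
        congr 1; funext k
        rw [hZ, ← ENNReal.tsum_mul_left]
        congr 1; funext M
        ring
    _ ≤ _ := by
        gcongr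
        exact hgeo _ hT

lemma tsum_trunc (c : ℕ → ℕ) (g : ℕ → ℝ) (hg : ∀ n, 0 ≤ g n) (N : ℕ) (ψ : ℕ → ℝ≥0∞)
    (hψ : ∀ n, ψ n = if n ≤ N then ENNReal.ofReal (g n) else 0) :
    ∑' n, (c n : ℝ≥0∞) * ψ n = ENNReal.ofReal (∑ n ∈ Finset.range (N + 1), c n * g n) := by
  rw [tsum_eq_sum (s := Finset.range (N + 1)), ENNReal.ofReal_sum_of_nonneg]
  · refine Finset.sum_congr rfl fun n hn => ?_
    rw [hψ, if_pos (by simp at hn; omega), ENNReal.ofReal_mul (by positivity),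
      ENNReal.ofReal_natCast]
  · intro n _; have := hg n; positivity
  · intro n hn
    rw [hψ, if_neg (by simp at hn; omega), mul_zero]

lemma A_real {S : RTree} (hS : S.IsHierarchy) (hm : 2 ≤ S.leaves) (x : ℝ) (hx0 : 0 ≤ x)
    (hx : x < 1) (N : ℕ) (hN : S.leaves ≤ N) (a : ℕ → ℕ) (ha : a = cnt (fun u => u ≠ mk S)) :
    2 * ∑ n ∈ Finset.range (N + 1), (a n : ℝ) * (n * x ^ n) ≤
      (1 + 2 * (∑ n ∈ Finset.range (N + 1), (a n : ℝ) * x ^ n) - x + x ^ S.leaves) *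
        (∑ n ∈ Finset.range (N + 1), (a n : ℝ) * (n * x ^ n) +
          (∑ n ∈ Finset.range (N + 1), (a n : ℝ) * (n * x ^ n * x ^ n)) * (1 - x)⁻¹) + x := by
  subst ha
  set φ : ℕ → ℝ≥0∞ := fun n => if n ≤ N then (ENNReal.ofReal x) ^ n else 0 with hφ
  obtain ⟨Z, h1, h2⟩ := A_bound hS hm (ENNReal.ofReal x) (by simpa using hx.le) φ N (fun n => rfl)
  rw [tsum_trunc _ (fun n => x ^ n) (fun n => by positivity) N] at h1
  rw [tsum_trunc _ (fun n => n * x ^ n) (fun n => by positivity) N,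
    tsum_trunc _ (fun n => n * x ^ n * x ^ n) (fun n => by positivity) N] at h2
  rotate_left
  · intro n
    simp only [hφ]
    split_ifs
    · rw [ENNReal.ofReal_mul (by positivity), ENNReal.ofReal_mul (by positivity),
        ENNReal.ofReal_pow hx0, ENNReal.ofReal_natCast]
    · simp
  · intro n
    simp only [hφ]
    split_ifs
    · rw [ENNReal.ofReal_mul (by positivity), ENNReal.ofReal_pow hx0, ENNReal.ofReal_natCast]
    · simp
  · intro n
    simp only [hφ, ENNReal.ofReal_pow hx0]
  set F := ∑ n ∈ Finset.range (N + 1), (cnt (fun u => u ≠ mk S) n : ℝ) * x ^ n with hF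
  set D := ∑ n ∈ Finset.range (N + 1), (cnt (fun u => u ≠ mk S) n : ℝ) * (n * x ^ n) with hD
  set D2 := ∑ n ∈ Finset.range (N + 1), (cnt (fun u => u ≠ mk S) n : ℝ) * (n * x ^ n * x ^ n)
    with hD2
  have hF0 : 0 ≤ F := Finset.sum_nonneg fun n _ => by positivity
  have hD0 : 0 ≤ D := Finset.sum_nonneg fun n _ => by positivity
  have hD20 : 0 ≤ D2 := Finset.sum_nonneg fun n _ => by positivity
  have e1 : φ 1 = ENNReal.ofReal x := by simp only [hφ]; rw [if_pos (by omega), pow_one]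
  have e0 : φ 0 = 1 := by simp only [hφ]; rw [if_pos (by omega), pow_zero]
  have em : φ S.leaves = ENNReal.ofReal (x ^ S.leaves) := by
    simp only [hφ]; rw [if_pos hN, ENNReal.ofReal_pow hx0]
  rw [e1, e0, em] at h1
  rw [e1] at h2
  have hZf : Z ≠ ∞ := by
    rintro rfl
    rw [top_add] at h1
    have : (1 : ℝ≥0∞) + 2 * ENNReal.ofReal F + ENNReal.ofReal (x ^ S.leaves) ≠ ∞ := by
      finiteness
    exact this h1.symm
  have hZr : Z.toReal + x = 1 + 2 * F + x ^ S.leaves := by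
    have := congrArg ENNReal.toReal h1
    rw [ENNReal.toReal_add hZf (by finiteness), ENNReal.toReal_add (by finiteness) (by finiteness),
      ENNReal.toReal_add (by finiteness) (by finiteness), ENNReal.toReal_mul,
      ENNReal.toReal_ofReal hx0, ENNReal.toReal_ofReal hF0,
      ENNReal.toReal_ofReal (by positivity)] at this
    simpa using this
  have e3 : (1 - ENNReal.ofReal x)⁻¹ = ENNReal.ofReal ((1 - x)⁻¹) := by
    rw [ENNReal.ofReal_inv_of_pos (by linarith), ENNReal.ofReal_sub _ hx0, ENNReal.ofReal_one]
  rw [e3, ← ENNReal.ofReal_mul hD20,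
    ← ENNReal.ofReal_add hD0 (mul_nonneg hD20 (inv_nonneg.2 (by linarith)))] at h2
  have hfin : Z * ENNReal.ofReal (D + D2 * (1 - x)⁻¹) ≠ ∞ :=
    ENNReal.mul_ne_top hZf ENNReal.ofReal_ne_top
  have h4 := ENNReal.toReal_mono (ENNReal.add_ne_top.2 ⟨hfin, ENNReal.ofReal_ne_top⟩) h2
  rw [ENNReal.toReal_add hfin ENNReal.ofReal_ne_top, ENNReal.toReal_mul, ENNReal.toReal_mul,
    ENNReal.toReal_ofReal hx0, ENNReal.toReal_ofReal hD0, ENNReal.toReal_ofReal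
    (add_nonneg hD0 (mul_nonneg hD20 (inv_nonneg.2 (by linarith))))] at h4
  have h5 : 1 + 2 * F - x + x ^ S.leaves = Z.toReal := by linarith
  rw [h5]
  simpa using h4


lemma boot (c : ℕ → ℕ) (s : Finset ℕ) (r x1 y0 y1 K : ℝ) (hr : 0 ≤ r) (hrx : r ≤ x1) (hK : 0 ≤ K)
    (h0 : ∑ n ∈ s, (c n : ℝ) * r ^ n ≤ y0)
    (h1 : ∀ x, r < x → x < x1 → ∑ n ∈ s, (c n : ℝ) * x ^ n ≤ y1 →
      ∑ n ∈ s, (c n : ℝ) * (n * x ^ n) ≤ K * x)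
    (h2 : y0 + K * (x1 - r) < y1) : ∑ n ∈ s, (c n : ℝ) * x1 ^ n ≤ y1 := by
  by_contra hcon
  push Not at hcon
  set f : ℝ → ℝ := fun x => ∑ n ∈ s, (c n : ℝ) * x ^ n with hf
  have hder : ∀ x, HasDerivAt f (∑ n ∈ s, (c n : ℝ) * (n * x ^ (n - 1))) x := by
    intro x
    apply HasDerivAt.fun_sum
    intro n _
    exact (hasDerivAt_pow n x).const_mul _
  have hcont : Continuous f := continuous_iff_continuousAt.2 fun x => (hder x).continuousAt
  have hmono : ∀ x y, 0 ≤ x → x ≤ y → f x ≤ f y := by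
    intro x y hx hxy
    simp only [hf]
    gcongr
  have hy : y0 < y1 := by nlinarith
  obtain ⟨d, ⟨hd1, hd2⟩, hd3⟩ : y1 ∈ f '' Set.Icc r x1 :=
    intermediate_value_Icc hrx hcont.continuousOn ⟨h0.trans hy.le, hcon.le⟩
  have key : f d - f r ≤ K * (d - r) := by
    refine Convex.image_sub_le_mul_sub_of_deriv_le (convex_Icc r d) hcont.continuousOn
      (fun x _ => (hder x).differentiableAt.differentiableWithinAt) ?_ r
      (Set.left_mem_Icc.2 hd1) d (Set.right_mem_Icc.2 hd1) hd1
    intro x hx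
    rw [interior_Icc] at hx
    have hx0 : 0 < x := lt_of_le_of_lt hr hx.1
    have h3 := h1 x hx.1 (lt_of_lt_of_le hx.2 hd2) ((hmono x d hx0.le hx.2.le).trans hd3.le)
    rw [(hder x).deriv]
    have h4 : ∑ n ∈ s, (c n : ℝ) * (n * x ^ n)
        = (∑ n ∈ s, (c n : ℝ) * (n * x ^ (n - 1))) * x := by
      rw [Finset.sum_mul]
      refine Finset.sum_congr rfl fun n _ => ?_
      rcases n with _ | n
      · simp
      · simp only [Nat.add_sub_cancel, pow_succ]; ring
    rw [h4] at h3
    exact le_of_mul_le_mul_right h3 hx0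
  have : K * (d - r) ≤ K * (x1 - r) := by gcongr
  have h0' : f r ≤ y0 := h0
  linarith

lemma radius_ge (c : ℕ → ℕ) (x1 y1 : ℝ) (hx : 0 ≤ x1) (m : ℕ)
    (h : ∀ N, m ≤ N → ∑ n ∈ Finset.range (N + 1), (c n : ℝ) * x1 ^ n ≤ y1) :
    ENNReal.ofReal x1 ≤ radiusOf (fun n => (c n : ℝ)) := by
  unfold radiusOf
  refine FormalMultilinearSeries.le_radius_of_bound (r := x1.toNNReal) _ y1 fun n => ?_
  rw [FormalMultilinearSeries.ofScalars_norm, Real.coe_toNNReal _ hx, Real.norm_natCast]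
  refine le_trans ?_ (h (max m n) (le_max_left _ _))
  exact Finset.single_le_sum (f := fun n => (c n : ℝ) * x1 ^ n) (fun i _ => by positivity)
    (Finset.mem_range.2 (by have := le_max_right m n; omega))

lemma summ_of_lt (c : ℕ → ℕ) (x : ℝ) (hx0 : 0 ≤ x)
    (hx : ENNReal.ofReal x < radiusOf (fun n => (c n : ℝ))) :
    Summable fun n => (c n : ℝ) * (n * x ^ n) := by
  obtain ⟨a, ha, C, hC, h⟩ :=
    FormalMultilinearSeries.norm_mul_pow_le_mul_pow_of_lt_radius (r := x.toNNReal) _ hx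
  have hs : Summable fun n : ℕ => C * ((n : ℝ) ^ 1 * a ^ n) :=
    (summable_pow_mul_geometric_of_norm_lt_one 1
      (by rw [Real.norm_eq_abs, abs_of_pos ha.1]; exact ha.2)).mul_left C
  refine Summable.of_nonneg_of_le (fun n => by positivity) (fun n => ?_) hs
  have := h n
  rw [FormalMultilinearSeries.ofScalars_norm, Real.coe_toNNReal _ hx0, Real.norm_natCast] at this
  calc (c n : ℝ) * (n * x ^ n) = n * (c n * x ^ n) := by ring
    _ ≤ n * (C * a ^ n) := by gcongr
    _ = _ := by ring

lemma H_real (x : ℝ) (hx0 : 0 < x)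
    (hx : ENNReal.ofReal x < radiusOf (fun n => (cnt (fun _ => True) n : ℝ))) (N : ℕ) :
    ∑ n ∈ Finset.range (N + 1), (cnt (fun _ => True) n : ℝ) * x ^ n ≤ (1 + x) / 2 := by
  have hs := summ_of_lt _ x hx0.le hx
  have h1 := H_bound (ENNReal.ofReal x) (by simpa using hx0) (by
    have e : ∀ n : ℕ, (cnt (fun _ => True) n : ℝ≥0∞) * (n * ENNReal.ofReal x ^ n)
        = ENNReal.ofReal ((cnt (fun _ => True) n : ℝ) * (n * x ^ n)) := by
      intro n
      rw [ENNReal.ofReal_mul (by positivity), ENNReal.ofReal_mul (by positivity),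
        ENNReal.ofReal_pow hx0.le, ENNReal.ofReal_natCast, ENNReal.ofReal_natCast]
    simp_rw [e]
    rw [← ENNReal.ofReal_tsum_of_nonneg (fun n => by positivity) hs]
    exact ENNReal.ofReal_ne_top)
  have h2 : ENNReal.ofReal (∑ n ∈ Finset.range (N + 1), (cnt (fun _ => True) n : ℝ) * x ^ n)
      ≤ ∑' n, (cnt (fun _ => True) n : ℝ≥0∞) * ENNReal.ofReal x ^ n := by
    refine le_trans (le_of_eq ?_) (ENNReal.sum_le_tsum (Finset.range (N + 1)))
    rw [ENNReal.ofReal_sum_of_nonneg (fun n _ => by positivity)]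
    refine Finset.sum_congr rfl fun n _ => ?_
    rw [ENNReal.ofReal_mul (by positivity), ENNReal.ofReal_pow hx0.le, ENNReal.ofReal_natCast]
  set F := ∑ n ∈ Finset.range (N + 1), (cnt (fun _ => True) n : ℝ) * x ^ n with hF
  have hF0 : 0 ≤ F := Finset.sum_nonneg fun n _ => by positivity
  have h3 : ENNReal.ofReal (1 + 2 * F) ≤ ENNReal.ofReal (2 + x) := by
    rw [ENNReal.ofReal_add (by norm_num) (by positivity), ENNReal.ofReal_mul (by norm_num),
      ENNReal.ofReal_add (by norm_num) hx0.le, ENNReal.ofReal_one]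
    simp only [ENNReal.ofReal_ofNat]
    exact le_trans (by gcongr) h1
  rw [ENNReal.ofReal_le_ofReal_iff (by positivity)] at h3
  linarith

lemma H_radius_le : radiusOf (fun n => (cnt (fun _ => True) n : ℝ)) ≤ ENNReal.ofReal (1 / 2) := by
  by_contra h
  push Not at h
  have h1 := H_real (1 / 2) (by norm_num) h 3
  have c1 : (1 : ℝ) ≤ cnt (fun _ => True) 1 := by exact_mod_cast cnt_pos (by norm_num)
  have c2 : (1 : ℝ) ≤ cnt (fun _ => True) 2 := by exact_mod_cast cnt_pos (by norm_num)
  have c3 : (1 : ℝ) ≤ cnt (fun _ => True) 3 := by exact_mod_cast cnt_pos (by norm_num)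
  have c0 : (0 : ℝ) ≤ cnt (fun _ => True) 0 := by positivity
  simp only [Finset.sum_range_succ, Finset.sum_range_zero] at h1
  norm_num at h1
  linarith

/-- The avoiding series has positive radius. -/
lemma A_pos {S : RTree} (hS : S.IsHierarchy) (hm : 2 ≤ S.leaves) :
    ENNReal.ofReal (1 / 32) ≤ radiusOf (fun n => (cnt (fun u => u ≠ mk S) n : ℝ)) := by
  refine radius_ge _ (1 / 32) (1 / 8) (by norm_num) S.leaves fun N hN => ?_
  refine boot _ _ 0 (1 / 32) 0 (1 / 8) 2 le_rfl (by norm_num) (by norm_num) ?_ ?_ (by norm_num)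
  · apply le_of_eq
    apply Finset.sum_eq_zero
    intro n _
    rcases n with _ | n
    · simp [cnt_zero]
    · simp
  · intro x hx0 hx hy
    have h := A_real hS hm x hx0.le (by linarith) N hN _ rfl
    set F := ∑ n ∈ Finset.range (N + 1), (cnt (fun u => u ≠ mk S) n : ℝ) * x ^ n with hF
    set D := ∑ n ∈ Finset.range (N + 1), (cnt (fun u => u ≠ mk S) n : ℝ) * (n * x ^ n) with hD
    set D2 := ∑ n ∈ Finset.range (N + 1), (cnt (fun u => u ≠ mk S) n : ℝ) * (n * x ^ n * x ^ n)
      with hD2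
    have hD0 : 0 ≤ D := Finset.sum_nonneg fun n _ => by positivity
    have hD20 : 0 ≤ D2 := Finset.sum_nonneg fun n _ => by positivity
    have hle : D2 ≤ D * x := by
      rw [hD, hD2, Finset.sum_mul]
      refine Finset.sum_le_sum fun n _ => ?_
      rcases n with _ | n
      · simp
      · have : x ^ (n + 1) ≤ x := pow_le_of_le_one hx0.le (by linarith) (by omega)
        calc _ = (cnt (fun u => u ≠ mk S) (n + 1) : ℝ) * ((n + 1 : ℕ) * x ^ (n + 1)) * x ^ (n + 1) :=
              by ring
          _ ≤ _ := by gcongr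
    have hxm : x ^ S.leaves ≤ x := pow_le_of_le_one hx0.le (by linarith) (by omega)
    have hinv : (1 - x)⁻¹ ≤ 2 := by
      rw [inv_le_comm₀ (by linarith) (by norm_num)]; linarith
    have h5 : D2 * (1 - x)⁻¹ ≤ D * x * 2 := by
      refine mul_le_mul hle hinv (inv_nonneg.2 (by linarith)) (by positivity)
    have h6 : D + D2 * (1 - x)⁻¹ ≤ D * (17 / 16) := by nlinarith
    have h7 : (1 + 2 * F - x + x ^ S.leaves) * (D + D2 * (1 - x)⁻¹) ≤ 5 / 4 * (D * (17 / 16)) := by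
      refine mul_le_mul (by linarith) h6 ?_ (by norm_num)
      exact add_nonneg hD0 (mul_nonneg hD20 (inv_nonneg.2 (by linarith)))
    linarith

lemma A_ext {S : RTree} (hS : S.IsHierarchy) (hm : 2 ≤ S.leaves) (r : ℝ) (hr : 0 < r)
    (hr2 : r ≤ 1 / 2)
    (hrad : radiusOf (fun n => (cnt (fun _ => True) n : ℝ)) = ENNReal.ofReal r) :
    ENNReal.ofReal r < radiusOf (fun n => (cnt (fun u => u ≠ mk S) n : ℝ)) := by
  set m := S.leaves with hmdef
  set a := cnt (fun u => u ≠ mk S) with ha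
  set h := cnt (fun _ => True) with hh
  -- value of the full series at r
  have hH : ∀ N, ∑ n ∈ Finset.range (N + 1), (h n : ℝ) * r ^ n ≤ (1 + r) / 2 := by
    intro N
    have hc1 : Continuous fun x : ℝ => ∑ n ∈ Finset.range (N + 1), (h n : ℝ) * x ^ n := by fun_prop
    have hc2 : Continuous fun x : ℝ => (1 + x) / 2 := by fun_prop
    refine le_of_tendsto_of_tendsto (b := nhdsWithin r (Set.Iio r))
      (hc1.continuousAt.tendsto.mono_left nhdsWithin_le_nhds)
      (hc2.continuousAt.tendsto.mono_left nhdsWithin_le_nhds) ?_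
    have hev : ∀ᶠ x in nhdsWithin r (Set.Iio r), x ∈ Set.Ioo 0 r := Ioo_mem_nhdsLT hr
    filter_upwards [hev] with x hx
    refine H_real x hx.1 ?_ N
    rw [hrad]
    exact (ENNReal.ofReal_lt_ofReal_iff hr).2 hx.2
  set δ := r ^ m with hδ
  have hδ0 : 0 < δ := by positivity
  have hA : ∀ N, m ≤ N → ∑ n ∈ Finset.range (N + 1), (a n : ℝ) * r ^ n ≤ (1 + r) / 2 - δ := by
    intro N hN
    have h1 : ∑ n ∈ Finset.range (N + 1), ((a n : ℝ) * r ^ n + if n = m then δ else 0)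
        ≤ ∑ n ∈ Finset.range (N + 1), (h n : ℝ) * r ^ n := by
      refine Finset.sum_le_sum fun n _ => ?_
      by_cases hn : n = m
      · have : (a m : ℝ) + 1 ≤ h m := by exact_mod_cast cnt_lt S hS
        rw [if_pos hn, hn, ← hδ]
        nlinarith
      · have : (a n : ℝ) ≤ h n := by exact_mod_cast cnt_le _ n
        rw [if_neg hn, add_zero]
        gcongr
    rw [Finset.sum_add_distrib, Finset.sum_ite_eq', if_pos (Finset.mem_range.2 (by omega))] at h1
    have := hH N
    linarith
  -- bound on the higher order terms
  obtain ⟨C, hC0, hC⟩ : ∃ C : ℝ, 0 ≤ C ∧ ∀ N x, 0 ≤ x → x ≤ 6 / 5 * r →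
      ∑ n ∈ Finset.range (N + 1), (a n : ℝ) * (n * x ^ n * x ^ n) ≤ C := by
    have hs := summ_of_lt h (18 / 25 * r) (by positivity) (by
      rw [hrad]; exact (ENNReal.ofReal_lt_ofReal_iff hr).2 (by linarith))
    refine ⟨∑' n, (h n : ℝ) * (n * (18 / 25 * r) ^ n), tsum_nonneg fun n => by positivity, ?_⟩
    intro N x hx0 hx
    refine le_trans ?_ (hs.sum_le_tsum (Finset.range (N + 1)) fun n _ => by positivity)
    refine Finset.sum_le_sum fun n _ => ?_
    have h1 : (a n : ℝ) ≤ h n := by exact_mod_cast cnt_le _ n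
    have h2 : x * x ≤ 18 / 25 * r := by nlinarith
    rw [mul_assoc, ← mul_pow]
    gcongr
  -- continuity of x ^ m
  obtain ⟨η, hη, hηm⟩ : ∃ η > 0, ∀ x, r ≤ x → x < r + η → x ^ m ≤ δ + δ / 4 := by
    have hc : ContinuousAt (fun x : ℝ => x ^ m) r := by fun_prop
    obtain ⟨η, hη, hb⟩ := Metric.continuousAt_iff.1 hc (δ / 4) (by positivity)
    refine ⟨η, hη, fun x h1 h2 => ?_⟩
    have := hb (x := x) (by rw [Real.dist_eq, abs_lt]; constructor <;> linarith)
    rw [Real.dist_eq, abs_lt] at this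
    linarith [this.2]
  set K := (10 * C + 2) / δ / r with hK
  have hK0 : 0 ≤ K := by positivity
  set ε := min (min (η / 2) (r / 5)) (δ / 8 / (K + 1)) with hε
  have hε0 : 0 < ε := by positivity
  have hε1 : ε ≤ η / 2 := (min_le_left _ _).trans (min_le_left _ _)
  have hε2 : ε ≤ r / 5 := (min_le_left _ _).trans (min_le_right _ _)
  have hε3 : K * ε < δ / 8 := by
    have h1 : ε ≤ δ / 8 / (K + 1) := min_le_right _ _
    rw [le_div_iff₀ (by positivity)] at h1
    nlinarith
  have hfin : ENNReal.ofReal (r + ε) ≤ radiusOf (fun n => (a n : ℝ)) := by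
    refine radius_ge a (r + ε) ((1 + r) / 2 - δ + δ / 8) (by positivity) m fun N hN => ?_
    refine boot a _ r (r + ε) ((1 + r) / 2 - δ) _ K hr.le (by linarith) hK0 (hA N hN) ?_ ?_
    · intro x hx1 hx2 hy
      have hx0 : 0 < x := by linarith
      have hx6 : x ≤ 3 / 5 := by linarith
      have hmain := A_real hS hm x hx0.le (by linarith) N hN a rfl
      have hC' := hC N x hx0.le (by linarith)
      have hxm := hηm x hx1.le (by linarith)
      set F := ∑ n ∈ Finset.range (N + 1), (a n : ℝ) * x ^ n with hF
      set D := ∑ n ∈ Finset.range (N + 1), (a n : ℝ) * (n * x ^ n) with hD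
      set D2 := ∑ n ∈ Finset.range (N + 1), (a n : ℝ) * (n * x ^ n * x ^ n) with hD2
      have hD0 : 0 ≤ D := Finset.sum_nonneg fun n _ => by positivity
      have hD20 : 0 ≤ D2 := Finset.sum_nonneg fun n _ => by positivity
      have hinv : (1 - x)⁻¹ ≤ 5 / 2 := by
        rw [inv_le_comm₀ (by linarith) (by norm_num)]; linarith
      have h5 : D2 * (1 - x)⁻¹ ≤ C * (5 / 2) :=
        mul_le_mul hC' hinv (inv_nonneg.2 (by linarith)) hC0
      have h50 : 0 ≤ D2 * (1 - x)⁻¹ := mul_nonneg hD20 (inv_nonneg.2 (by linarith))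
      have hZ : 1 + 2 * F - x + x ^ m ≤ 2 - δ / 2 := by linarith
      have h7 : (1 + 2 * F - x + x ^ m) * (D + D2 * (1 - x)⁻¹)
          ≤ (2 - δ / 2) * (D + D2 * (1 - x)⁻¹) := by gcongr
      have h8 : D * δ ≤ 10 * C + 2 := by
        have h9 : δ / 2 * (D2 * (1 - x)⁻¹) ≥ 0 := by positivity
        rw [← hmdef] at hmain
        nlinarith
      calc D ≤ (10 * C + 2) / δ := by rw [le_div_iff₀ hδ0]; exact h8
        _ = K * r := by rw [hK]; field_simp
        _ ≤ K * x := by gcongr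
    · have : r + ε - r = ε := by ring
      rw [this]
      linarith
  exact lt_of_lt_of_le ((ENNReal.ofReal_lt_ofReal_iff (by linarith)).2 (by linarith)) hfin

end HierProof

/-- For any hierarchy `S` of size `m ≥ 2`, the radius of convergence of
`∑ₙ H⁽ᵐ⁾ₙ xⁿ` (hierarchies avoiding `S`) is strictly larger than the radius of
convergence of `∑ₙ Hₙ xⁿ` (all hierarchies). -/
theorem radius_avoiding_gt_radius {m : ℕ} (hm : 2 ≤ m) (S : RTree)
    (hS : S.IsHierarchy) (hSm : S.leaves = m) :
    radiusOf (fun n => (hierarchyCount n : ℝ)) <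
      radiusOf (fun n => (avoidCount S n : ℝ)) := by
  subst hSm
  have e1 : (fun n => (hierarchyCount n : ℝ)) = fun n => (HierProof.cnt (fun _ => True) n : ℝ) := by
    funext n; rw [HierProof.hierarchyCount_eq]
  have e2 : (fun n => (avoidCount S n : ℝ)) =
      fun n => (HierProof.cnt (fun u => u ≠ HierProof.mk S) n : ℝ) := by
    funext n; rw [HierProof.avoidCount_eq]
  rw [e1, e2]
  have hle := HierProof.H_radius_le
  set ρ := radiusOf (fun n => (HierProof.cnt (fun _ => True) n : ℝ)) with hρ
  by_cases h0 : ρ = 0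
  · rw [h0]
    refine lt_of_lt_of_le ?_ (HierProof.A_pos hS hm)
    exact ENNReal.ofReal_pos.2 (by norm_num)
  · have hfin : ρ ≠ ⊤ := ne_top_of_le_ne_top ENNReal.ofReal_ne_top hle
    have hr : ρ = ENNReal.ofReal ρ.toReal := (ENNReal.ofReal_toReal hfin).symm
    rw [hr]
    refine HierProof.A_ext hS hm ρ.toReal (ENNReal.toReal_pos h0 hfin) ?_ hr
    exact ENNReal.toReal_le_of_le_ofReal (by norm_num) hle
end

section
/- Fix m ≥ 2 and a hierarchy S of size m, let H^{(m)}_n denote the number of isomorphism classes of hierarchies of size n containing no subhierarchy isomorphic to S, and let ρ_m be the radius of convergence of the real power series H^{(m)}(x) = Σ_{n≥1} H^{(m)}_n xⁿ. Then Σ_{n≥1} H^{(m)}_n ρ_mⁿ = (1 + ρ_m − ρ_m^m)/2. -/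
namespace AvoidAux
open Finset Filter Topology

noncomputable def ell (t : ℝ) : ℝ := -Real.log (1 - t) - t

lemma ell_nonneg {t : ℝ} (h1 : t < 1) : 0 ≤ ell t := by
  have := Real.log_le_sub_one_of_pos (show 0 < 1 - t by linarith)
  unfold ell; linarith

lemma ell_le {t : ℝ} (h1 : t < 1) : ell t ≤ t ^ 2 / (1 - t) := by
  have h := Real.one_sub_inv_le_log_of_pos (show 0 < 1 - t by linarith)
  have h2 : (1 - t)⁻¹ = 1 + t + t ^ 2 / (1 - t) := by
    have : (1 - t) ≠ 0 := by linarith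
    field_simp; ring
  unfold ell; linarith

lemma ell_pow_le {x : ℝ} (h0 : 0 ≤ x) (h1 : x < 1) {n : ℕ} (hn : 1 ≤ n) :
    ell (x ^ n) ≤ (x ^ 2) ^ n / (1 - x) := by
  have h2 : x ^ n ≤ x := pow_le_of_le_one h0 h1.le (by omega)
  refine (ell_le (by linarith)).trans ?_
  rw [← pow_mul, ← pow_mul, mul_comm]
  gcongr

lemma ell_mono {s t : ℝ} (h : s ≤ t) (h0 : 0 ≤ s) (h1 : t < 1) : ell s ≤ ell t := by
  have hs : 0 < 1 - s := by linarith
  have ht : 0 < 1 - t := by linarith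
  have := Real.one_sub_inv_le_log_of_pos (show 0 < (1 - s) / (1 - t) by positivity)
  rw [Real.log_div hs.ne' ht.ne', inv_div] at this
  have h3 : t - s ≤ 1 - (1 - t) / (1 - s) := by
    have : 1 - (1 - t) / (1 - s) = (t - s) / (1 - s) := by field_simp; ring
    rw [this, le_div_iff₀ hs]
    nlinarith
  unfold ell; linarith

lemma f_strictMono (m : ℕ) (hm : 1 ≤ m) :
    StrictMonoOn (fun t : ℝ => 2 * ell t + t - t ^ m) (Set.Ico 0 1) := by
  have hd : ∀ x : ℝ, x < 1 → HasDerivAt (fun t : ℝ => 2 * ell t + t - t ^ m)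
      (2 * (1 / (1 - x) - 1) + 1 - m * x ^ (m - 1)) x := by
    intro x hx
    have h1 : HasDerivAt (fun t : ℝ => 1 - t) (-1) x := by
      simpa using (hasDerivAt_id x).const_sub 1
    have h2 := h1.log (by linarith)
    have h3 : HasDerivAt ell (1 / (1 - x) - 1) x := by
      have := h2.neg.sub (hasDerivAt_id x)
      refine this.congr_deriv ?_
      ring
    exact ((h3.const_mul 2).add (hasDerivAt_id x)).sub (hasDerivAt_pow m x)
  apply strictMonoOn_of_deriv_pos (convex_Ico 0 1)
  · intro x hx
    exact (hd x hx.2).continuousAt.continuousWithinAt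
  · intro x hx
    rw [interior_Ico] at hx
    obtain ⟨h0, h1⟩ := hx
    rw [(hd x h1).deriv]
    have hp : 0 < 1 - x := by linarith
    have hs : (m : ℝ) * x ^ (m - 1) ≤ ∑ i ∈ range m, x ^ i := by
      have : ∑ i ∈ range m, x ^ (m - 1) ≤ ∑ i ∈ range m, x ^ i := by
        apply sum_le_sum
        intro i hi
        rw [mem_range] at hi
        exact pow_le_pow_of_le_one h0.le h1.le (by omega)
      simpa using this
    have hg : (∑ i ∈ range m, x ^ i) * (1 - x) = 1 - x ^ m := geom_sum_mul_neg x m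
    have hm' : (m : ℝ) * x ^ (m - 1) ≤ 1 / (1 - x) := by
      rw [le_div_iff₀ hp]
      have : 0 ≤ x ^ m := by positivity
      nlinarith
    have : 1 < 1 / (1 - x) := by
      rw [lt_div_iff₀ hp]; linarith
    linarith

noncomputable def hN (a : ℕ → ℝ) (N : ℕ) (x : ℝ) : ℝ := ∑ n ∈ range (N + 1), a n * x ^ n
noncomputable def QN (a : ℕ → ℝ) (N : ℕ) (x : ℝ) : ℝ :=
  Real.exp (∑ n ∈ range (N + 1), a n * (-Real.log (1 - x ^ n)))
noncomputable def HH (a : ℕ → ℝ) (x : ℝ) : ℝ := ∑' n, a n * x ^ n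
noncomputable def LL (a : ℕ → ℝ) (x : ℝ) : ℝ := ∑' n, a n * ell (x ^ n)
noncomputable def LN (a : ℕ → ℝ) (N : ℕ) (x : ℝ) : ℝ := ∑ n ∈ range (N + 1), a n * ell (x ^ n)

structure Hyp (a : ℕ → ℝ) (m : ℕ) : Prop where
  nonneg : ∀ n, 0 ≤ a n
  zero : a 0 = 0
  one : a 1 = 1
  m_pos : 1 ≤ m
  low : ∀ N x, m ≤ N + 1 → 0 ≤ x → x < 1 →
    hN a (N + 1) x - x + x ^ m ≤ QN a N x - 1 - hN a N x
  up : ∀ N x, 0 ≤ x → x < 1 → Summable (fun n => a n * x ^ n) →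
    QN a N x - 1 - hN a N x ≤ HH a x - x + x ^ m

variable {a : ℕ → ℝ} {m : ℕ}

lemma QN_eq (N : ℕ) (x : ℝ) : QN a N x = Real.exp (hN a N x + LN a N x) := by
  unfold QN hN LN
  rw [← sum_add_distrib]
  congr 1
  apply sum_congr rfl
  intro n _
  unfold ell; ring

lemma hN_nonneg (h : Hyp a m) (N : ℕ) {x : ℝ} (hx : 0 ≤ x) : 0 ≤ hN a N x :=
  sum_nonneg fun n _ => mul_nonneg (h.nonneg n) (by positivity)

lemma term_nonneg (h : Hyp a m) {x : ℝ} (h0 : 0 ≤ x) (h1 : x < 1) (n : ℕ) :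
    0 ≤ a n * ell (x ^ n) := by
  rcases Nat.eq_zero_or_pos n with rfl | hn
  · simp [h.zero]
  · exact mul_nonneg (h.nonneg n) (ell_nonneg (pow_lt_one₀ h0 h1 hn.ne'))

lemma term_le (h : Hyp a m) {x : ℝ} (h0 : 0 ≤ x) (h1 : x < 1) (n : ℕ) :
    a n * ell (x ^ n) ≤ a n * (x ^ 2) ^ n * (1 - x)⁻¹ := by
  rcases Nat.eq_zero_or_pos n with rfl | hn
  · simp [h.zero]
  · rw [mul_assoc]
    exact mul_le_mul_of_nonneg_left (ell_pow_le h0 h1 hn) (h.nonneg n)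

lemma summable_mono (h : Hyp a m) {x y : ℝ} (h0 : 0 ≤ x) (hxy : x ≤ y)
    (hs : Summable (fun n => a n * y ^ n)) : Summable (fun n => a n * x ^ n) :=
  Summable.of_nonneg_of_le (fun n => mul_nonneg (h.nonneg n) (by positivity))
    (fun n => mul_le_mul_of_nonneg_left (pow_le_pow_left₀ h0 hxy n) (h.nonneg n)) hs

lemma LL_summable (h : Hyp a m) {x : ℝ} (h0 : 0 ≤ x) (h1 : x < 1)
    (hs : Summable (fun n => a n * (x ^ 2) ^ n)) : Summable (fun n => a n * ell (x ^ n)) :=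
  Summable.of_nonneg_of_le (term_nonneg h h0 h1) (term_le h h0 h1) (hs.mul_right _)

lemma equation (h : Hyp a m) {x : ℝ} (h0 : 0 ≤ x) (h1 : x < 1)
    (hs : Summable (fun n => a n * x ^ n)) :
    Real.exp (HH a x + LL a x) = 1 + 2 * HH a x - x + x ^ m := by
  have hx2 : x ^ 2 ≤ x := pow_le_of_le_one h0 h1.le (by norm_num)
  have hL := LL_summable h h0 h1 (summable_mono h (by positivity) hx2 hs)
  have t1 : Tendsto (fun N => hN a N x) atTop (𝓝 (HH a x)) :=
    (tendsto_add_atTop_iff_nat 1).2 hs.hasSum.tendsto_sum_nat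
  have t1' : Tendsto (fun N => hN a (N + 1) x) atTop (𝓝 (HH a x)) :=
    (tendsto_add_atTop_iff_nat 1).2 t1
  have t2 : Tendsto (fun N => LN a N x) atTop (𝓝 (LL a x)) :=
    (tendsto_add_atTop_iff_nat 1).2 hL.hasSum.tendsto_sum_nat
  have t3 : Tendsto (fun N => QN a N x - 1 - hN a N x) atTop
      (𝓝 (Real.exp (HH a x + LL a x) - 1 - HH a x)) := by
    simp_rw [QN_eq]
    exact (((Real.continuous_exp.tendsto _).comp (t1.add t2)).sub_const 1).sub t1
  have e1 := le_of_tendsto t3 (Eventually.of_forall fun N => h.up N x h0 h1 hs)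
  have e2 := le_of_tendsto_of_tendsto ((t1'.sub_const x).add_const (x ^ m)) t3
    ((eventually_ge_atTop m).mono fun N hN => h.low N x (by omega) h0 h1)
  linarith

lemma LL_nonneg (h : Hyp a m) {x : ℝ} (h0 : 0 ≤ x) (h1 : x < 1) : 0 ≤ LL a x :=
  tsum_nonneg (term_nonneg h h0 h1)

lemma HH_nonneg (h : Hyp a m) {x : ℝ} (h0 : 0 ≤ x) : 0 ≤ HH a x :=
  tsum_nonneg fun n => mul_nonneg (h.nonneg n) (by positivity)

lemma hN_le (h : Hyp a m) {x : ℝ} (h0 : 0 ≤ x) (hs : Summable (fun n => a n * x ^ n)) (N : ℕ) :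
    hN a N x ≤ HH a x :=
  hs.sum_le_tsum _ fun n _ => mul_nonneg (h.nonneg n) (by positivity)

lemma HH_le_two (h : Hyp a m) {x : ℝ} (h0 : 0 ≤ x) (h1 : x < 1)
    (hs : Summable (fun n => a n * x ^ n)) : HH a x ≤ 2 := by
  have e := equation h h0 h1 hs
  have hl := LL_nonneg h h0 h1
  have hh := HH_nonneg h h0
  have q := Real.quadratic_le_exp_of_nonneg hh
  have : Real.exp (HH a x) ≤ Real.exp (HH a x + LL a x) := Real.exp_le_exp.2 (by linarith)
  have hx : x ^ m ≤ x := pow_le_of_le_one h0 h1.le (by have := h.m_pos; omega)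
  by_contra! hc
  nlinarith

lemma not_summable_one (h : Hyp a m) : ¬ Summable (fun n => a n * (1 : ℝ) ^ n) := by
  intro hs
  have key : ∀ x : ℝ, 0 ≤ x → x < 1 → 1 ≤ (1 - x) * 5 := by
    intro x h0 h1
    have hsx := summable_mono h h0 h1.le hs
    have e := h.up 1 x h0 h1 hsx
    have e2 := HH_le_two h h0 h1 hsx
    have hx : x ^ m ≤ x := pow_le_of_le_one h0 h1.le (by have := h.m_pos; omega)
    have e3 := hN_le h h0 hsx 1
    have e4 : QN a 1 x = (1 - x)⁻¹ := by
      simp [QN, sum_range_succ, h.zero, h.one, Real.exp_neg, Real.exp_log (show 0 < 1 - x by linarith)]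
    have hp : 0 < 1 - x := by linarith
    have : (1 - x)⁻¹ ≤ 5 := by linarith
    rwa [inv_le_iff_one_le_mul₀' hp] at this
  have := key (9 / 10) (by norm_num) (by norm_num)
  norm_num at this

lemma hN_cont (N : ℕ) : Continuous (hN a N) := by
  unfold hN; fun_prop

/-- monotonicity used in the iteration -/
lemma exp_sub_mono {c L u v : ℝ} (hc : 1 ≤ c) (hL : 0 ≤ L) (hu : 0 ≤ u) (huv : u ≤ v) :
    Real.exp (c * u + L) - u ≤ Real.exp (c * v + L) - v := by
  have h1 : Real.exp (c * v + L) = Real.exp (c * u + L) * Real.exp (c * (v - u)) := by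
    rw [← Real.exp_add]; ring_nf
  have h2 := Real.add_one_le_exp (c * (v - u))
  have h3 : 1 ≤ Real.exp (c * u + L) := Real.one_le_exp (by positivity)
  have h4 : v - u ≤ c * (v - u) := by nlinarith
  nlinarith

/-- If the truncated exponents satisfy a linear bound and `y` is a supersolution, then the
series converges. -/
lemma summable_of_super (h : Hyp a m) {x c L y : ℝ} (h0 : 0 ≤ x) (h1 : x < 1) (hc : 1 ≤ c)
    (hL : 0 ≤ L) (hbd : ∀ N, hN a N x + LN a N x ≤ c * hN a N x + L)
    (hy : Real.exp (c * y + L) - 1 - 2 * y + x - x ^ m ≤ 0) (hm : hN a m x ≤ y) :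
    Summable (fun n => a n * x ^ n) := by
  have key : ∀ k, hN a (m + k) x ≤ y := by
    intro k
    induction k with
    | zero => exact hm
    | succ k ih =>
      have e := h.low (m + k) x (by omega) h0 h1
      rw [QN_eq] at e
      have e2 := Real.exp_le_exp.2 (hbd (m + k))
      have e3 := exp_sub_mono hc hL (hN_nonneg h (m + k) h0) ih
      rw [← add_assoc]
      linarith
  refine summable_of_sum_range_le (c := y)
    (fun n => mul_nonneg (h.nonneg n) (by positivity)) fun n => ?_
  refine le_trans ?_ (key n)
  unfold hN
  apply sum_le_sum_of_subset_of_nonneg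
  · intro i; simp only [mem_range]; omega
  · intro i _ _; exact mul_nonneg (h.nonneg i) (by positivity)

lemma exists_pos_summable (h : Hyp a m) : ∃ x, 0 < x ∧ Summable (fun n => a n * x ^ n) := by
  have hc : Tendsto (hN a m) (𝓝[>] 0) (𝓝 (hN a m 0)) :=
    ((hN_cont m).tendsto 0).mono_left nhdsWithin_le_nhds
  have h00 : hN a m 0 = 0 := by
    unfold hN
    apply sum_eq_zero
    intro n _
    rcases Nat.eq_zero_or_pos n with rfl | hn
    · simp [h.zero]
    · simp [hn.ne']
  rw [h00] at hc
  have ev := (hc.eventually_le_const (show (0 : ℝ) < 1 / 2 by norm_num)).and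
    (Ioo_mem_nhdsGT (show (0 : ℝ) < 1 / 10 by norm_num))
  obtain ⟨x, hx1, hx2, hx3⟩ := ev.exists
  refine ⟨x, hx2, ?_⟩
  refine summable_of_super h (c := 10 / 9) (L := 0) (y := 1 / 2) hx2.le (by linarith)
    (by norm_num) le_rfl ?_ ?_ hx1
  · intro N
    have : LN a N x ≤ hN a N x * (1 / 9) := by
      unfold LN hN
      rw [sum_mul]
      apply sum_le_sum
      intro n _
      refine (term_le h hx2.le (by linarith) n).trans ?_
      rcases Nat.eq_zero_or_pos n with rfl | hn
      · simp [h.zero]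
      rw [mul_assoc, mul_assoc]
      apply mul_le_mul_of_nonneg_left _ (h.nonneg n)
      have e1 : (x ^ 2) ^ n = x ^ n * x ^ n := by rw [← pow_mul, two_mul, pow_add]
      have e2 : x ^ n ≤ x := pow_le_of_le_one hx2.le (by linarith) hn.ne'
      have e3 : (1 - x)⁻¹ ≤ 10 / 9 := by
        rw [inv_le_comm₀ (by linarith) (by norm_num)]; norm_num; linarith
      have e4 : 0 < x ^ n := by positivity
      rw [e1, mul_assoc]
      apply mul_le_mul_of_nonneg_left _ e4.le
      have : 0 < (1 - x)⁻¹ := by rw [inv_pos]; linarith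
      nlinarith
    linarith
  · have e := Real.exp_bound' (x := 5 / 9) (by norm_num) (by norm_num) (n := 3) (by norm_num)
    norm_num [sum_range_succ, Nat.factorial] at e
    have : 0 ≤ x ^ m := by positivity
    norm_num
    linarith

lemma HH_contOn (h : Hyp a m) {r : ℝ} (hs : Summable (fun n => a n * r ^ n)) :
    ContinuousOn (HH a) (Set.Icc 0 r) := by
  apply continuousOn_tsum (u := fun n => a n * r ^ n) (fun n => by fun_prop) hs
  intro n x hx
  rw [Real.norm_eq_abs, abs_of_nonneg (mul_nonneg (h.nonneg n) (pow_nonneg hx.1 n))]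
  exact mul_le_mul_of_nonneg_left (pow_le_pow_left₀ hx.1 hx.2 n) (h.nonneg n)

lemma LL_contOn (h : Hyp a m) {s : ℝ} (h1 : s < 1)
    (hs : Summable (fun n => a n * (s ^ 2) ^ n)) :
    ContinuousOn (LL a) (Set.Icc 0 s) := by
  apply continuousOn_tsum (u := fun n => a n * (s ^ 2) ^ n * (1 - s)⁻¹) _ (hs.mul_right _)
  · intro n x hx
    have hx1 : x < 1 := hx.2.trans_lt h1
    rw [Real.norm_eq_abs, abs_of_nonneg (term_nonneg h hx.1 hx1 n)]
    refine (term_le h hx.1 hx1 n).trans ?_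
    have := h.nonneg n
    have := hx.1
    have := hx.2
    have : 0 < 1 - s := by linarith
    gcongr
  · intro n
    rcases Nat.eq_zero_or_pos n with rfl | hn
    · simp [h.zero, continuousOn_const]
    unfold ell
    apply ContinuousOn.mul continuousOn_const
    apply ContinuousOn.sub _ (by fun_prop)
    apply ContinuousOn.neg
    apply ContinuousOn.log (by fun_prop)
    intro x hx
    have := pow_lt_one₀ hx.1 (hx.2.trans_lt h1) hn.ne'
    linarith

lemma LL_diff (h : Hyp a m) {x z : ℝ} (h0 : 0 ≤ x) (hxz : x ≤ z) (h1 : z < 1)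
    (hs : Summable (fun n => a n * z ^ n)) : ell z - ell x ≤ LL a z - LL a x := by
  have hz2 : z ^ 2 ≤ z := pow_le_of_le_one (h0.trans hxz) h1.le (by norm_num)
  have hs2 := summable_mono h (by positivity) hz2 hs
  have Lz := LL_summable h (h0.trans hxz) h1 hs2
  have Lx := LL_summable h h0 (hxz.trans_lt h1)
    (summable_mono h (by positivity) (pow_le_pow_left₀ h0 hxz 2) hs2)
  unfold LL
  rw [← Lz.tsum_sub Lx]
  have := (Lz.sub Lx).le_tsum 1 (by
    intro n _
    rcases Nat.eq_zero_or_pos n with rfl | hn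
    · simp [h.zero]
    rw [← mul_sub]
    apply mul_nonneg (h.nonneg n)
    have := ell_mono (pow_le_pow_left₀ h0 hxz n) (by positivity)
      (pow_lt_one₀ (h0.trans hxz) h1 hn.ne')
    linarith)
  simpa [h.one] using this

theorem main_analytic (h : Hyp a m) {r : ℝ} (hr0 : 0 ≤ r)
    (R1 : ∀ x, 0 ≤ x → x < r → Summable (fun n => a n * x ^ n))
    (R2 : ∀ x, 0 ≤ x → Summable (fun n => a n * x ^ n) → x ≤ r) :
    HH a r = (1 + r - r ^ m) / 2 := by
  have hrpos : 0 < r := by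
    obtain ⟨x, hx, hs⟩ := exists_pos_summable h
    exact hx.trans_le (R2 x hx.le hs)
  have hr1 : r ≤ 1 := by
    by_contra! hc
    exact not_summable_one h (R1 1 zero_le_one hc)
  have hsr : Summable (fun n => a n * r ^ n) := by
    refine summable_of_sum_range_le (c := 2)
      (fun n => mul_nonneg (h.nonneg n) (by positivity)) fun N => ?_
    have hcont : Tendsto (fun x : ℝ => ∑ n ∈ range N, a n * x ^ n) (𝓝[<] r)
        (𝓝 (∑ n ∈ range N, a n * r ^ n)) := by
      have : Continuous (fun x : ℝ => ∑ n ∈ range N, a n * x ^ n) := by fun_prop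
      exact (this.tendsto r).mono_left nhdsWithin_le_nhds
    refine le_of_tendsto hcont ?_
    filter_upwards [Ioo_mem_nhdsLT hrpos] with x hx
    have hsx := R1 x hx.1.le hx.2
    refine le_trans ?_ (HH_le_two h hx.1.le (hx.2.trans_le hr1) hsx)
    exact hsx.sum_le_tsum _ fun n _ => mul_nonneg (h.nonneg n) (pow_nonneg hx.1.le n)
  have hr1' : r < 1 := by
    refine lt_of_le_of_ne hr1 ?_
    rintro rfl
    exact not_summable_one h hsr
  have eqn : ∀ x, 0 ≤ x → x ≤ r → Real.exp (HH a x + LL a x) = 1 + 2 * HH a x - x + x ^ m :=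
    fun x h0 hx => equation h h0 (hx.trans_lt hr1') (summable_mono h h0 hx hsr)
  obtain ⟨s, hs1, hs2⟩ : ∃ s, r < s ∧ s ^ 2 < r := by
    refine ⟨Real.sqrt r * Real.sqrt (Real.sqrt r), ?_, ?_⟩
    · have e1 : Real.sqrt r * Real.sqrt r = r := Real.mul_self_sqrt hr0
      have e2 : 0 < Real.sqrt r := Real.sqrt_pos.2 hrpos
      have e3 : Real.sqrt r < Real.sqrt (Real.sqrt r) := by
        apply Real.sqrt_lt_sqrt hr0
        rw [Real.lt_sqrt hr0]; nlinarith
      nlinarith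
    · rw [mul_pow, Real.sq_sqrt hr0, Real.sq_sqrt (Real.sqrt_nonneg _)]
      have : Real.sqrt r < 1 := by rw [Real.sqrt_lt' one_pos]; simpa using hr1'
      nlinarith
  have hs1' : s < 1 := by nlinarith
  have hsum2 := R1 (s ^ 2) (by positivity) hs2
  have Lcont := LL_contOn h hs1' hsum2
  have Hcont := HH_contOn h hsr
  have hP : Real.exp (HH a r + LL a r) = 2 := by
    apply le_antisymm
    · by_contra! hc
      have Pc : ContinuousOn (fun x => Real.exp (HH a x + LL a x)) (Set.Icc 0 r) :=
        Real.continuous_exp.comp_continuousOn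
          (Hcont.add (Lcont.mono (Set.Icc_subset_Icc_right hs1.le)))
      have P0 : Real.exp (HH a 0 + LL a 0) = 1 := by
        have e1 : HH a 0 = 0 := by
          unfold HH
          convert tsum_zero with n
          rcases Nat.eq_zero_or_pos n with rfl | hn
          · simp [h.zero]
          · simp [hn.ne']
        have e2 : LL a 0 = 0 := by
          unfold LL
          convert tsum_zero with n
          rcases Nat.eq_zero_or_pos n with rfl | hn
          · simp [h.zero]
          · simp [hn.ne', ell]
        simp [e1, e2]
      obtain ⟨x, hx, hx2⟩ := intermediate_value_Icc hr0 Pc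
        (show (2 : ℝ) ∈ Set.Icc _ _ from ⟨by rw [P0]; norm_num, hc.le⟩)
      simp only at hx2
      have hxr : x < r := by
        refine lt_of_le_of_ne hx.2 ?_
        rintro rfl; linarith
      have ex := eqn x hx.1 hx.2
      have er := eqn r hr0 le_rfl
      have hL := LL_diff h hx.1 hx.2 hr1' hsr
      have hf := f_strictMono m h.m_pos ⟨hx.1, hxr.trans hr1'⟩ ⟨hr0, hr1'⟩ hxr
      simp only at hf
      have e3 : Real.exp (HH a r + LL a r)
          = 2 * Real.exp ((HH a r + LL a r) - (HH a x + LL a x)) := by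
        rw [← hx2, ← Real.exp_add]; ring_nf
      have e4 := Real.add_one_le_exp ((HH a r + LL a r) - (HH a x + LL a x))
      linarith
    · by_contra! hc
      have er := eqn r hr0 le_rfl
      -- a strict supersolution at `r`
      obtain ⟨y, hy1, hy2⟩ : ∃ y, HH a r < y ∧
          Real.exp (1 * y + LL a r) - 1 - 2 * y + r - r ^ m < 0 := by
        have hd : HasDerivAt (fun y => Real.exp (1 * y + LL a r) - 1 - 2 * y + r - r ^ m)
            (Real.exp (1 * HH a r + LL a r) * 1 - 2) (HH a r) := by
          have h1 : HasDerivAt (fun y : ℝ => 1 * y + LL a r) 1 (HH a r) := by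
            simpa using (hasDerivAt_id (HH a r)).add_const (LL a r)
          have h2 : HasDerivAt (fun y : ℝ => 2 * y) 2 (HH a r) := by
            simpa using (hasDerivAt_id (HH a r)).const_mul 2
          exact (((h1.exp.sub_const 1).sub h2).add_const r).sub_const (r ^ m)
        have hneg : Real.exp (1 * HH a r + LL a r) * 1 - 2 < 0 := by
          rw [one_mul]; linarith
        have hsl := (hasDerivAt_iff_tendsto_slope.1 hd).eventually_lt_const hneg
        have hsl' : ∀ᶠ y in 𝓝[>] (HH a r), slope (fun y => Real.exp (1 * y + LL a r) - 1 - 2 * y + r - r ^ m) (HH a r) y < 0 :=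
          hsl.filter_mono (nhdsWithin_mono _ fun y hy => ne_of_gt hy)
        obtain ⟨y, hy, hyr⟩ := (hsl'.and self_mem_nhdsWithin).exists
        have hyr' : HH a r < y := hyr
        refine ⟨y, hyr', ?_⟩
        rw [slope_def_field, div_lt_iff₀ (by linarith)] at hy
        rw [one_mul (HH a r)] at hy
        linarith
      have hLr : Tendsto (LL a) (𝓝[>] r) (𝓝 (LL a r)) := by
        have : ContinuousAt (LL a) r := Lcont.continuousAt (Icc_mem_nhds hrpos hs1)
        exact this.tendsto.mono_left nhdsWithin_le_nhds
      have hidr : Tendsto (fun x : ℝ => x) (𝓝[>] r) (𝓝 r) := nhdsWithin_le_nhds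
      have hphi : Tendsto (fun x => Real.exp (1 * y + LL a x) - 1 - 2 * y + x - x ^ m) (𝓝[>] r)
          (𝓝 (Real.exp (1 * y + LL a r) - 1 - 2 * y + r - r ^ m)) :=
        (((((Real.continuous_exp.tendsto _).comp (hLr.const_add (1 * y))).sub_const 1).sub_const
          (2 * y)).add hidr).sub (hidr.pow m)
      have hhm : Tendsto (hN a m) (𝓝[>] r) (𝓝 (hN a m r)) :=
        ((hN_cont m).tendsto r).mono_left nhdsWithin_le_nhds
      have ev := ((hphi.eventually_lt_const hy2).and
        (hhm.eventually_lt_const ((hN_le h hr0 hsr m).trans_lt hy1))).and (Ioo_mem_nhdsGT hs1)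
      obtain ⟨x, ⟨hx1, hx2⟩, hx3, hx4⟩ := ev.exists
      have hx0 : 0 ≤ x := by linarith
      have hxs : x < 1 := by linarith
      have hLs := LL_summable h hx0 hxs
        (summable_mono h (by positivity) (pow_le_pow_left₀ hx0 hx4.le 2) hsum2)
      have := summable_of_super h (c := 1) (L := LL a x) (y := y) hx0 hxs le_rfl
        (LL_nonneg h hx0 hxs) (fun N => by
          have : LN a N x ≤ LL a x := hLs.sum_le_tsum _ fun n _ => term_nonneg h hx0 hxs n
          linarith) hx1.le hx2.le
      have := R2 x hx0 this
      linarith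
  have := eqn r hr0 le_rfl
  linarith

theorem main_radius (a : ℕ → ℝ) (m : ℕ) (h : Hyp a m) :
    HH a ((FormalMultilinearSeries.ofScalars ℝ a).radius).toReal =
     (1 + ((FormalMultilinearSeries.ofScalars ℝ a).radius).toReal -
       ((FormalMultilinearSeries.ofScalars ℝ a).radius).toReal ^ m) / 2 := by
  have nrm : ∀ n, ‖FormalMultilinearSeries.ofScalars ℝ a n‖ = a n := fun n => by
    rw [FormalMultilinearSeries.ofScalars_norm, Real.norm_eq_abs, abs_of_nonneg (h.nonneg n)]
  set p := FormalMultilinearSeries.ofScalars ℝ a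
  have A1 : ∀ x : NNReal, (x : ENNReal) < p.radius → Summable (fun n => a n * (x : ℝ) ^ n) := by
    intro x hx
    simpa [nrm] using p.summable_norm_mul_pow hx
  have A2 : ∀ x : NNReal, Summable (fun n => a n * (x : ℝ) ^ n) → (x : ENNReal) ≤ p.radius := by
    intro x hx
    apply p.le_radius_of_summable
    simpa [nrm] using hx
  have hfin : p.radius ≠ ⊤ := by
    intro ht
    apply not_summable_one h
    simpa using A1 1 (by rw [ht]; exact ENNReal.coe_lt_top)
  apply main_analytic h ENNReal.toReal_nonneg
  · intro x hx hlt
    lift x to NNReal using hx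
    apply A1
    rw [← ENNReal.coe_toNNReal hfin]
    exact_mod_cast hlt
  · intro x hx hs
    lift x to NNReal using hx
    have := A2 x hs
    rw [← ENNReal.coe_toNNReal hfin] at this
    exact_mod_cast this

end AvoidAux
namespace AvoidAux
open Finset Filter Topology

theorem rtree_ind {P : RTree → Prop} (h : ∀ l, (∀ t ∈ l, P t) → P (.node l)) : ∀ t, P t
  | .node l => h l (fun t ht => rtree_ind h t)
decreasing_by
  have := List.sizeOf_lt_of_mem ht
  simp only [RTree.node.sizeOf_spec]
  omega

lemma iso_node {l₁ l₂ : List RTree} : RTree.Iso (.node l₁) (.node l₂) ↔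
    ∃ l, List.Forall₂ RTree.Iso l₁ l ∧ l.Perm l₂ :=
  ⟨fun h => by cases h with | node h₁ h₂ => exact ⟨_, h₁, h₂⟩, fun ⟨_, h₁, h₂⟩ => .node h₁ h₂⟩

lemma forall₂_imp_mem {α β : Type*} {R R' : α → β → Prop} {l₁ : List α} {l₂ : List β}
    (h : List.Forall₂ R l₁ l₂) (hi : ∀ a ∈ l₁, ∀ b, R a b → R' a b) : List.Forall₂ R' l₁ l₂ := by
  induction h with
  | nil => exact .nil
  | cons h1 h2 ih =>
    exact .cons (hi _ (by simp) _ h1) (ih fun a ha => hi a (by simp [ha]))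

lemma iso_refl : ∀ t, RTree.Iso t t := by
  apply rtree_ind
  intro l ih
  exact .node (List.forall₂_same.2 ih) (List.Perm.refl _)

lemma iso_symm : ∀ t u, RTree.Iso t u → RTree.Iso u t := by
  apply rtree_ind
  rintro l₁ ih ⟨l₂⟩ h
  obtain ⟨l, h1, h2⟩ := iso_node.1 h
  have h3 : List.Forall₂ RTree.Iso l l₁ := (forall₂_imp_mem h1 ih).flip
  obtain ⟨k, hk1, hk2⟩ := List.perm_comp_forall₂ h2.symm h3
  exact .node hk1 hk2

lemma forall₂_trans_mem {l₁ l₂ l₃ : List RTree} (h1 : List.Forall₂ RTree.Iso l₁ l₂)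
    (hi : ∀ a ∈ l₁, ∀ b c, RTree.Iso a b → RTree.Iso b c → RTree.Iso a c) :
    List.Forall₂ RTree.Iso l₂ l₃ → List.Forall₂ RTree.Iso l₁ l₃ := by
  induction h1 generalizing l₃ with
  | nil => intro h; cases h; exact .nil
  | cons h1 h2 ih =>
    intro h
    cases h with
    | cons h3 h4 =>
      exact .cons (hi _ (by simp) _ _ h1 h3) (ih (fun a ha => hi a (by simp [ha])) h4)

lemma iso_trans : ∀ t u v, RTree.Iso t u → RTree.Iso u v → RTree.Iso t v := by
  apply rtree_ind
  rintro l₁ ih ⟨l₂⟩ ⟨l₃⟩ h h'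
  obtain ⟨l, h1, h2⟩ := iso_node.1 h
  obtain ⟨l', h1', h2'⟩ := iso_node.1 h'
  obtain ⟨k, hk1, hk2⟩ := List.perm_comp_forall₂ h2 h1'
  exact .node (forall₂_trans_mem h1 ih hk1) (hk2.trans h2')

def isoSetoid : Setoid RTree := ⟨RTree.Iso, iso_refl, iso_symm _ _, iso_trans _ _ _⟩

/-- Isomorphism classes of rooted trees. -/
def T : Type := Quotient isoSetoid

def q (t : RTree) : T := Quotient.mk isoSetoid t

lemma q_eq {t u : RTree} : q t = q u ↔ RTree.Iso t u :=
  ⟨fun h => Quotient.exact (s := isoSetoid) h, fun h => Quotient.sound (s := isoSetoid) h⟩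

lemma q_surj (c : T) : ∃ t, q t = c := Quotient.exists_rep c

lemma forall₂_iso {l₁ l₂ : List RTree} : List.Forall₂ RTree.Iso l₁ l₂ ↔ l₁.map q = l₂.map q := by
  rw [← List.forall₂_eq_eq_eq, List.forall₂_map_left_iff, List.forall₂_map_right_iff]
  simp only [q_eq]

lemma iso_iff {l₁ l₂ : List RTree} : RTree.Iso (.node l₁) (.node l₂) ↔
    ((l₁.map q : List T) : Multiset T) = (l₂.map q : List T) := by
  rw [iso_node, Multiset.coe_eq_coe]
  constructor
  · rintro ⟨l, h1, h2⟩
    rw [forall₂_iso.1 h1]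
    exact h2.map q
  · intro h
    have := List.eq_map_comp_perm q
    have h2 : Relation.Comp (· = List.map q ·) List.Perm (l₁.map q) l₂ := by rw [this]; exact h
    obtain ⟨l, h3, h4⟩ := h2
    exact ⟨l, forall₂_iso.2 h3, h4⟩

def kids : RTree → Multiset T
  | .node l => (l.map q : List T)

def K : T → Multiset T := Quotient.lift kids (by
  rintro ⟨l₁⟩ ⟨l₂⟩ h
  exact iso_iff.1 h)

lemma K_q (l : List RTree) : K (q (.node l)) = (l.map q : List T) := rfl

lemma K_inj : Function.Injective K := by
  intro c d h
  obtain ⟨⟨l⟩, rfl⟩ := q_surj c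
  obtain ⟨⟨l'⟩, rfl⟩ := q_surj d
  rw [K_q, K_q] at h
  exact q_eq.2 (iso_iff.2 h)

lemma K_surj : Function.Surjective K := by
  intro s
  induction s using Quotient.inductionOn with
  | h l =>
    obtain ⟨l', rfl⟩ : ∃ l', List.map q l' = l := by
      have := List.map_surjective_iff.2 (fun c => q_surj c)
      exact this l
    exact ⟨q (.node l'), K_q l'⟩

lemma leaves_node (l : List RTree) :
    (RTree.node l).leaves = if l = [] then 1 else (l.map RTree.leaves).sum := by
  cases l with
  | nil => simp [RTree.leaves]
  | cons a l =>
    rw [RTree.leaves]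
    simp only [List.attach_map_val (f := RTree.leaves)]
    simp

lemma leaves_iso : ∀ t u, RTree.Iso t u → t.leaves = u.leaves := by
  apply rtree_ind
  rintro l₁ ih ⟨l₂⟩ h
  obtain ⟨l, h1, h2⟩ := iso_node.1 h
  have h3 := forall₂_imp_mem h1 ih
  have h4 : l₁.map RTree.leaves = l.map RTree.leaves := by
    rw [← List.forall₂_eq_eq_eq, List.forall₂_map_left_iff, List.forall₂_map_right_iff]
    exact h3
  have h5 := (h2.map RTree.leaves).sum_eq
  have h6 : l₁ = [] ↔ l₂ = [] := by
    rw [← List.length_eq_zero_iff, ← List.length_eq_zero_iff, h1.length_eq, h2.length_eq]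
  rw [leaves_node, leaves_node, h4, h5]
  simp only [h6]

def w : T → ℕ := Quotient.lift RTree.leaves leaves_iso

lemma w_q (t : RTree) : w (q t) = t.leaves := rfl

open Classical in
lemma w_eq (c : T) : w c = if K c = 0 then 1 else ((K c).map w).sum := by
  obtain ⟨⟨l⟩, rfl⟩ := q_surj c
  rw [w_q, K_q, leaves_node]
  have : w ∘ q = RTree.leaves := rfl
  simp [this]

lemma leaves_pos : ∀ t : RTree, 1 ≤ t.leaves := by
  apply rtree_ind
  intro l ih
  rw [leaves_node]
  cases l with
  | nil => simp
  | cons a l =>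
    have := ih a (by simp)
    simp; omega

lemma w_pos (c : T) : 1 ≤ w c := by
  obtain ⟨t, rfl⟩ := q_surj c
  exact leaves_pos t

lemma sum_w_ge (s : Multiset T) : Multiset.card s ≤ (s.map w).sum := by
  induction s using Multiset.induction with
  | empty => simp
  | cons a s ih => have := w_pos a; simp; omega

lemma w_of_two {c : T} (h : 2 ≤ Multiset.card (K c)) : w c = ((K c).map w).sum := by
  rw [w_eq, if_neg]
  intro h0; simp [h0] at h

lemma w_lt {c d : T} (h : 2 ≤ Multiset.card (K c)) (hd : d ∈ K c) : w d < w c := by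
  rw [w_of_two h]
  obtain ⟨s, hs⟩ := Multiset.exists_cons_of_mem hd
  rw [hs] at h ⊢
  have := sum_w_ge s
  simp at h ⊢
  omega

lemma hier_node {l : List RTree} : (RTree.node l).IsHierarchy ↔
    l.length ≠ 1 ∧ ∀ t ∈ l, t.IsHierarchy :=
  ⟨fun h => by cases h with | node h₁ h₂ => exact ⟨h₁, h₂⟩, fun ⟨h₁, h₂⟩ => .node h₁ h₂⟩

lemma avoids_node {l : List RTree} {S : RTree} : (RTree.node l).Avoids S ↔
    (∀ t ∈ l, t.Avoids S) ∧ ¬ RTree.Iso (.node l) S := by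
  constructor
  · intro h
    exact ⟨fun t ht s hs => h s (.child ht hs), h _ (.refl _)⟩
  · rintro ⟨h1, h2⟩ s hs
    cases hs with
    | refl => exact h2
    | child hc hs => exact h1 _ hc s hs

def Good (S t : RTree) : Prop := t.IsHierarchy ∧ t.Avoids S

lemma good_node {l : List RTree} {S : RTree} : Good S (.node l) ↔
    l.length ≠ 1 ∧ (∀ t ∈ l, Good S t) ∧ ¬ RTree.Iso (.node l) S := by
  unfold Good
  rw [hier_node, avoids_node]
  constructor
  · rintro ⟨⟨h1, h2⟩, h3, h4⟩
    exact ⟨h1, fun t ht => ⟨h2 t ht, h3 t ht⟩, h4⟩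
  · rintro ⟨h1, h2, h4⟩
    exact ⟨⟨h1, fun t ht => (h2 t ht).1⟩, fun t ht => (h2 t ht).2, h4⟩

lemma forall₂_mem_right {α β : Type*} {R : α → β → Prop} {l₁ : List α} {l₂ : List β}
    (h : List.Forall₂ R l₁ l₂) {b : β} (hb : b ∈ l₂) : ∃ a, R a b := by
  induction h with
  | nil => simp at hb
  | cons h1 h2 ih =>
    rcases List.mem_cons.1 hb with rfl | hb
    · exact ⟨_, h1⟩
    · exact ih hb

lemma good_iso (S : RTree) : ∀ t u, RTree.Iso t u → Good S t → Good S u := by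
  apply rtree_ind
  rintro l₁ ih ⟨l₂⟩ h hg
  obtain ⟨h1, h2, h3⟩ := good_node.1 hg
  obtain ⟨l, k1, k2⟩ := iso_node.1 h
  refine good_node.2 ⟨?_, ?_, fun h' => h3 (iso_trans _ _ _ h h')⟩
  · rwa [← k2.length_eq, ← k1.length_eq]
  · intro t ht
    rw [← k2.mem_iff] at ht
    have k3 : List.Forall₂ (fun a b => a ∈ l₁ ∧ RTree.Iso a b) l₁ l :=
      forall₂_imp_mem k1 fun a ha b hab => ⟨ha, hab⟩
    obtain ⟨a, ha, hab⟩ := forall₂_mem_right k3 ht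
    exact ih a ha t hab (h2 a ha)

def G (S : RTree) : T → Prop := Quotient.lift (Good S) (fun t u h =>
  propext ⟨good_iso S t u h, good_iso S u t (iso_symm _ _ h)⟩)

lemma G_q (S t : RTree) : G S (q t) ↔ Good S t := Iff.rfl

lemma G_iff (S : RTree) (c : T) : G S c ↔
    Multiset.card (K c) ≠ 1 ∧ (∀ d ∈ K c, G S d) ∧ c ≠ q S := by
  obtain ⟨⟨l⟩, rfl⟩ := q_surj c
  have h : q (.node l) ≠ q S ↔ ¬ RTree.Iso (.node l) S := not_congr q_eq
  rw [G_q, good_node, K_q, h]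
  simp [G_q]

lemma avoidCount_eq (S : RTree) (n : ℕ) :
    avoidCount S n = Nat.card {c : T // G S c ∧ w c = n} := by
  unfold avoidCount
  apply Nat.card_congr
  refine Equiv.ofBijective (Quot.lift (fun a => ⟨q a.1, ⟨a.2.1, a.2.2.2⟩, a.2.2.1⟩)
    (fun a b h => Subtype.ext (q_eq.2 h))) ⟨?_, ?_⟩
  · rintro ⟨a⟩ ⟨b⟩ h
    exact Quot.sound (q_eq.1 (congrArg Subtype.val h))
  · rintro ⟨c, hc, hn⟩
    obtain ⟨t, rfl⟩ := q_surj c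
    exact ⟨Quot.mk _ ⟨t, hc.1, hn, hc.2⟩, rfl⟩

def c0 : T := q (.node [])

lemma K_c0 : K c0 = 0 := rfl

lemma w_c0 : w c0 = 1 := by rw [w_eq, K_c0]; simp

lemma K_eq_zero {c : T} : K c = 0 ↔ c = c0 := by
  rw [← K_c0]; exact K_inj.eq_iff

variable {S : RTree}

lemma finite_G (S : RTree) (n : ℕ) : {c : T | G S c ∧ w c ≤ n}.Finite := by
  classical
  induction n with
  | zero =>
    convert Set.finite_empty
    ext c
    have := w_pos c
    simp; intro _; omega
  | succ n ih =>
    set F := ih.toFinset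
    have hfin : (Set.Icc (0 : Multiset T) ((n + 1) • F.val)).Finite := Set.finite_Icc _ _
    refine (hfin.preimage K_inj.injOn).subset ?_
    rintro c ⟨hc, hw⟩
    refine ⟨Multiset.zero_le _, ?_⟩
    by_cases h0 : K c = 0
    · rw [h0]; exact Multiset.zero_le _
    obtain ⟨h1, h2, h3⟩ := (G_iff S c).1 hc
    have hcard : 2 ≤ Multiset.card (K c) := by
      have : Multiset.card (K c) ≠ 0 := by simpa using h0
      omega
    rw [Multiset.le_iff_count]
    intro d
    by_cases hd : d ∈ K c
    · have hdF : d ∈ F := by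
        rw [Set.Finite.mem_toFinset]
        have := w_lt hcard hd
        exact ⟨h2 d hd, by omega⟩
      have e1 : Multiset.count d F.val = 1 := Multiset.count_eq_one_of_mem F.nodup hdF
      rw [Multiset.count_nsmul, e1]
      have := Multiset.count_le_card d (K c)
      have := sum_w_ge (K c)
      rw [w_of_two hcard] at hw
      simp; omega
    · rw [Multiset.count_eq_zero_of_notMem hd]; exact Nat.zero_le _

noncomputable def F (S : RTree) (N : ℕ) : Finset T := (finite_G S N).toFinset

lemma mem_F {N : ℕ} {c : T} : c ∈ F S N ↔ G S c ∧ w c ≤ N := by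
  simp [F]

lemma sum_F (S : RTree) (N : ℕ) (f : ℕ → ℝ) :
    ∑ n ∈ range (N + 1), (avoidCount S n : ℝ) * f n = ∑ c ∈ F S N, f (w c) := by
  classical
  rw [← sum_fiberwise_of_maps_to (s := F S N) (t := range (N + 1)) (g := w)
    (fun c hc => by have := (mem_F.1 hc).2; simp; omega)]
  apply sum_congr rfl
  intro n hn
  rw [mem_range] at hn
  have : avoidCount S n = #{c ∈ F S N | w c = n} := by
    rw [avoidCount_eq]
    apply Nat.subtype_card
    intro c
    rw [mem_filter, mem_F]
    constructor
    · rintro ⟨⟨h1, _⟩, h2⟩; exact ⟨h1, h2⟩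
    · rintro ⟨h1, h2⟩; exact ⟨⟨h1, by omega⟩, h2⟩
  rw [sum_congr rfl (g := fun _ => f n) (fun c hc => by rw [(mem_filter.1 hc).2]), sum_const, this]
  simp

lemma hasSum_fin (n : ℕ) (t : Fin n → ℝ) (h0 : ∀ i, 0 ≤ t i) (h1 : ∀ i, t i < 1) :
    HasSum (fun g : Fin n → ℕ => ∏ i, t i ^ g i) (∏ i, (1 - t i)⁻¹) := by
  induction n with
  | zero => simpa using hasSum_unique (fun g : Fin 0 → ℕ => ∏ i, t i ^ g i)
  | succ n ih =>
    rw [← (Fin.consEquiv (fun _ : Fin (n + 1) => ℕ)).hasSum_iff, Fin.prod_univ_succ]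
    have e1 := hasSum_geometric_of_lt_one (h0 0) (h1 0)
    have e2 := ih (fun i => t i.succ) (fun i => h0 _) (fun i => h1 _)
    have p1 : (0 : ℕ → ℝ) ≤ fun k : ℕ => t 0 ^ k := fun k => pow_nonneg (h0 0) k
    have p2 : (0 : (Fin n → ℕ) → ℝ) ≤ fun g : Fin n → ℕ => ∏ i, t i.succ ^ g i :=
      fun g => prod_nonneg fun i _ => pow_nonneg (h0 _) _
    have e4 := Summable.mul_of_nonneg e1.summable e2.summable p1 p2
    have e3 := HasSum.mul e1 e2 e4
    have : ((fun g : Fin (n + 1) → ℕ => ∏ i, t i ^ g i) ∘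
        (Fin.consEquiv (fun _ : Fin (n + 1) => ℕ))) =
        fun p : ℕ × (Fin n → ℕ) => t 0 ^ p.1 * ∏ i, t i.succ ^ p.2 i := by
      funext p
      simp [Fin.consEquiv, Fin.prod_univ_succ]
    rw [this]
    exact e3

lemma hasSum_fintype {ι : Type*} [Fintype ι] (t : ι → ℝ) (h0 : ∀ i, 0 ≤ t i)
    (h1 : ∀ i, t i < 1) :
    HasSum (fun g : ι → ℕ => ∏ i, t i ^ g i) (∏ i, (1 - t i)⁻¹) := by
  have e := Fintype.equivFin ι
  have := hasSum_fin _ (fun i => t (e.symm i)) (fun i => h0 _) (fun i => h1 _)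
  rw [← (Equiv.arrowCongr e.symm (Equiv.refl ℕ)).hasSum_iff]
  convert this using 1
  · funext g
    simp only [Function.comp]
    rw [← e.symm.prod_comp]
    simp
  · rw [← e.symm.prod_comp]

lemma hasSum_multiset {ι : Type*} [Fintype ι] (t : ι → ℝ) (h0 : ∀ i, 0 ≤ t i)
    (h1 : ∀ i, t i < 1) :
    HasSum (fun s : Multiset ι => (s.map t).prod) (∏ i, (1 - t i)⁻¹) := by
  classical
  have := hasSum_fintype t h0 h1
  rw [← (Multiset.toFinsupp.toEquiv.trans Finsupp.equivFunOnFinite).hasSum_iff] at this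
  convert this using 1
  funext s
  rw [prod_multiset_map_count]
  simp only [Function.comp, Equiv.trans_apply, Finsupp.equivFunOnFinite_apply]
  apply prod_subset (subset_univ _)
  intro i _ hi
  rw [Multiset.mem_toFinset] at hi
  simp [Multiset.count_eq_zero_of_notMem hi]

open Classical in
lemma hasSum_indic (E : Finset T) (t : T → ℝ) (h0 : ∀ i, 0 ≤ t i) (h1 : ∀ i, t i < 1) :
    HasSum (fun s : Multiset T => if ∀ d ∈ s, d ∈ E then (s.map t).prod else 0)
      (∏ i ∈ E, (1 - t i)⁻¹) := by
  have := hasSum_multiset (fun i : E => t i) (fun i => h0 _) (fun i => h1 _)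
  rw [prod_coe_sort E (fun i => (1 - t i)⁻¹)] at this
  rw [← (Multiset.map_injective (Subtype.val_injective (p := fun c => c ∈ E))).hasSum_iff]
  · convert this using 1
    funext s
    simp only [Function.comp]
    rw [if_pos, Multiset.map_map]
    · rfl
    · intro d hd
      obtain ⟨a, _, rfl⟩ := Multiset.mem_map.1 hd
      exact a.2
  · intro s hs
    apply if_neg
    intro h
    apply hs
    refine ⟨s.attach.map (fun d => ⟨d.1, h d.1 d.2⟩), ?_⟩
    rw [Multiset.map_map]
    exact Multiset.attach_map_val s

lemma prod_pow_w (x : ℝ) (s : Multiset T) :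
    (s.map (fun c => x ^ w c)).prod = x ^ (s.map w).sum := by
  induction s using Multiset.induction with
  | empty => simp
  | cons a s ih => simp [ih, pow_add]

open Classical in
/-- generating function of multisets with at least two elements, indexed by trees -/
lemma hasSum_two (E : Finset T) {x : ℝ} (h0 : 0 ≤ x) (h1 : x < 1) :
    HasSum (fun c : T => if (∀ d ∈ K c, d ∈ E) ∧ 2 ≤ Multiset.card (K c) then x ^ w c else 0)
      (∏ i ∈ E, (1 - x ^ w i)⁻¹ - (1 + ∑ c ∈ E, x ^ w c)) := by
  have hA := hasSum_indic E (fun c => x ^ w c) (fun c => by positivity)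
    (fun c => pow_lt_one₀ h0 h1 (by have := w_pos c; omega))
  simp only [prod_pow_w] at hA
  set f : Multiset T → ℝ := fun s => if ∀ d ∈ s, d ∈ E then x ^ (s.map w).sum else 0 with hf
  set Y : Finset (Multiset T) := insert 0 (E.image (fun c => {c})) with hY
  have hB : HasSum (fun s => if s ∈ Y then f s else 0) (1 + ∑ c ∈ E, x ^ w c) := by
    have := hasSum_sum_of_ne_finset_zero (L := .unconditional _) (f := fun s => if s ∈ Y then f s else 0) (s := Y)
      (fun s hs => if_neg hs)
    convert this using 1
    rw [sum_congr rfl (g := f) (fun s hs => if_pos hs), hY, sum_insert, sum_image]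
    · have z : f 0 = 1 := by simp [hf]
      change _ = f 0 + _
      rw [z]
      congr 1
      apply sum_congr rfl
      intro c hc
      simp [hf, hc]
    · intro a _ b _ hab
      simpa using hab
    · simp
  have hC := hA.sub hB
  rw [← (Equiv.ofBijective K ⟨K_inj, K_surj⟩).hasSum_iff] at hC
  refine Eq.mp ?_ hC
  congr 1
  funext c
  change (f (K c) - if K c ∈ Y then f (K c) else 0) = _
  symm
  have hYmem : K c ∈ Y ↔ K c = 0 ∨ ∃ d ∈ E, {d} = K c := by
    simp [hY]
  by_cases hE : ∀ d ∈ K c, d ∈ E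
  · by_cases h2 : 2 ≤ Multiset.card (K c)
    · rw [if_pos ⟨hE, h2⟩, if_neg, sub_zero, hf]
      · simp only
        rw [if_pos hE, w_of_two h2]
      · rw [hYmem]
        rintro (h | ⟨d, _, hd⟩)
        · simp [h] at h2
        · simp [← hd] at h2
    · rw [if_neg (fun h => h2 h.2), if_pos, sub_self]
      rw [hYmem]
      rcases Nat.lt_or_ge (Multiset.card (K c)) 1 with h | h
      · left; simpa using h
      · right
        obtain ⟨d, hd⟩ := Multiset.card_eq_one.1 (show Multiset.card (K c) = 1 by omega)
        exact ⟨d, hE d (by simp [hd]), hd.symm⟩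
  · rw [if_neg (fun h => hE h.1)]
    have : f (K c) = 0 := if_neg hE
    simp [this]

lemma S_facts (hS : S.IsHierarchy) (hm : 2 ≤ S.leaves) :
    2 ≤ Multiset.card (K (q S)) ∧ ∀ d ∈ K (q S), G S d := by
  have hcard : 2 ≤ Multiset.card (K (q S)) := by
    obtain ⟨l⟩ := S
    have h1 := (hier_node.1 hS).1
    have h2 : l.length ≠ 0 := by
      intro h
      rw [List.length_eq_zero_iff.1 h, leaves_node] at hm
      simp at hm
    rw [K_q]
    simp; omega
  refine ⟨hcard, ?_⟩
  -- small hierarchies avoid S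
  have small : ∀ t : RTree, t.IsHierarchy → t.leaves < S.leaves → Good S t := by
    apply rtree_ind
    intro l ih hh hl
    obtain ⟨h1, h2⟩ := hier_node.1 hh
    refine good_node.2 ⟨h1, ?_, fun h => by rw [leaves_iso _ _ h] at hl; omega⟩
    intro t ht
    apply ih t ht (h2 t ht)
    have : 2 ≤ Multiset.card (K (q (.node l))) := by
      have : l.length ≠ 0 := by
        intro h; simp [List.length_eq_zero_iff.1 h] at ht
      rw [K_q]; simp; omega
    have := w_lt this (d := q t) (by rw [K_q]; simpa using ⟨t, ht, rfl⟩)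
    rw [w_q, w_q] at this
    omega
  intro d hd
  have hlt := w_lt hcard hd
  obtain ⟨l⟩ := S
  rw [K_q] at hd
  simp only [Multiset.mem_coe, List.mem_map] at hd
  obtain ⟨t, ht, rfl⟩ := hd
  exact small t ((hier_node.1 hS).2 t ht) hlt

lemma G_c0 (hm : 2 ≤ S.leaves) : G S c0 := by
  rw [G_iff, K_c0]
  refine ⟨by simp, by simp, ?_⟩
  intro h
  have := congrArg w h
  rw [w_c0, w_q] at this
  omega

open Classical in
noncomputable def X (S : RTree) (M : ℕ) : Finset T := insert (q S) ((F S M).erase c0)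

lemma sum_X (hm : 2 ≤ S.leaves) {M : ℕ} (hM : 1 ≤ M) (x : ℝ) :
    ∑ c ∈ X S M, x ^ w c = hN (fun n => (avoidCount S n : ℝ)) M x - x + x ^ S.leaves := by
  classical
  unfold X
  rw [sum_insert]
  · have hc : c0 ∈ F S M := mem_F.2 ⟨G_c0 hm, by rw [w_c0]; exact hM⟩
    have := sum_erase_add (F S M) (fun c => x ^ w c) hc
    rw [w_c0, pow_one] at this
    unfold hN
    rw [sum_F, ← this, w_q]
    ring
  · intro h
    have := (mem_F.1 (mem_of_mem_erase h)).1
    exact ((G_iff _ _).1 this).2.2 rfl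

lemma mem_X_props (hS : S.IsHierarchy) (hm : 2 ≤ S.leaves) {M : ℕ} {c : T} (hc : c ∈ X S M) :
    (∀ d ∈ K c, G S d) ∧ 2 ≤ Multiset.card (K c) := by
  classical
  unfold X at hc
  rcases mem_insert.1 hc with rfl | hc
  · exact (S_facts hS hm).symm
  · obtain ⟨h1, h2⟩ := mem_erase.1 hc
    obtain ⟨h3, h4, _⟩ := (G_iff _ _).1 (mem_F.1 h2).1
    refine ⟨h4, ?_⟩
    have : Multiset.card (K c) ≠ 0 := by
      rw [Ne, Multiset.card_eq_zero, K_eq_zero]; exact h1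
    omega

lemma mem_X_of {M : ℕ} {c : T} (h1 : ∀ d ∈ K c, G S d) (h2 : 2 ≤ Multiset.card (K c))
    (h3 : w c ≤ M) : c ∈ X S M := by
  classical
  unfold X
  by_cases h : c = q S
  · exact mem_insert.2 (Or.inl h)
  · refine mem_insert.2 (Or.inr (mem_erase.2 ⟨?_, mem_F.2 ⟨(G_iff _ _).2 ⟨by omega, h1, h⟩, h3⟩⟩))
    rintro rfl
    simp [K_c0] at h2

lemma QN_prod (S : RTree) (N : ℕ) {x : ℝ} (h0 : 0 ≤ x) (h1 : x < 1) :
    QN (fun n => (avoidCount S n : ℝ)) N x = ∏ c ∈ F S N, (1 - x ^ w c)⁻¹ := by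
  unfold QN
  rw [sum_F S N (fun n => -Real.log (1 - x ^ n)), Real.exp_sum]
  apply prod_congr rfl
  intro c _
  have : x ^ w c < 1 := pow_lt_one₀ h0 h1 (by have := w_pos c; omega)
  rw [Real.exp_neg, Real.exp_log (by linarith)]

lemma hyp (hS : S.IsHierarchy) (hm : 2 ≤ S.leaves) :
    Hyp (fun n => (avoidCount S n : ℝ)) S.leaves := by
  classical
  have z : avoidCount S 0 = 0 := by
    rw [avoidCount_eq]
    have : IsEmpty {c : T // G S c ∧ w c = 0} :=
      ⟨fun c => by have := w_pos c.1; have := c.2.2; omega⟩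
    exact Nat.card_of_isEmpty
  have hNF : ∀ N x, hN (fun n => (avoidCount S n : ℝ)) N x = ∑ c ∈ F S N, x ^ w c := fun N x =>
    sum_F S N (fun n => x ^ n)
  refine ⟨fun n => Nat.cast_nonneg _, by simp [z], ?_, by omega, ?_, ?_⟩
  · have : avoidCount S 1 = 1 := by
      rw [avoidCount_eq, Nat.card_eq_one_iff_unique]
      refine ⟨⟨?_⟩, ⟨⟨c0, G_c0 hm, w_c0⟩⟩⟩
      have key : ∀ c : T, G S c → w c = 1 → c = c0 := by
        intro c h1 h2
        rw [← K_eq_zero, ← Multiset.card_eq_zero]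
        have h3 := ((G_iff _ _).1 h1).1
        by_contra h
        have h4 : 2 ≤ Multiset.card (K c) := by omega
        have := sum_w_ge (K c)
        rw [w_of_two h4] at h2
        omega
      rintro ⟨c, hc⟩ ⟨d, hd⟩
      exact Subtype.ext ((key c hc.1 hc.2).trans (key d hd.1 hd.2).symm)
    simp [this]
  · intro N x hN' h0 h1
    have hs := hasSum_two (F S N) h0 h1
    rw [← QN_prod S N h0 h1, ← hNF] at hs
    have := sum_le_hasSum (X S (N + 1)) (fun c _ => by positivity) hs
    rw [sum_congr rfl (g := fun c => x ^ w c), sum_X hm (by omega)] at this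
    · linarith
    · intro c hc
      obtain ⟨k1, k2⟩ := mem_X_props hS hm hc
      apply if_pos
      refine ⟨fun d hd => mem_F.2 ⟨k1 d hd, ?_⟩, k2⟩
      have k3 := w_lt k2 hd
      have k4 : w c ≤ N + 1 := by
        unfold X at hc
        rcases mem_insert.1 hc with rfl | hc
        · rw [w_q]; exact hN'
        · exact (mem_F.1 (mem_of_mem_erase hc)).2
      omega
  · intro N x h0 h1 hsum
    have hs := hasSum_two (F S N) h0 h1
    rw [← QN_prod S N h0 h1, ← hNF] at hs
    have key := hasSum_le_of_sum_le hs (c := HH (fun n => (avoidCount S n : ℝ)) x - x + x ^ S.leaves) ?_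
    · linarith
    intro Z
    set M := Z.sup w + 1
    rw [← sum_filter]
    have e1 : ∑ c ∈ Z with (∀ d ∈ K c, d ∈ F S N) ∧ 2 ≤ Multiset.card (K c), x ^ w c
        ≤ ∑ c ∈ X S M, x ^ w c := by
      apply sum_le_sum_of_subset_of_nonneg
      · intro c hc
        obtain ⟨k1, k2, k3⟩ := mem_filter.1 hc
        have := le_sup (f := w) k1
        exact mem_X_of (fun d hd => (mem_F.1 (k2 d hd)).1) k3 (by omega)
      · intro c _ _; positivity
    rw [sum_X hm (by omega)] at e1
    have e2 : hN (fun n => (avoidCount S n : ℝ)) M x ≤ HH (fun n => (avoidCount S n : ℝ)) x :=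
      hsum.sum_le_tsum _ fun n _ => by positivity
    linarith

end AvoidAux

/-- For a hierarchy `S` of size `m ≥ 2` with avoiding counts `H⁽ᵐ⁾ₙ` and radius of
convergence `ρₘ`, one has `∑ₙ H⁽ᵐ⁾ₙ ρₘⁿ = (1 + ρₘ - ρₘ^m) / 2`. -/
theorem avoiding_series_value_at_radius {m : ℕ} (hm : 2 ≤ m) (S : RTree)
    (hS : S.IsHierarchy) (hSm : S.leaves = m) :
    (∑' n : ℕ, (avoidCount S n : ℝ) *
        ((radiusOf fun n => (avoidCount S n : ℝ)).toReal) ^ n) =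
      (1 + (radiusOf fun n => (avoidCount S n : ℝ)).toReal -
        ((radiusOf fun n => (avoidCount S n : ℝ)).toReal) ^ m) / 2 := by
  subst hSm
  exact AvoidAux.main_radius _ _ (AvoidAux.hyp hS hm)
end

section
/- Fix m ≥ 2 and a hierarchy S of size m, let H^{(m)}_n denote the number of isomorphism classes of hierarchies of size n containing no subhierarchy isomorphic to S, let H^{(m)}(x) = Σ_{n≥1} H^{(m)}_n xⁿ (as a function on its interval of convergence), and let ρ_m be its radius of convergence. Then exp( Σ_{k=1}^∞ (1/k) H^{(m)}(ρ_m^k) ) = 2, where H^{(m)}(ρ_m) denotes the convergent sum Σ_{n≥1} H^{(m)}_n ρ_mⁿ. -/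
open scoped ENNReal

namespace Hier

/-- removing one letter -/
def splitEquiv {A : Type*} [DecidableEq A] (a : A) : ℕ × {s : Multiset A // a ∉ s} ≃ Multiset A where
  toFun p := Multiset.replicate p.1 a + p.2.1
  invFun s := (s.count a, ⟨s.filter (· ≠ a), by simp⟩)
  left_inv := by
    rintro ⟨n, s, hs⟩
    ext1
    · simp [Multiset.count_eq_zero_of_notMem hs]
    · simp only [Subtype.mk.injEq]
      rw [Multiset.filter_add, Multiset.filter_eq_nil.2, zero_add, Multiset.filter_eq_self.2]
      · intro b hb h; exact hs (h ▸ hb)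
      · intro b hb; simp [Multiset.eq_of_mem_replicate hb]
  right_inv := by
    intro s
    simp only
    rw [← Multiset.filter_eq']
    exact Multiset.filter_add_not _ s

open Classical in
theorem tsum_split {A : Type*} (a : A) (w : A → ℝ≥0∞) :
    ∑' s : Multiset A, (s.map w).prod
      = (1 - w a)⁻¹ * ∑' s : Multiset A, (s.map (Function.update w a 0)).prod := by
  rw [← (splitEquiv a).tsum_eq, ENNReal.tsum_prod']
  have h1 : ∀ n (s : {s : Multiset A // a ∉ s}),
      (((splitEquiv a) (n, s)).map w).prod = w a ^ n * (s.1.map w).prod := by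
    intro n s
    simp [splitEquiv]
  simp only [h1]
  simp only [ENNReal.tsum_mul_left, ENNReal.tsum_mul_right, ENNReal.tsum_geometric]
  congr 1
  have h2 : ∀ s : Multiset A, (s.map (Function.update w a 0)).prod
      = Set.indicator {s : Multiset A | a ∉ s} (fun s => (s.map w).prod) s := by
    intro s
    by_cases hs : a ∈ s
    · rw [Set.indicator_of_notMem (by simpa using hs)]
      apply Multiset.prod_eq_zero
      rw [Multiset.mem_map]
      exact ⟨a, hs, by simp⟩
    · rw [Set.indicator_of_mem (by simpa using hs)]
      congr 1
      apply Multiset.map_congr rfl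
      intro b hb
      rw [Function.update_of_ne]
      rintro rfl; exact hs hb
  simp only [h2]
  rw [← tsum_subtype]
  rfl

theorem tsum_zero_weight {A : Type*} :
    ∑' s : Multiset A, (s.map (fun _ => (0:ℝ≥0∞))).prod = 1 := by
  rw [tsum_eq_single 0]
  · simp
  · intro s hs
    obtain ⟨a, ha⟩ := Multiset.exists_mem_of_ne_zero hs
    apply Multiset.prod_eq_zero
    rw [Multiset.mem_map]
    exact ⟨a, ha, rfl⟩

open Classical in
theorem tsum_finset {A : Type*} (F : Finset A) (w : A → ℝ≥0∞) :
    ∑' s : Multiset A, (s.map (fun a => if a ∈ F then w a else 0)).prod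
      = ∏ a ∈ F, (1 - w a)⁻¹ := by
  induction F using Finset.induction_on with
  | empty => simpa using tsum_zero_weight
  | insert a F ha ih =>
    rw [tsum_split a, Finset.prod_insert ha, ← ih]
    simp only [Finset.mem_insert_self, if_true]
    congr 2
    ext s
    congr 2
    ext b
    by_cases hb : b = a
    · subst hb; simp [ha]
    · simp [hb]

open Classical in
theorem tsum_multiset {A : Type*} (w : A → ℝ) (h0 : ∀ a, 0 ≤ w a) (h1 : ∀ a, w a < 1)
    (hs : Summable fun a => -Real.log (1 - w a)) :
    ∑' s : Multiset A, (s.map (fun a => ENNReal.ofReal (w a))).prod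
      = ENNReal.ofReal (Real.exp (∑' a, -Real.log (1 - w a))) := by
  have hF : ∀ F : Finset A, ∏ a ∈ F, (1 - ENNReal.ofReal (w a))⁻¹
      = ENNReal.ofReal (Real.exp (∑ a ∈ F, -Real.log (1 - w a))) := by
    intro F
    rw [Real.exp_sum, ENNReal.ofReal_prod_of_nonneg (fun _ _ => (Real.exp_pos _).le)]
    apply Finset.prod_congr rfl
    intro a _
    have : 0 < 1 - w a := by linarith [h1 a]
    rw [Real.exp_neg, Real.exp_log this, ENNReal.ofReal_inv_of_pos this,
      ENNReal.ofReal_sub _ (h0 a), ENNReal.ofReal_one]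
  have hnn : ∀ a, 0 ≤ -Real.log (1 - w a) := by
    intro a
    have := Real.log_nonpos (x := 1 - w a) (by linarith [h1 a]) (by linarith [h0 a])
    linarith
  apply le_antisymm
  · rw [ENNReal.tsum_eq_iSup_sum]
    apply iSup_le
    intro X
    let F : Finset A := X.biUnion (fun s => s.toFinset)
    calc ∑ s ∈ X, (s.map (fun a => ENNReal.ofReal (w a))).prod
        = ∑ s ∈ X, (s.map (fun a => if a ∈ F then ENNReal.ofReal (w a) else 0)).prod := by
          apply Finset.sum_congr rfl
          intro s hsX
          congr 1
          apply Multiset.map_congr rfl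
          intro a ha
          rw [if_pos]
          simp only [F, Finset.mem_biUnion, Multiset.mem_toFinset]
          exact ⟨s, hsX, ha⟩
      _ ≤ _ := ENNReal.sum_le_tsum X
      _ = _ := tsum_finset F _
      _ = _ := hF F
      _ ≤ _ := by
          apply ENNReal.ofReal_le_ofReal
          apply Real.exp_le_exp.2
          exact hs.sum_le_tsum F (fun a _ => hnn a)
  · have ht : Filter.Tendsto (fun F : Finset A =>
        ENNReal.ofReal (Real.exp (∑ a ∈ F, -Real.log (1 - w a)))) Filter.atTop
        (nhds (ENNReal.ofReal (Real.exp (∑' a, -Real.log (1 - w a))))) :=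
      ENNReal.tendsto_ofReal ((Real.continuous_exp.tendsto _).comp hs.hasSum)
    apply le_of_tendsto' ht
    intro F
    rw [← hF, ← tsum_finset]
    apply ENNReal.tsum_le_tsum
    intro s
    apply Multiset.prod_map_le_prod_map₀ _ _ (fun _ _ => zero_le) 
    intro a _
    split_ifs
    · exact le_rfl
    · exact zero_le


structure Data (A : Type) (m : ℕ) where
  size : A → ℕ
  j : Option A → Multiset A
  inj : Function.Injective j
  range : ∀ s, s.card ≠ 1 → ∃ o, j o = s
  card_ne : ∀ o, (j o).card ≠ 1
  size_pos : ∀ a, 1 ≤ size a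
  hm : 2 ≤ m
  size_zero : ∀ o, j o = 0 → o.elim m size = 1
  size_sum : ∀ o, j o ≠ 0 → o.elim m size = ((j o).map size).sum

namespace Data
variable {A : Type} {m : ℕ} (D : Data A m)

/-- weight -/
def W (x : ℝ) (a : A) : ℝ := x ^ D.size a

/-- truncated weight -/
noncomputable def wN (x : ℝ) (N : ℕ) (a : A) : ℝ := if D.size a ≤ N then x ^ D.size a else 0

open Classical in
theorem tsum_decomp (w : A → ℝ≥0∞) :
    ∑' s : Multiset A, (s.map w).prod
      = ∑' a, w a + ∑' o, ((D.j o).map w).prod := by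
  have h1 : ∑' s : Multiset A, (s.map w).prod
      = ∑' s : {s : Multiset A | s.card = 1}, (s.1.map w).prod
        + ∑' s : ({s : Multiset A | s.card = 1}ᶜ : Set _), (s.1.map w).prod :=
    (ENNReal.summable.tsum_add_tsum_compl ENNReal.summable).symm
  rw [h1]
  congr 1
  · let e : A ≃ {s : Multiset A | s.card = 1} := Equiv.ofBijective
      (fun a => ⟨{a}, by simp⟩) ⟨by intro a b h; simpa using h, by
        rintro ⟨s, hs⟩
        obtain ⟨a, rfl⟩ := Multiset.card_eq_one.1 hs
        exact ⟨a, rfl⟩⟩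
    rw [← e.tsum_eq]
    apply tsum_congr
    intro a
    change (Multiset.map w {a}).prod = w a
    simp
  · let e : Option A ≃ ({s : Multiset A | s.card = 1}ᶜ : Set _) := Equiv.ofBijective
      (fun o => ⟨D.j o, D.card_ne o⟩) ⟨by intro a b h; exact D.inj (by simpa using h), by
        rintro ⟨s, hs⟩
        obtain ⟨o, rfl⟩ := D.range s hs
        exact ⟨o, rfl⟩⟩
    rw [← e.tsum_eq]
    rfl

theorem exists_zero : ∃ a, D.j (some a) = 0 := by
  obtain ⟨o, ho⟩ := D.range 0 (by simp)
  cases o with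
  | none => have := D.size_zero _ ho; have := D.hm; simp at *; omega
  | some a => exact ⟨a, ho⟩

theorem tsum_option (f : Option A → ℝ≥0∞) : ∑' o, f o = f none + ∑' a, f (some a) := by
  rw [← (Equiv.optionEquivSumPUnit.{0} A).symm.tsum_eq,
    ENNReal.summable.tsum_sum ENNReal.summable, add_comm]
  simp

theorem prod_pow (x : ℝ≥0∞) (s : Multiset A) :
    (s.map (fun a => x ^ D.size a)).prod = x ^ (s.map D.size).sum := by
  induction s using Multiset.induction_on with
  | empty => simp
  | cons a s ih => simp [ih, pow_add]

open Classical in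
theorem full_enn (x : ℝ≥0∞) :
    ∑' a, x ^ D.size a + x ^ m + 1 + ∑' a, x ^ D.size a
      = x + ∑' s : Multiset A, (s.map (fun a => x ^ D.size a)).prod := by
  obtain ⟨a0, h0⟩ := D.exists_zero
  rw [D.tsum_decomp]
  have key : ∑' o : Option A, (x ^ (o.elim m D.size) + if o = some a0 then 1 else 0)
      = ∑' o : Option A, (((D.j o).map (fun a => x ^ D.size a)).prod + if o = some a0 then x else 0) := by
    apply tsum_congr
    intro o
    by_cases ho : o = some a0
    · subst ho
      simp [h0]
      have := D.size_zero _ h0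
      simp at this
      simp [this, add_comm]
    · simp only [ho, if_false, add_zero]
      rw [prod_pow, D.size_sum]
      intro h
      exact ho (D.inj (h.trans h0.symm))
  rw [ENNReal.tsum_add, ENNReal.tsum_add, tsum_ite_eq, tsum_ite_eq, tsum_option] at key
  simp only [Option.elim] at key
  calc _ = (x ^ m + ∑' a, x ^ D.size a + 1) + ∑' a, x ^ D.size a := by ring
    _ = _ := by rw [key]; ring

theorem size_lt_of_mem {o : Option A} {a : A} (ha : a ∈ D.j o) :
    D.size a + 1 ≤ o.elim m D.size := by
  have hne : D.j o ≠ 0 := by rintro h; rw [h] at ha; simp at ha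
  rw [D.size_sum o hne]
  obtain ⟨t, ht⟩ := Multiset.exists_cons_of_mem ha
  have hc := D.card_ne o
  rw [ht] at hc ⊢
  have : t ≠ 0 := by rintro rfl; simp at hc
  obtain ⟨b, hb⟩ := Multiset.exists_mem_of_ne_zero this
  obtain ⟨u, rfl⟩ := Multiset.exists_cons_of_mem hb
  have := D.size_pos b
  simp
  omega

open Classical in
theorem trunc_enn (x : ℝ≥0∞) (N : ℕ) :
    (∑' a, if D.size a ≤ N + 1 then x ^ D.size a else 0)
      + (if m ≤ N + 1 then x ^ m else 0) + 1 + (∑' a, if D.size a ≤ N then x ^ D.size a else 0)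
      ≤ x + ∑' s : Multiset A, (s.map (fun a => if D.size a ≤ N then x ^ D.size a else 0)).prod := by
  obtain ⟨a0, h0⟩ := D.exists_zero
  rw [D.tsum_decomp]
  have key : ∑' o : Option A, ((if o.elim m D.size ≤ N + 1 then x ^ (o.elim m D.size) else 0)
        + if o = some a0 then 1 else 0)
      ≤ ∑' o : Option A, (((D.j o).map (fun a => if D.size a ≤ N then x ^ D.size a else 0)).prod
        + if o = some a0 then x else 0) := by
    apply ENNReal.tsum_le_tsum
    intro o
    by_cases ho : o = some a0
    · subst ho
      simp [h0]
      have := D.size_zero _ h0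
      simp at this
      simp [this, add_comm]
    · simp only [ho, if_false, add_zero]
      split_ifs with hN
      · rw [D.size_sum, ← prod_pow]
        · apply le_of_eq
          congr 1
          apply Multiset.map_congr rfl
          intro a ha
          rw [if_pos]
          have := D.size_lt_of_mem ha
          omega
        · intro h
          exact ho (D.inj (h.trans h0.symm))
      · exact zero_le
  rw [ENNReal.tsum_add, ENNReal.tsum_add, tsum_ite_eq, tsum_ite_eq, tsum_option] at key
  simp only [Option.elim] at key
  have key' : ((if m ≤ N + 1 then x ^ m else 0) + ∑' a, if D.size a ≤ N + 1 then x ^ D.size a else 0) + 1 ≤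
    ∑' o, ((D.j o).map (fun a => if D.size a ≤ N then x ^ D.size a else 0)).prod + x := key
  refine le_trans (le_of_eq ?_) ((add_le_add_left key' (∑' a, if D.size a ≤ N then x ^ D.size a else 0)).trans (le_of_eq ?_)) <;> abel

theorem log_summable {w : A → ℝ} {c : ℝ} (hc : c < 1) (h0 : ∀ a, 0 ≤ w a) (h1 : ∀ a, w a ≤ c)
    (hs : Summable w) : Summable fun a => -Real.log (1 - w a) := by
  apply Summable.of_nonneg_of_le _ _ (hs.mul_left (1 - c)⁻¹)
  · intro a
    have := Real.log_nonpos (x := 1 - w a) (by linarith [h1 a]) (by linarith [h0 a])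
    linarith
  · intro a
    have h2 : 0 < 1 - w a := by linarith [h1 a]
    have := Real.one_sub_inv_le_log_of_pos h2
    have h3 : (1 - w a)⁻¹ ≤ (1 - c)⁻¹ := inv_anti₀ (by linarith) (by linarith [h1 a])
    have h4 : (1 - w a)⁻¹ - 1 = (1 - w a)⁻¹ * w a := by field_simp; ring
    calc _ ≤ (1 - w a)⁻¹ * w a := by linarith
      _ ≤ _ := mul_le_mul_of_nonneg_right h3 (h0 a)

theorem W_nonneg {x : ℝ} (hx : 0 ≤ x) (a : A) : 0 ≤ D.W x a := pow_nonneg hx _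
theorem W_le {x : ℝ} (hx : 0 ≤ x) (hx1 : x ≤ 1) (a : A) : D.W x a ≤ x := by
  have := pow_le_pow_of_le_one hx hx1 (D.size_pos a)
  simpa [W] using this
theorem wN_nonneg {x : ℝ} (hx : 0 ≤ x) (N) (a : A) : 0 ≤ D.wN x N a := by
  unfold wN; split_ifs
  · positivity
  · exact le_rfl
theorem wN_le_W {x : ℝ} (hx : 0 ≤ x) (N) (a : A) : D.wN x N a ≤ D.W x a := by
  unfold wN W; split_ifs
  · exact le_rfl
  · positivity

/-- the log sum -/
noncomputable def T (x : ℝ) : ℝ := ∑' a, -Real.log (1 - D.W x a)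

theorem full {x : ℝ} (hx : 0 < x) (hx1 : x < 1) (hs : Summable (D.W x)) :
    Real.exp (D.T x) + x = 2 * ∑' a, D.W x a + x ^ m + 1 := by
  have h := D.full_enn (ENNReal.ofReal x)
  have hW : ∀ a, (ENNReal.ofReal x) ^ D.size a = ENNReal.ofReal (D.W x a) := fun a => by
    rw [W, ENNReal.ofReal_pow hx.le]
  simp only [hW] at h
  rw [tsum_multiset (D.W x) (D.W_nonneg hx.le) (fun a => (D.W_le hx.le hx1.le a).trans_lt hx1)
    (log_summable hx1 (D.W_nonneg hx.le) (D.W_le hx.le hx1.le) hs),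
    ← ENNReal.ofReal_tsum_of_nonneg (D.W_nonneg hx.le) hs, ← ENNReal.ofReal_pow hx.le,
    ← ENNReal.ofReal_one] at h
  have hn : 0 ≤ ∑' a, D.W x a := tsum_nonneg (D.W_nonneg hx.le)
  have hp := pow_pos hx m
  rw [← ENNReal.ofReal_add (by positivity) (by positivity),
    ← ENNReal.ofReal_add (by positivity) (by positivity),
    ← ENNReal.ofReal_add (by positivity) (by positivity),
    ← ENNReal.ofReal_add (by positivity) (by positivity),
    ENNReal.ofReal_eq_ofReal_iff (by positivity) (by positivity)] at h
  unfold T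
  linarith

theorem trunc {x : ℝ} (hx : 0 < x) (hx1 : x < 1) (N : ℕ) (hs : Summable (D.wN x N)) :
    Summable (D.wN x (N + 1)) ∧
    ∑' a, D.wN x (N + 1) a + (if m ≤ N + 1 then x ^ m else 0) + 1 + ∑' a, D.wN x N a
      ≤ x + Real.exp (∑' a, -Real.log (1 - D.wN x N a)) := by
  have h := D.trunc_enn (ENNReal.ofReal x) N
  have hW : ∀ N a, (if D.size a ≤ N then (ENNReal.ofReal x) ^ D.size a else 0)
      = ENNReal.ofReal (D.wN x N a) := fun N a => by
    rw [wN]; split_ifs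
    · rw [ENNReal.ofReal_pow hx.le]
    · simp
  have hle : ∀ a, D.wN x N a ≤ x := fun a => (D.wN_le_W hx.le N a).trans (D.W_le hx.le hx1.le a)
  simp only [hW] at h
  rw [tsum_multiset (D.wN x N) (D.wN_nonneg hx.le N) (fun a => (hle a).trans_lt hx1)
    (log_summable hx1 (D.wN_nonneg hx.le N) hle hs)] at h
  have hm' : (if m ≤ N + 1 then (ENNReal.ofReal x) ^ m else 0)
      = ENNReal.ofReal (if m ≤ N + 1 then x ^ m else 0) := by
    split_ifs
    · rw [ENNReal.ofReal_pow hx.le]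
    · simp
  have hq : 0 ≤ (if m ≤ N + 1 then x ^ m else 0) := by split_ifs <;> positivity
  rw [hm'] at h
  have hs' : Summable (D.wN x (N + 1)) := by
    have : ∑' a, ENNReal.ofReal (D.wN x (N + 1) a) ≠ ⊤ := by
      apply ne_top_of_le_ne_top _ (le_trans _ h)
      · exact ENNReal.add_ne_top.2 ⟨ENNReal.ofReal_ne_top, ENNReal.ofReal_ne_top⟩
      · rw [add_assoc, add_assoc]; exact le_self_add
    have := ENNReal.summable_toReal this
    refine this.congr fun a => ?_
    rw [ENNReal.toReal_ofReal (D.wN_nonneg hx.le _ a)]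
  refine ⟨hs', ?_⟩
  rw [← ENNReal.ofReal_tsum_of_nonneg (D.wN_nonneg hx.le _) hs,
    ← ENNReal.ofReal_tsum_of_nonneg (D.wN_nonneg hx.le _) hs',
    ← ENNReal.ofReal_one] at h
  have hn : 0 ≤ ∑' a, D.wN x N a := tsum_nonneg (D.wN_nonneg hx.le N)
  have hn' : 0 ≤ ∑' a, D.wN x (N+1) a := tsum_nonneg (D.wN_nonneg hx.le (N+1))
  rw [← ENNReal.ofReal_add (by positivity) (by positivity),
    ← ENNReal.ofReal_add (by positivity) (by positivity),
    ← ENNReal.ofReal_add (by positivity) (by positivity),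
    ← ENNReal.ofReal_add (by positivity) (by positivity),
    ENNReal.ofReal_le_ofReal_iff (by positivity)] at h
  exact h

theorem summable_of_trunc {x c : ℝ} (hx : 0 ≤ x) (N0 : ℕ)
    (h : ∀ N, N0 ≤ N → Summable (D.wN x N) ∧ ∑' a, D.wN x N a ≤ c) : Summable (D.W x) := by
  apply summable_of_sum_le (c := c) (D.W_nonneg hx)
  intro F
  obtain ⟨h1, h2⟩ := h (max N0 (F.sup D.size)) (le_max_left _ _)
  refine le_trans (le_of_eq ?_) ((h1.sum_le_tsum F fun a _ => D.wN_nonneg hx _ a).trans h2)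
  apply Finset.sum_congr rfl
  intro a ha
  rw [W, wN, if_pos]
  exact (Finset.le_sup ha).trans (le_max_right _ _)

/-- the remainder -/
noncomputable def phi (u : ℝ) : ℝ := -Real.log (1 - u) - u

theorem phi_mono {u v : ℝ} (hu : 0 ≤ u) (huv : u ≤ v) (hv : v < 1) : phi u ≤ phi v := by
  unfold phi
  have h1 : 0 < 1 - u := by linarith
  have h2 : 0 < 1 - v := by linarith
  have h3 := Real.log_le_sub_one_of_pos (x := (1 - v) / (1 - u)) (by positivity)
  rw [Real.log_div h2.ne' h1.ne'] at h3
  have h4 : (1 - v) / (1 - u) - 1 = -((v - u) / (1 - u)) := by field_simp; ring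
  have h5 : v - u ≤ (v - u) / (1 - u) := by
    rw [le_div_iff₀ h1]; nlinarith
  linarith

theorem phi_nonneg {u : ℝ} (hu : 0 ≤ u) (hu1 : u < 1) : 0 ≤ phi u := by
  have := phi_mono le_rfl hu hu1
  simpa [phi] using this

theorem phi_le {u c : ℝ} (hu : 0 ≤ u) (huc : u ≤ c) (hc : c < 1) : phi u ≤ (1 - c)⁻¹ * u ^ 2 := by
  unfold phi
  have h2 : 0 < 1 - u := by linarith
  have := Real.one_sub_inv_le_log_of_pos h2
  have h3 : (1 - u)⁻¹ ≤ (1 - c)⁻¹ := inv_anti₀ (by linarith) (by linarith)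
  have h4 : (1 - u)⁻¹ - 1 - u = (1 - u)⁻¹ * u ^ 2 := by field_simp; ring
  calc _ ≤ (1 - u)⁻¹ * u ^ 2 := by linarith
    _ ≤ _ := mul_le_mul_of_nonneg_right h3 (by positivity)

theorem phi_contOn : ContinuousOn phi (Set.Iio 1) := by
  unfold phi
  apply ContinuousOn.sub _ continuousOn_id
  apply ContinuousOn.neg
  apply ContinuousOn.log (by fun_prop)
  intro x hx
  simp at hx
  linarith

theorem exp_quad {u : ℝ} (h0 : 0 ≤ u) (h1 : u ≤ 1) : Real.exp u ≤ 1 + u + u ^ 2 := by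
  have := Real.abs_exp_sub_one_sub_id_le (x := u) (by rw [abs_le]; constructor <;> linarith)
  have := (abs_le.1 this).2
  linarith

theorem summable_tenth : Summable (D.W (1/10)) := by
  apply D.summable_of_trunc (c := 1/5) (by norm_num) 0
  intro N _
  induction N with
  | zero =>
    have : D.wN (1/10) 0 = fun _ => 0 := by
      ext a
      have := D.size_pos a
      rw [wN, if_neg (by omega)]
    rw [this]
    exact ⟨summable_zero, by simp⟩
  | succ N ih =>
    obtain ⟨hs, hb⟩ := ih (by omega)
    have hx : (0:ℝ) < 1/10 := by norm_num
    obtain ⟨hs', h⟩ := D.trunc hx (by norm_num) N hs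
    refine ⟨hs', ?_⟩
    have hle : ∀ a, D.wN (1/10) N a ≤ 1/10 := fun a =>
      (D.wN_le_W hx.le N a).trans (D.W_le hx.le (by norm_num) a)
    have hl := log_summable (by norm_num) (D.wN_nonneg hx.le N) hle hs
    set hN := ∑' a, D.wN (1/10) N a with hNdef
    have hn : 0 ≤ hN := tsum_nonneg (D.wN_nonneg hx.le N)
    have hL : ∑' a, -Real.log (1 - D.wN (1/10) N a) ≤ 10/9 * hN := by
      rw [hNdef, ← tsum_mul_left]
      apply hl.tsum_le_tsum _ (hs.mul_left _)
      intro a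
      have h1 := phi_le (D.wN_nonneg hx.le N a) (hle a) (by norm_num)
      have h2 := hle a
      have h3 := D.wN_nonneg hx.le N a
      unfold phi at h1
      nlinarith
    have hq : 0 ≤ (if m ≤ N + 1 then ((1:ℝ)/10) ^ m else 0) := by split_ifs <;> positivity
    have he := Real.exp_le_exp.2 hL
    have he2 := exp_quad (u := 10/9 * hN) (by positivity) (by linarith)
    nlinarith

theorem T_eq {x : ℝ} (hx : 0 ≤ x) (hx1 : x < 1) (hs : Summable (D.W x)) :
    Summable (fun a => phi (D.W x a)) ∧ D.T x = ∑' a, D.W x a + ∑' a, phi (D.W x a) := by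
  have hl := log_summable hx1 (D.W_nonneg hx) (D.W_le hx hx1.le) hs
  have h2 : Summable (fun a => phi (D.W x a)) := hl.sub hs
  refine ⟨h2, ?_⟩
  rw [← hs.tsum_add h2]
  apply tsum_congr
  intro a
  unfold phi
  ring

theorem bound {x : ℝ} (hx : 0 < x) (hx1 : x < 1) (hs : Summable (D.W x)) :
    ∑' a, D.W x a < 3 / 2 := by
  have h := D.full hx hx1 hs
  obtain ⟨h1, h2⟩ := D.T_eq hx.le hx1 hs
  have h3 : 0 ≤ ∑' a, phi (D.W x a) := tsum_nonneg fun a =>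
    phi_nonneg (D.W_nonneg hx.le a) ((D.W_le hx.le hx1.le a).trans_lt hx1)
  set H := ∑' a, D.W x a
  have h0 : 0 ≤ H := tsum_nonneg (D.W_nonneg hx.le)
  have h4 : Real.exp H ≤ Real.exp (D.T x) := Real.exp_le_exp.2 (by linarith)
  have h5 := Real.sum_le_exp_of_nonneg h0 4
  simp [Finset.sum_range_succ, Nat.factorial] at h5
  have h6 : x ^ m ≤ x := by
    have := pow_le_pow_of_le_one hx.le hx1.le (show 1 ≤ m by have := D.hm; omega)
    simpa using this
  by_contra hc
  push Not at hc
  have h7 : H ^ 2 ≥ 3 / 2 * H := by nlinarith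
  have h8 : H ^ 3 ≥ 9 / 4 * H := by nlinarith
  nlinarith

theorem exists_leaf : ∃ a, D.size a = 1 := by
  obtain ⟨a, ha⟩ := D.exists_zero
  exact ⟨a, by simpa using D.size_zero _ ha⟩

theorem exists_two : ∃ a, 2 ≤ D.size a ∧ D.size a ≤ 3 := by
  obtain ⟨a, ha⟩ := D.exists_leaf
  obtain ⟨o, ho⟩ := D.range {a, a} (by simp)
  obtain ⟨o', ho'⟩ := D.range {a, a, a} (by simp)
  have hs := D.size_sum o (by rw [ho]; simp)
  have hs' := D.size_sum o' (by rw [ho']; simp)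
  rw [ho] at hs
  rw [ho'] at hs'
  simp [ha] at hs hs'
  cases o with
  | some b => exact ⟨b, by simp at hs; omega⟩
  | none =>
    cases o' with
    | some b => exact ⟨b, by simp at hs'; omega⟩
    | none => simp at hs hs'; omega

theorem le_nine {x : ℝ} (hx : 0 < x) (hx1 : x < 1) (hs : Summable (D.W x)) : x ≤ 9/10 := by
  by_contra hc
  push Not at hc
  have hb := D.bound hx hx1 hs
  obtain ⟨a, ha⟩ := D.exists_leaf
  obtain ⟨b, hb1, hb2⟩ := D.exists_two
  have hab : a ≠ b := by rintro rfl; omega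
  classical
  have h1 := hs.sum_le_tsum {a, b} fun a _ => D.W_nonneg hx.le a
  rw [Finset.sum_pair hab] at h1
  have h2 : x ^ 3 ≤ D.W x b := pow_le_pow_of_le_one hx.le hx1.le hb2
  have h3 : D.W x a = x := by simp [W, ha]
  have h4 : (9/10:ℝ)^3 ≤ x ^ 3 := pow_le_pow_left₀ (by norm_num) hc.le 3
  norm_num at h4
  linarith

theorem psi_mono {m : ℕ} {x y : ℝ} (hx : 0 ≤ x) (hxy : x < y) (hy : y < 1) :
    x - x ^ m + 2 * phi x < y - y ^ m + 2 * phi y := by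
  have hmono : StrictMonoOn (fun x : ℝ => x - x ^ m + 2 * phi x) (Set.Ico 0 1) := by
    apply strictMonoOn_of_deriv_pos (convex_Ico 0 1)
    · apply ContinuousOn.add (by fun_prop)
      apply ContinuousOn.mul continuousOn_const
      exact phi_contOn.mono (fun x hx => hx.2)
    · intro x hx
      rw [interior_Ico] at hx
      obtain ⟨hx0, hx1⟩ := hx
      have h1 : 0 < 1 - x := by linarith
      have hd : HasDerivAt (fun x : ℝ => x - x ^ m + 2 * phi x)
          (1 - m * x ^ (m - 1) + 2 * (-(-1 / (1 - x)) - 1)) x := by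
        apply HasDerivAt.add
        · exact (hasDerivAt_id x).sub (hasDerivAt_pow m x)
        · apply HasDerivAt.const_mul
          apply HasDerivAt.sub _ (hasDerivAt_id x)
          apply HasDerivAt.neg
          apply HasDerivAt.log _ h1.ne'
          exact (hasDerivAt_id x).const_sub 1
      rw [hd.deriv]
      have h2 : (m : ℝ) * x ^ (m - 1) ≤ ∑ i ∈ Finset.range m, x ^ i := by
        have : ∑ i ∈ Finset.range m, x ^ (m - 1) = (m : ℝ) * x ^ (m - 1) := by simp
        rw [← this]
        apply Finset.sum_le_sum
        intro i hi
        apply pow_le_pow_of_le_one hx0.le hx1.le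
        have := Finset.mem_range.1 hi
        omega
      have h3 := geom_sum_mul_neg x m
      have h4 := pow_nonneg hx0.le m
      have h5 : ∑ i ∈ Finset.range m, x ^ i ≤ 1 / (1 - x) := by
        rw [le_div_iff₀ h1]; linarith
      have h6 : 1 < 1 / (1 - x) := by
        rw [lt_div_iff₀ h1]; linarith
      have h7 : -(-1 / (1 - x)) = 1 / (1 - x) := by ring
      rw [h7]
      linarith
  exact hmono ⟨hx, hxy.trans hy⟩ ⟨hx.trans hxy.le, hy⟩ hxy

theorem W_mono {x y : ℝ} (hx : 0 ≤ x) (hxy : x ≤ y) (a : A) : D.W x a ≤ D.W y a :=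
  pow_le_pow_left₀ hx hxy _

theorem W_cont (a : A) : Continuous (fun x => D.W x a) := by unfold W; fun_prop

theorem not_gt {ρ : ℝ} (h0 : 0 < ρ) (h1 : ρ < 1) (hs : Summable (D.W ρ)) :
    Real.exp (D.T ρ) ≤ 2 := by
  by_contra hc
  push Not at hc
  have hcont : ContinuousOn D.T (Set.Icc 0 ρ) := by
    unfold T
    apply continuousOn_tsum (u := fun a => -Real.log (1 - D.W ρ a))
    · intro a
      apply ContinuousOn.neg
      apply ContinuousOn.log
      · exact (continuous_const.sub (D.W_cont a)).continuousOn
      · rintro x ⟨hx0, hx1⟩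
        have := D.W_le hx0 (by linarith) a
        linarith
    · exact log_summable h1 (D.W_nonneg h0.le) (D.W_le h0.le h1.le) hs
    · rintro a x ⟨hx0, hx1⟩
      have hw := D.W_le h0.le h1.le a
      have hw2 := D.W_mono hx0 hx1 a
      have hw3 := D.W_nonneg hx0 a
      rw [norm_neg, Real.norm_eq_abs, abs_of_nonpos (Real.log_nonpos (by linarith) (by linarith))]
      apply neg_le_neg
      apply Real.log_le_log <;> linarith
  have hT0 : D.T 0 = 0 := by
    unfold T
    have : ∀ a, D.W 0 a = 0 := fun a => by
      have := D.size_pos a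
      simp [W]; omega
    simp [this]
  have hlog : Real.log 2 < D.T ρ := by
    rwa [← Real.exp_lt_exp, Real.exp_log (by norm_num)]
  have hl0 : 0 < Real.log 2 := Real.log_pos (by norm_num)
  obtain ⟨x, hx, hxT⟩ := intermediate_value_Icc h0.le hcont (show Real.log 2 ∈ Set.Icc (D.T 0) (D.T ρ) from
    ⟨by rw [hT0]; exact hl0.le, hlog.le⟩)
  have hx0 : 0 < x := by
    rcases hx.1.lt_or_eq with h | h
    · exact h
    · rw [← h, hT0] at hxT; linarith
  have hxρ : x < ρ := by
    rcases hx.2.lt_or_eq with h | h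
    · exact h
    · rw [h] at hxT; linarith
  have hsx : Summable (D.W x) := hs.of_nonneg_of_le (D.W_nonneg hx0.le) (D.W_mono hx0.le hxρ.le)
  obtain ⟨hp, hTe⟩ := D.T_eq hx0.le (hxρ.trans h1) hsx
  obtain ⟨hp', hTe'⟩ := D.T_eq h0.le h1 hs
  have hf := D.full hx0 (hxρ.trans h1) hsx
  have hf' := D.full h0 h1 hs
  obtain ⟨a, ha⟩ := D.exists_leaf
  -- compare the remainders
  have hcmp : phi ρ - phi x ≤ ∑' a, phi (D.W ρ a) - ∑' a, phi (D.W x a) := by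
    rw [← hp'.tsum_sub hp]
    have hh := (hp'.sub hp).le_tsum a (fun b _ => ?_)
    · simpa [W, ha] using hh
    · exact sub_nonneg.2 (phi_mono (D.W_nonneg hx0.le b) (D.W_mono hx0.le hxρ.le b)
        ((D.W_le h0.le h1.le b).trans_lt h1))
  have hpsi := psi_mono (m := m) hx0.le hxρ h1
  rw [hxT, Real.exp_log (by norm_num)] at hf
  have hexp : 2 + 2 * (D.T ρ - Real.log 2) ≤ Real.exp (D.T ρ) := by
    have := Real.add_one_le_exp (D.T ρ - Real.log 2)
    rw [Real.exp_sub, Real.exp_log (by norm_num)] at this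
    linarith
  linarith

theorem not_lt {ρ : ℝ} (h0 : 0 < ρ) (h1 : ρ < 1) (hs : Summable (D.W ρ))
    (hmax : ∀ x, ρ < x → x < 1 → ¬ Summable (D.W x)) :
    2 ≤ Real.exp (D.T ρ) := by
  by_contra hc
  push Not at hc
  set E := Real.exp (D.T ρ) with hE
  have hE0 : 0 < E := Real.exp_pos _
  obtain ⟨hp, hTe⟩ := D.T_eq h0.le h1 hs
  have hf := D.full h0 h1 hs
  rw [← hE] at hf
  set H := ∑' a, D.W ρ a with hH
  have hH0 : 0 ≤ H := tsum_nonneg (D.W_nonneg h0.le)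
  set b := Real.sqrt ρ with hb
  have hb2 : b ^ 2 = ρ := Real.sq_sqrt h0.le
  have hb0 : 0 < b := Real.sqrt_pos.2 h0
  have hb1 : b < 1 := by rw [hb, Real.sqrt_lt' one_pos]; simpa using h1
  have hρb : ρ < b := by nlinarith
  have hpb : Summable (fun a => phi (D.W b a)) := by
    apply Summable.of_nonneg_of_le _ _ (hs.mul_left (1 - b)⁻¹)
    · intro a
      exact phi_nonneg (D.W_nonneg hb0.le a) ((D.W_le hb0.le hb1.le a).trans_lt hb1)
    · intro a
      have := phi_le (D.W_nonneg hb0.le a) (D.W_le hb0.le hb1.le a) hb1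
      have h2 : D.W b a ^ 2 = D.W ρ a := by
        rw [W, W, ← pow_mul, mul_comm, pow_mul, hb2]
      rwa [h2] at this
  have hpmono : ∀ x, x ∈ Set.Icc 0 b → ∀ a, phi (D.W x a) ≤ phi (D.W b a) := by
    rintro x ⟨hx0, hx1⟩ a
    exact phi_mono (D.W_nonneg hx0 a) (D.W_mono hx0 hx1 a) ((D.W_le hb0.le hb1.le a).trans_lt hb1)
  have hpnn : ∀ x, x ∈ Set.Icc 0 b → ∀ a, 0 ≤ phi (D.W x a) := by
    rintro x ⟨hx0, hx1⟩ a
    exact phi_nonneg (D.W_nonneg hx0 a) ((D.W_le hx0 (by linarith) a).trans_lt (by linarith))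
  have hpx : ∀ x, x ∈ Set.Icc 0 b → Summable (fun a => phi (D.W x a)) := fun x hx =>
    hpb.of_nonneg_of_le (hpnn x hx) (hpmono x hx)
  have hRcont : ContinuousOn (fun x => ∑' a, phi (D.W x a)) (Set.Icc 0 b) := by
    apply continuousOn_tsum (u := fun a => phi (D.W b a)) _ hpb
    · intro a x hx
      rw [Real.norm_eq_abs, abs_of_nonneg (hpnn x hx a)]
      exact hpmono x hx a
    · intro a
      apply phi_contOn.comp (D.W_cont a).continuousOn
      rintro x ⟨hx0, hx1⟩
      exact (D.W_le hx0 (by linarith) a).trans_lt (by linarith)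
  have hRat : ContinuousAt (fun x => ∑' a, phi (D.W x a)) ρ :=
    hRcont.continuousAt (Icc_mem_nhds h0 hρb)
  set δ := (2 - E) / 4 with hδ
  have hδ0 : 0 < δ := by rw [hδ]; linarith
  have hδ1 : δ ≤ 1 := by rw [hδ]; linarith
  set y := H + δ with hy
  -- G(ρ,y) < 0
  have hG : ρ - ρ ^ m + Real.exp (y + ∑' a, phi (D.W ρ a)) - 1 - 2 * y < 0 := by
    have e1 : y + ∑' a, phi (D.W ρ a) = D.T ρ + δ := by rw [hTe, hy]; ring
    rw [e1, Real.exp_add, ← hE]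
    have := exp_quad hδ0.le hδ1
    have h3 : E * Real.exp δ ≤ E * (1 + δ + δ ^ 2) := mul_le_mul_of_nonneg_left this hE0.le
    have h4 : E * (1 + δ) < 2 := by
      have : E = 2 - 4 * δ := by rw [hδ]; ring
      rw [this]; nlinarith
    have h5 : E * (1 + δ + δ ^ 2) - E - 2 * δ < 0 := by nlinarith
    rw [hy]; linarith
  have hGev : ∀ᶠ x in nhds ρ, x - x ^ m + Real.exp (y + ∑' a, phi (D.W x a)) - 1 - 2 * y < 0 := by
    have : ContinuousAt (fun x => x - x ^ m + Real.exp (y + ∑' a, phi (D.W x a)) - 1 - 2 * y) ρ := by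
      have hc1 : ContinuousAt (fun x : ℝ => x - x ^ m) ρ := by fun_prop
      have hc2 : ContinuousAt (fun x => Real.exp (y + ∑' a, phi (D.W x a))) ρ :=
        Real.continuous_exp.continuousAt.comp (continuousAt_const.add hRat)
      exact ((hc1.add hc2).sub continuousAt_const).sub continuousAt_const
    exact this.eventually_lt continuousAt_const hG
  have hHev : ∀ᶠ x in nhds ρ, (x / ρ) ^ m * H < y := by
    have : ContinuousAt (fun x => (x / ρ) ^ m * H) ρ := by fun_prop
    apply this.eventually_lt continuousAt_const
    rw [div_self h0.ne']
    simp [hy, hδ0]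
  have hbev : ∀ᶠ x in nhds ρ, x < b := eventually_lt_nhds hρb
  obtain ⟨x, ⟨⟨hx1, hx2⟩, hx3⟩, hx4⟩ := (((hGev.and hHev).and hbev).filter_mono
    (nhdsWithin_le_nhds (s := Set.Ioi ρ)) |>.and self_mem_nhdsWithin).exists
  have hx4 : ρ < x := hx4
  have hx0 : 0 < x := h0.trans hx4
  have hxl : x < 1 := hx3.trans hb1
  apply hmax x hx4 hxl
  apply D.summable_of_trunc (c := y) hx0.le m
  intro N hN
  induction N, hN using Nat.le_induction with
  | base =>
    have hle : ∀ a, D.wN x m a ≤ (x / ρ) ^ m * D.W ρ a := by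
      intro a
      unfold wN W
      split_ifs with hsz
      · have : x ^ D.size a = (x / ρ) ^ D.size a * ρ ^ D.size a := by
          rw [← mul_pow, div_mul_cancel₀ _ h0.ne']
        rw [this]
        apply mul_le_mul_of_nonneg_right _ (by positivity)
        apply pow_le_pow_right₀ _ hsz
        rw [le_div_iff₀ h0]; linarith
      · positivity
    have hsm := (hs.mul_left ((x / ρ) ^ m))
    have hsw := hsm.of_nonneg_of_le (D.wN_nonneg hx0.le m) hle
    refine ⟨hsw, ?_⟩
    have := hsw.tsum_le_tsum hle hsm
    rw [tsum_mul_left] at this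
    linarith
  | succ N hN ih =>
    obtain ⟨hsN, hbN⟩ := ih
    obtain ⟨hs', h⟩ := D.trunc hx0 hxl N hsN
    refine ⟨hs', ?_⟩
    rw [if_pos (by omega)] at h
    have hle : ∀ a, D.wN x N a ≤ x := fun a =>
      (D.wN_le_W hx0.le N a).trans (D.W_le hx0.le hxl.le a)
    have hl := log_summable hxl (D.wN_nonneg hx0.le N) hle hsN
    have hps := hpx x ⟨hx0.le, hx3.le⟩
    have hL : ∑' a, -Real.log (1 - D.wN x N a) ≤ ∑' a, D.wN x N a + ∑' a, phi (D.W x a) := by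
      rw [← hsN.tsum_add hps]
      apply hl.tsum_le_tsum _ (hsN.add hps)
      intro a
      have := phi_mono (D.wN_nonneg hx0.le N a) (D.wN_le_W hx0.le N a)
        ((D.W_le hx0.le hxl.le a).trans_lt hxl)
      have e : -Real.log (1 - D.wN x N a) = D.wN x N a + phi (D.wN x N a) := by
        unfold phi; ring
      rw [e]
      linarith
    have hR0 : 0 ≤ ∑' a, phi (D.W x a) := tsum_nonneg (hpnn x ⟨hx0.le, hx3.le⟩)
    have hn : 0 ≤ ∑' a, D.wN x N a := tsum_nonneg (D.wN_nonneg hx0.le N)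
    set hh := ∑' a, D.wN x N a
    set R := ∑' a, phi (D.W x a)
    have he := Real.exp_le_exp.2 hL
    have h7 : y - hh ≤ Real.exp (y + R) - Real.exp (hh + R) := by
      have e1 : y + R = (hh + R) + (y - hh) := by ring
      rw [e1, Real.exp_add]
      have e2 := Real.add_one_le_exp (y - hh)
      have e3 := Real.one_le_exp (show 0 ≤ hh + R by linarith)
      nlinarith
    linarith

theorem main {ρ : ℝ} (h0 : 0 < ρ) (hlt : ∀ x, 0 < x → x < ρ → Summable (D.W x))
    (hmax : ∀ x, 0 < x → Summable (D.W x) → x ≤ ρ) :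
    ρ < 1 ∧ Summable (D.W ρ) ∧ Real.exp (D.T ρ) = 2 := by
  have h9 : ρ ≤ 9/10 := by
    by_contra hc
    push Not at hc
    obtain ⟨x, hx1, hx2⟩ := exists_between (lt_min hc (show (9/10:ℝ) < 1 by norm_num))
    have := D.le_nine (by linarith) (hx2.trans_le (min_le_right _ _))
      (hlt x (by linarith) (hx2.trans_le (min_le_left _ _)))
    linarith
  have h1 : ρ < 1 := by linarith
  have hs : Summable (D.W ρ) := by
    apply summable_of_sum_le (c := 3/2) (D.W_nonneg h0.le)
    intro F
    have hcont : Continuous (fun x => ∑ a ∈ F, D.W x a) :=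
      continuous_finset_sum _ fun a _ => D.W_cont a
    apply le_of_tendsto (hcont.continuousAt.mono_left (nhdsWithin_le_nhds (s := Set.Iio ρ)))
    filter_upwards [self_mem_nhdsWithin, nhdsWithin_le_nhds (eventually_gt_nhds h0)] with x hx hx0
    have hsx := hlt x hx0 hx
    exact (hsx.sum_le_tsum F fun a _ => D.W_nonneg hx0.le a).trans
      (D.bound hx0 (lt_trans hx h1) hsx).le
  refine ⟨h1, hs, le_antisymm (D.not_gt h0 h1 hs) (D.not_lt h0 h1 hs ?_)⟩
  intro x hx _ hsx
  have := hmax x (by linarith) hsx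
  linarith

/-- passing to the fibres of the size function -/
theorem fiber_finite (n : ℕ) : Finite {a : A // D.size a = n} := by
  by_contra hc
  rw [not_finite_iff_infinite] at hc
  have h := D.summable_tenth.comp_injective (Subtype.val_injective (p := fun a => D.size a = n))
  have h2 : (D.W (1/10) ∘ (Subtype.val : {a : A // D.size a = n} → A)) = fun _ => (1/10:ℝ) ^ n := by
    ext a
    simp [W, a.2]
  rw [h2, summable_const_iff] at h
  norm_num at h

theorem fiber_tsum (x : ℝ) (n : ℕ) :
    ∑' y : {a : A // D.size a = n}, D.W x y.1 = (Nat.card {a : A // D.size a = n} : ℝ) * x ^ n := by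
  have : ∀ y : {a : A // D.size a = n}, D.W x y.1 = x ^ n := fun y => by rw [W, y.2]
  simp only [this]
  haveI := D.fiber_finite n
  haveI := Fintype.ofFinite {a : A // D.size a = n}
  rw [tsum_fintype]
  simp

theorem summable_iff {x : ℝ} (hx : 0 ≤ x) :
    Summable (D.W x) ↔ Summable (fun n => (Nat.card {a : A // D.size a = n} : ℝ) * x ^ n) := by
  rw [← (Equiv.sigmaFiberEquiv D.size).summable_iff, summable_sigma_of_nonneg
    (f := D.W x ∘ (Equiv.sigmaFiberEquiv D.size)) (fun y => D.W_nonneg hx _)]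
  simp only [Function.comp_apply, Equiv.sigmaFiberEquiv_apply, D.fiber_tsum]
  constructor
  · exact fun h => h.2
  · refine fun h => ⟨fun n => ?_, h⟩
    haveI := D.fiber_finite n
    exact Summable.of_finite

theorem tsum_fibers {x : ℝ} (hs : Summable (D.W x)) :
    ∑' n, (Nat.card {a : A // D.size a = n} : ℝ) * x ^ n = ∑' a, D.W x a := by
  have h : Summable (fun c => D.W x ((Equiv.sigmaFiberEquiv D.size) c)) :=
    ((Equiv.sigmaFiberEquiv D.size).summable_iff).2 hs
  rw [← (Equiv.sigmaFiberEquiv D.size).tsum_eq, h.tsum_sigma]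
  simp only [Equiv.sigmaFiberEquiv_apply]
  exact tsum_congr fun n => (D.fiber_tsum x n).symm

theorem T_swap {x : ℝ} (hx : 0 < x) (hx1 : x < 1) (hs : Summable (D.W x)) :
    ∑' k : ℕ, (1 / ((k : ℝ) + 1)) * ∑' n : ℕ, (Nat.card {a : A // D.size a = n} : ℝ) * (x ^ (k + 1)) ^ n
      = D.T x := by
  have hlog : ∀ a, HasSum (fun k : ℕ => (D.W x a) ^ (k + 1) / (k + 1)) (-Real.log (1 - D.W x a)) := by
    intro a
    apply Real.hasSum_pow_div_log_of_abs_lt_one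
    rw [abs_of_nonneg (D.W_nonneg hx.le a)]
    exact (D.W_le hx.le hx1.le a).trans_lt hx1
  have h1 : ∀ k : ℕ, (1 / ((k : ℝ) + 1)) * ∑' n : ℕ, (Nat.card {a : A // D.size a = n} : ℝ) * (x ^ (k + 1)) ^ n
      = ∑' a, (D.W x a) ^ (k + 1) / (k + 1) := by
    intro k
    have hle : x ^ (k + 1) ≤ x := pow_le_of_le_one hx.le hx1.le (by omega)
    have hs' : Summable (D.W (x ^ (k + 1))) :=
      hs.of_nonneg_of_le (D.W_nonneg (by positivity)) (D.W_mono (by positivity) hle)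
    rw [D.tsum_fibers hs', ← tsum_mul_left]
    apply tsum_congr
    intro a
    rw [W, W, ← pow_mul, ← pow_mul, mul_comm (k + 1)]
    ring
  simp only [h1]
  unfold T
  have h2 : ∀ a, -Real.log (1 - D.W x a) = ∑' k : ℕ, (D.W x a) ^ (k + 1) / ((k : ℝ) + 1) :=
    fun a => (hlog a).tsum_eq.symm
  have h3 : Summable (Function.uncurry fun (a : A) (k : ℕ) => (D.W x a) ^ (k + 1) / ((k : ℝ) + 1)) := by
    rw [summable_prod_of_nonneg]
    · refine ⟨fun a => (hlog a).summable, ?_⟩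
      simp only [Function.uncurry]
      simp only [← h2]
      exact log_summable hx1 (D.W_nonneg hx.le) (D.W_le hx.le hx1.le) hs
    · rintro ⟨a, k⟩
      have := D.W_nonneg hx.le a
      simp only [Function.uncurry, Pi.zero_apply]
      positivity
  simp only [h2]
  exact h3.tsum_comm

theorem final (a : ℕ → ℝ) (ha : ∀ n, a n = (Nat.card {a : A // D.size a = n} : ℝ)) :
    Real.exp (∑' k : ℕ, (1 / ((k : ℝ) + 1)) *
        ∑' n : ℕ, a n * (((FormalMultilinearSeries.ofScalars ℝ a).radius.toReal) ^ (k + 1)) ^ n) = 2 := by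
  set p := FormalMultilinearSeries.ofScalars ℝ a with hp
  have hn : ∀ n, ‖p n‖ = a n := by
    intro n
    rw [hp, FormalMultilinearSeries.ofScalars_norm, ha]
    simp
  have hA : ∀ x : ℝ, 0 ≤ x → (Summable (D.W x) ↔ Summable fun n => ‖p n‖ * x ^ n) := by
    intro x hx
    rw [D.summable_iff hx]
    simp only [hn, ha]
  have hle : ∀ x : ℝ, 0 < x → Summable (D.W x) → ENNReal.ofReal x ≤ p.radius := by
    intro x hx h
    have := p.le_radius_of_summable_norm (r := x.toNNReal)
      (by rw [Real.coe_toNNReal _ hx.le]; exact (hA x hx.le).1 h)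
    exact this
  have hlt : ∀ x : ℝ, 0 < x → ENNReal.ofReal x < p.radius → Summable (D.W x) := by
    intro x hx h
    have := p.summable_norm_mul_pow (r := x.toNNReal) h
    rw [Real.coe_toNNReal _ hx.le] at this
    exact (hA x hx.le).2 this
  have htop : p.radius ≠ ⊤ := by
    intro h
    have := D.le_nine (x := 95/100) (by norm_num) (by norm_num)
      (hlt _ (by norm_num) (by rw [h]; exact ENNReal.ofReal_lt_top))
    norm_num at this
  have hpos : 0 < p.radius.toReal := by
    have h := hle (1/10) (by norm_num) D.summable_tenth
    rw [ENNReal.ofReal_le_iff_le_toReal htop] at h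
    linarith
  obtain ⟨h1, hs, h⟩ := D.main hpos
    (fun x hx hxρ => hlt x hx ((ENNReal.ofReal_lt_iff_lt_toReal hx.le htop).2 hxρ))
    (fun x hx hsx => (ENNReal.ofReal_le_iff_le_toReal htop).1 (hle x hx hsx))
  rw [← h]
  simp only [ha]
  rw [D.T_swap hpos h1 hs]

end Data
end Hier

namespace RTree

theorem ind {P : RTree → Prop} (h : ∀ l, (∀ t ∈ l, P t) → P (.node l)) : ∀ t, P t
  | .node l => h l fun t ht => ind h t
decreasing_by
  have := List.sizeOf_lt_of_mem ht
  simp only [RTree.node.sizeOf_spec]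
  omega

theorem leaves_nil : leaves (.node []) = 1 := by rw [leaves]

theorem leaves_of_ne {l : List RTree} (h : l ≠ []) : leaves (.node l) = (l.map leaves).sum := by
  cases l with
  | nil => exact absurd rfl h
  | cons a l => rw [leaves, List.attach_map_val]

theorem iso_iff {l₁ l₂ : List RTree} :
    Iso (.node l₁) (.node l₂) ↔ ∃ l, List.Forall₂ Iso l₁ l ∧ l.Perm l₂ := by
  constructor
  · rintro ⟨h1, h2⟩; exact ⟨_, h1, h2⟩
  · rintro ⟨l, h1, h2⟩; exact ⟨h1, h2⟩

theorem forall₂_imp_mem {R S : RTree → RTree → Prop} {l₁ l₂ : List RTree}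
    (h : List.Forall₂ R l₁ l₂) (hi : ∀ a ∈ l₁, ∀ b, R a b → S a b) : List.Forall₂ S l₁ l₂ := by
  induction h with
  | nil => exact .nil
  | cons hab _ ih =>
    exact .cons (hi _ (by simp) _ hab) (ih fun a ha => hi a (by simp [ha]))

theorem forall₂_trans_mem {R : RTree → RTree → Prop} {l₁ l₂ l₃ : List RTree}
    (h : List.Forall₂ R l₁ l₂) (h' : List.Forall₂ R l₂ l₃)
    (hi : ∀ a ∈ l₁, ∀ b c, R a b → R b c → R a c) : List.Forall₂ R l₁ l₃ := by
  induction h generalizing l₃ with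
  | nil => cases h'; exact .nil
  | cons hab _ ih =>
    cases h' with
    | cons hbc h' =>
      exact .cons (hi _ (by simp) _ _ hab hbc) (ih h' fun a ha => hi a (by simp [ha]))

theorem exists_of_forall₂ {R : RTree → RTree → Prop} {l₁ l₂ : List RTree}
    (h : List.Forall₂ R l₁ l₂) : ∀ b ∈ l₂, ∃ a ∈ l₁, R a b := by
  induction h with
  | nil => simp
  | cons hab _ ih =>
    intro b hb
    rcases List.mem_cons.1 hb with rfl | hb
    · exact ⟨_, by simp, hab⟩
    · obtain ⟨a, ha, h⟩ := ih b hb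
      exact ⟨a, by simp [ha], h⟩

theorem iso_refl : ∀ t, Iso t t := by
  apply ind
  intro l ih
  exact ⟨List.forall₂_same.2 ih, List.Perm.refl _⟩

theorem iso_symm : ∀ t, ∀ s, Iso t s → Iso s t := by
  apply ind
  rintro l ih ⟨l₂⟩ h
  obtain ⟨k, h1, h2⟩ := iso_iff.1 h
  have h3 : List.Forall₂ Iso k l := (forall₂_imp_mem (S := fun a b => Iso b a) h1 ih).flip
  obtain ⟨k', h4, h5⟩ := List.perm_comp_forall₂ h2.symm h3
  exact iso_iff.2 ⟨k', h4, h5⟩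

theorem iso_trans : ∀ t, ∀ s u, Iso t s → Iso s u → Iso t u := by
  apply ind
  rintro l ih ⟨l₂⟩ ⟨l₃⟩ h h'
  obtain ⟨k, h1, h2⟩ := iso_iff.1 h
  obtain ⟨k', h3, h4⟩ := iso_iff.1 h'
  obtain ⟨k'', h5, h6⟩ := List.perm_comp_forall₂ h2 h3
  exact iso_iff.2 ⟨k'', forall₂_trans_mem h1 h5 ih, h6.trans h4⟩

/-- isomorphism as a setoid -/
def isoSetoid : Setoid RTree := ⟨Iso, iso_refl, fun {a b} => iso_symm a b, fun {a b c} => iso_trans a b c⟩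

/-- isomorphism classes -/
def Q : Type := Quotient isoSetoid

/-- class of a tree -/
def cls (t : RTree) : Q := Quotient.mk isoSetoid t

theorem cls_eq {s t : RTree} : cls s = cls t ↔ Iso s t :=
  ⟨fun h => Quotient.exact (s := isoSetoid) h, fun h => Quotient.sound (s := isoSetoid) h⟩

theorem cls_surj (q : Q) : ∃ t, cls t = q := Quotient.exists_rep (s := isoSetoid) q

theorem iso_iff_cls {l₁ l₂ : List RTree} :
    Iso (.node l₁) (.node l₂) ↔ (l₁.map cls).Perm (l₂.map cls) := by
  rw [iso_iff]
  constructor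
  · rintro ⟨l, h1, h2⟩
    have : l₁.map cls = l.map cls := by
      rw [← List.forall₂_eq_eq_eq, List.forall₂_map_left_iff, List.forall₂_map_right_iff]
      exact h1.imp fun a b h => cls_eq.2 h
    rw [this]
    exact h2.map _
  · intro h
    have h2 : List.Forall₂ (fun q t => q = cls t) (l₂.map cls) l₂ := by
      rw [List.forall₂_map_left_iff, List.forall₂_same]
      simp
    obtain ⟨l, h3, h4⟩ := List.perm_comp_forall₂ h h2
    rw [List.forall₂_map_left_iff] at h3
    exact ⟨l, h3.imp fun a b h => cls_eq.1 h, h4⟩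

/-- multiset of the classes of the children -/
def kids : RTree → Multiset Q
  | .node l => ((l.map cls : List Q) : Multiset Q)

theorem kids_eq_iff : ∀ s t : RTree, kids s = kids t ↔ Iso s t := by
  rintro ⟨l⟩ ⟨l'⟩
  rw [iso_iff_cls, kids, kids, Multiset.coe_eq_coe]

/-- children of a class -/
def children (q : Q) : Multiset Q :=
  Quotient.lift (s := isoSetoid) kids (fun a b h => (kids_eq_iff a b).2 h) q

theorem children_cls (t : RTree) : children (cls t) = kids t := rfl

theorem children_inj : Function.Injective children := by
  intro q q' h
  obtain ⟨t, rfl⟩ := cls_surj q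
  obtain ⟨t', rfl⟩ := cls_surj q'
  rw [cls_eq, ← kids_eq_iff]
  exact h

theorem children_surj : Function.Surjective children := by
  intro s
  induction s using Quotient.inductionOn with
  | h l =>
    choose f hf using cls_surj
    refine ⟨cls (.node (l.map f)), ?_⟩
    rw [children_cls, kids, List.map_map]
    have : cls ∘ f = id := by ext q; exact hf q
    rw [this, List.map_id]
    rfl

theorem leaves_iso : ∀ t, ∀ s, Iso t s → leaves t = leaves s := by
  apply ind
  rintro l ih ⟨l₂⟩ h
  obtain ⟨k, h1, h2⟩ := iso_iff.1 h
  have hlen : l.length = l₂.length := h1.length_eq.trans h2.length_eq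
  by_cases hl : l = []
  · subst hl
    have : l₂ = [] := List.length_eq_zero_iff.1 hlen.symm
    rw [this]
  · have hl2 : l₂ ≠ [] := by
      rintro rfl; exact hl (List.length_eq_zero_iff.1 hlen)
    rw [leaves_of_ne hl, leaves_of_ne hl2]
    have : l.map leaves = k.map leaves := by
      rw [← List.forall₂_eq_eq_eq, List.forall₂_map_left_iff, List.forall₂_map_right_iff]
      exact forall₂_imp_mem h1 ih
    rw [this]
    exact (h2.map _).sum_eq

theorem leaves_pos : ∀ t, 1 ≤ leaves t := by
  apply ind
  intro l ih
  cases l with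
  | nil => rw [leaves_nil]
  | cons a l =>
    rw [leaves_of_ne (by simp)]
    have := ih a (by simp)
    simp
    omega

theorem leaves_child_le {l : List RTree} {c : RTree} (hc : c ∈ l) : leaves c ≤ leaves (.node l) := by
  rw [leaves_of_ne (List.ne_nil_of_mem hc)]
  exact List.le_sum_of_mem (List.mem_map_of_mem hc)

theorem leaves_child_lt {l : List RTree} {c : RTree} (hc : c ∈ l) (hl : l.length ≠ 1) :
    leaves c < leaves (.node l) := by
  rw [leaves_of_ne (List.ne_nil_of_mem hc)]
  obtain ⟨k₁, k₂, rfl⟩ := List.append_of_mem hc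
  have h1 : ∀ k : List RTree, k ≠ [] → 1 ≤ (k.map leaves).sum := by
    intro k hk
    rw [← leaves_of_ne hk]
    exact leaves_pos _
  by_cases h2 : k₁ = []
  · have h3 : k₂ ≠ [] := by rintro rfl; simp [h2] at hl
    have := h1 k₂ h3
    simp
    omega
  · have := h1 k₁ h2
    simp
    omega

theorem leaves_sub {s t : RTree} (h : SubtreeOf s t) : leaves s ≤ leaves t := by
  induction h with
  | refl => exact le_rfl
  | child hc _ ih => exact ih.trans (leaves_child_le hc)

/-- good trees -/
def Good (S t : RTree) : Prop := t.IsHierarchy ∧ t.Avoids S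

theorem good_iff {S : RTree} {l : List RTree} :
    Good S (.node l) ↔ l.length ≠ 1 ∧ (∀ c ∈ l, Good S c) ∧ ¬ Iso (.node l) S := by
  constructor
  · rintro ⟨⟨h1, h2⟩, h3⟩
    exact ⟨h1, fun c hc => ⟨h2 c hc, fun s hs => h3 s (.child hc hs)⟩, h3 _ (.refl _)⟩
  · rintro ⟨h1, h2, h3⟩
    refine ⟨⟨h1, fun c hc => (h2 c hc).1⟩, ?_⟩
    intro s hs
    cases hs with
    | refl => exact h3
    | child hc hs => exact (h2 _ hc).2 s hs

theorem good_iso {S : RTree} : ∀ t, ∀ s, Iso t s → Good S t → Good S s := by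
  apply ind
  rintro l ih ⟨l₂⟩ h hg
  rw [good_iff] at hg ⊢
  obtain ⟨h1, h2, h3⟩ := hg
  obtain ⟨k, h4, h5⟩ := iso_iff.1 h
  refine ⟨by rwa [← h5.length_eq, ← h4.length_eq], ?_, fun h' => h3 (iso_trans _ _ _ h h')⟩
  intro c hc
  obtain ⟨a, ha, hac⟩ := exists_of_forall₂ h4 c (h5.mem_iff.2 hc)
  exact ih a ha c hac (h2 a ha)

/-- good classes -/
def GoodQ (S : RTree) (q : Q) : Prop :=
  Quotient.lift (s := isoSetoid) (Good S)
    (fun a b h => propext ⟨good_iso a b h, good_iso b a (iso_symm a b h)⟩) q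

theorem goodQ_cls {S t : RTree} : GoodQ S (cls t) ↔ Good S t := Iff.rfl

/-- size of a class -/
def sizeQ (q : Q) : ℕ := Quotient.lift (s := isoSetoid) leaves leaves_iso q

theorem sizeQ_cls (t : RTree) : sizeQ (cls t) = leaves t := rfl

theorem sizeQ_zero {q : Q} (h : children q = 0) : sizeQ q = 1 := by
  obtain ⟨⟨l⟩, rfl⟩ := cls_surj q
  rw [children_cls, kids] at h
  have : l = [] := by simpa using h
  rw [this, sizeQ_cls, leaves_nil]

theorem sizeQ_sum {q : Q} (h : children q ≠ 0) : sizeQ q = ((children q).map sizeQ).sum := by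
  obtain ⟨⟨l⟩, rfl⟩ := cls_surj q
  rw [children_cls, kids] at h ⊢
  have : l ≠ [] := by simpa using h
  rw [sizeQ_cls, leaves_of_ne this, Multiset.map_coe, Multiset.sum_coe, List.map_map]
  rfl

theorem goodQ_iff {S : RTree} (q : Q) :
    GoodQ S q ↔ (children q).card ≠ 1 ∧ (∀ c ∈ children q, GoodQ S c) ∧ q ≠ cls S := by
  obtain ⟨⟨l⟩, rfl⟩ := cls_surj q
  rw [goodQ_cls, good_iff, children_cls, kids, ne_eq (cls _), cls_eq]
  simp [goodQ_cls]

theorem S_kids {S : RTree} (hS : S.IsHierarchy) :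
    (children (cls S)).card ≠ 1 ∧ ∀ c ∈ children (cls S), GoodQ S c := by
  obtain ⟨l⟩ := S
  obtain ⟨h1, h2⟩ := hS
  rw [children_cls, kids]
  refine ⟨by simpa using h1, ?_⟩
  intro q hq
  obtain ⟨c, hc, rfl⟩ : ∃ c ∈ l, cls c = q := by simpa using hq
  refine goodQ_cls.2 ⟨h2 c hc, ?_⟩
  intro s hs hiso
  have h3 := leaves_iso _ _ hiso
  have h4 := leaves_sub hs
  have h5 := leaves_child_lt hc h1
  omega

/-- class attached to an option -/
def jQ (S : RTree) (o : Option {q : Q // GoodQ S q}) : Q := o.elim (cls S) Subtype.val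

theorem jQ_inj (S : RTree) : Function.Injective (jQ S) := by
  have h : ∀ a : {q : Q // GoodQ S q}, a.1 ≠ cls S := fun a => ((goodQ_iff a.1).1 a.2).2.2
  rintro (_ | a) (_ | b) hab
  · rfl
  · exact absurd hab.symm (h b)
  · exact absurd hab (h a)
  · exact congrArg some (Subtype.ext hab)

theorem jQ_kids {S : RTree} (hS : S.IsHierarchy) (o) :
    (children (jQ S o)).card ≠ 1 ∧ ∀ c ∈ children (jQ S o), GoodQ S c := by
  cases o with
  | none => exact S_kids hS
  | some a => exact ⟨((goodQ_iff a.1).1 a.2).1, ((goodQ_iff a.1).1 a.2).2.1⟩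

/-- children as good classes -/
def jM {S : RTree} (hS : S.IsHierarchy) (o : Option {q : Q // GoodQ S q}) :
    Multiset {q : Q // GoodQ S q} :=
  (children (jQ S o)).pmap Subtype.mk (jQ_kids hS o).2

theorem jM_map {S : RTree} (hS : S.IsHierarchy) (o) :
    (jM hS o).map Subtype.val = children (jQ S o) := by
  rw [jM, Multiset.map_pmap, Multiset.pmap_eq_map, Multiset.map_id']

/-- the combinatorial data -/
def data {m : ℕ} (hm : 2 ≤ m) {S : RTree} (hS : S.IsHierarchy) (hSm : S.leaves = m) :
    Hier.Data {q : Q // GoodQ S q} m where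
  size a := sizeQ a.1
  j := jM hS
  inj := by
    intro o o' h
    apply jQ_inj S
    apply children_inj
    rw [← jM_map hS, ← jM_map hS, h]
  range := by
    intro s hs
    obtain ⟨q, hq⟩ := children_surj (s.map Subtype.val)
    have key : ∃ o, jQ S o = q := by
      by_cases h : q = cls S
      · exact ⟨none, h.symm⟩
      · refine ⟨some ⟨q, (goodQ_iff q).2 ⟨by rw [hq]; simpa using hs, ?_, h⟩⟩, rfl⟩
        intro c hc
        rw [hq, Multiset.mem_map] at hc
        obtain ⟨a, _, rfl⟩ := hc
        exact a.2
    obtain ⟨o, ho⟩ := key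
    refine ⟨o, Multiset.map_injective Subtype.val_injective ?_⟩
    rw [jM_map, ho, hq]
  card_ne := by
    intro o
    have := (jQ_kids hS o).1
    rwa [← jM_map hS, Multiset.card_map] at this
  size_pos := by
    rintro ⟨q, hq⟩
    obtain ⟨t, rfl⟩ := cls_surj q
    exact leaves_pos t
  hm := hm
  size_zero := by
    intro o ho
    have h1 : o.elim m (fun a => sizeQ a.1) = sizeQ (jQ S o) := by
      cases o with
      | none => exact hSm.symm
      | some a => rfl
    rw [h1, sizeQ_zero]
    rw [← jM_map hS, ho, Multiset.map_zero]
  size_sum := by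
    intro o ho
    have h1 : o.elim m (fun a => sizeQ a.1) = sizeQ (jQ S o) := by
      cases o with
      | none => exact hSm.symm
      | some a => rfl
    rw [h1, sizeQ_sum]
    · rw [← jM_map hS, Multiset.map_map]; rfl
    · rw [← jM_map hS]; simpa using ho

theorem avoidCount_eq (S : RTree) (n : ℕ) :
    avoidCount S n = Nat.card {a : {q : Q // GoodQ S q} // sizeQ a.1 = n} := by
  unfold avoidCount
  let f : (Quot fun a b : {t : RTree // t.IsHierarchy ∧ t.leaves = n ∧ t.Avoids S} =>
      RTree.Iso a.1 b.1) → {a : {q : Q // GoodQ S q} // sizeQ a.1 = n} :=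
    Quot.lift (fun t => ⟨⟨cls t.1, goodQ_cls.2 ⟨t.2.1, t.2.2.2⟩⟩, t.2.2.1⟩) (by
      intro a b h
      apply Subtype.ext
      apply Subtype.ext
      exact cls_eq.2 h)
  apply Nat.card_congr (Equiv.ofBijective f ⟨?_, ?_⟩)
  · intro x y
    induction x using Quot.ind with | _ x =>
    induction y using Quot.ind with | _ y =>
    intro h
    apply Quot.sound
    apply cls_eq.1
    exact congrArg (fun z => z.1.1) h
  · rintro ⟨⟨q, hq⟩, hn⟩
    obtain ⟨t, rfl⟩ := cls_surj q
    exact ⟨Quot.mk _ ⟨t, hq.1, hn, hq.2⟩, rfl⟩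

end RTree

/-- For a hierarchy `S` of size `m ≥ 2` with avoiding counts `H⁽ᵐ⁾ₙ`, radius of convergence
`ρₘ`, and sum function `H⁽ᵐ⁾(x) = ∑ₙ H⁽ᵐ⁾ₙ xⁿ`, one has
`exp(∑_{k=1}^∞ (1/k) H⁽ᵐ⁾(ρₘ^k)) = 2`. -/
theorem exp_sum_at_radius_eq_two {m : ℕ} (hm : 2 ≤ m) (S : RTree)
    (hS : S.IsHierarchy) (hSm : S.leaves = m) :
    Real.exp (∑' k : ℕ, (1 / ((k : ℝ) + 1)) *
        ∑' n : ℕ, (avoidCount S n : ℝ) *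
          (((radiusOf fun n => (avoidCount S n : ℝ)).toReal) ^ (k + 1)) ^ n) = 2 := by
  exact (RTree.data hm hS hSm).final _ (fun n => by rw [RTree.avoidCount_eq]; rfl)
end
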